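/- Let X = ℝ² or X = Q = [−1,1]², equipped with the maximum metric d_m, and let p ≥ 1. Then the Wasserstein space 𝒲_p(X) is isometrically rigid: for every isometry Φ : 𝒲_p(X) → 𝒲_p(X) there exists a unique isometry T : (X,d_m) → (X,d_m) such that Φ(μ) = T_#μ for all μ ∈ 𝒲_p(X), where T_#μ denotes the push-forward of μ by T. -/

import Mathlib

open MeasureTheory

/-- The `p`-Wasserstein distance between two measures, defined as the infimum over all
couplings `π` of `μ` and `ν` of `(∬ d(x,y)^p dπ)^(1/p)`. -/
noncomputable def Wdist {X : Type*} [MeasurableSpace X] [PseudoMetricSpace X] (p : ℝ)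
    (μ ν : Measure X) : ℝ :=
  (⨅ π ∈ {π : Measure (X × X) | π.map Prod.fst = μ ∧ π.map Prod.snd = ν},
    (∫⁻ q, edist q.1 q.2 ^ p ∂π) ^ (1 / p)).toReal

/-- The `p`-Wasserstein space over `X`: Borel probability measures on `X` with finite
`p`-th moment. -/
def WSet (X : Type*) [MeasurableSpace X] [PseudoMetricSpace X] (p : ℝ) : Set (Measure X) :=
  {μ | IsProbabilityMeasure μ ∧ ∃ x₀ : X, ∫⁻ x, edist x x₀ ^ p ∂μ < ⊤}

/-- An isometry of the underlying metric space: a distance-preserving bijection. -/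
def IsIsom {X : Type*} [PseudoMetricSpace X] (T : X → X) : Prop :=
  Function.Bijective T ∧ ∀ x y, dist (T x) (T y) = dist x y

/-- An isometry of the `p`-Wasserstein space over `X`: a bijection of the space of
probability measures with finite `p`-th moment preserving the Wasserstein distance. -/
def IsWIsometry (X : Type*) [MeasurableSpace X] [PseudoMetricSpace X] (p : ℝ)
    (Φ : Measure X → Measure X) : Prop :=
  Set.BijOn Φ (WSet X p) (WSet X p) ∧
    ∀ μ ∈ WSet X p, ∀ ν ∈ WSet X p, Wdist p (Φ μ) (Φ ν) = Wdist p μ ν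

/-- The (topological) support of a measure. -/
def msupport {X : Type*} [TopologicalSpace X] [MeasurableSpace X] (μ : Measure X) : Set X :=
  {x | ∀ U : Set X, IsOpen U → x ∈ U → μ U ≠ 0}

def diagLine (ε a : ℝ) : Set (ℝ × ℝ) := {z | z.2 = ε * z.1 + a}

def Lplus : Set (ℝ × ℝ) := {z | z.2 = z.1}

def Lminus : Set (ℝ × ℝ) := {z | z.2 = -z.1}

/-- The closed square `Q = [-1,1]²`. -/
abbrev Qs : Set (ℝ × ℝ) := Set.Icc (-1, -1) (1, 1)

def LplusQ : Set ↥Qs := {q | (q : ℝ × ℝ).2 = (q : ℝ × ℝ).1}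

def LminusQ : Set ↥Qs := {q | (q : ℝ × ℝ).2 = -(q : ℝ × ℝ).1}

/-!
In the coordinates `u = x₁ + x₂`, `v = x₁ - x₂` the maximum metric is half the `ℓ¹` metric, and the
square becomes the diamond `|u| + |v| ≤ 2`.

An isometry fixing all Dirac measures preserves the potentials `w ↦ ∫ d(z, w)^p dμ(z)`. These
determine the measures supported on two given interior points: for `p > 1` since the derivative of a
potential jumps along the diagonal lines according to the atoms, for `p = 1` with the help of the
measures lying between two others. For a two-point measure of weights `a`, `b` at `x`, `y`, the cost
of transport from `μ` exceeds the integral of the cost to the nearer point unless `a` is the mass of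
the Voronoi cell of `x`; hence the masses of Voronoi cells are preserved. Suitable pairs `x`, `y`
give the half-planes and quadrants in `(u, v)`, so the isometry is the identity.

It remains to show that Dirac measures are mapped to Dirac measures, for then the isometry can be
composed with the inverse of the induced isometry of the underlying space. In the plane, Dirac
measures are characterized by the extendability of the geodesics issuing from them, with a
refinement for `p = 1`, where measures on a diagonal line have this property too. In the square, the
Dirac measures at the corners are the only four measures at maximal mutual distance; after an
isometry of the square they are fixed, then so are the Dirac measures on the diagonals by the
equality case of Jensen's inequality, and all others by that of Minkowski's inequality.
-/

namespace WassersteinRigidity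

open Set Filter Topology ProbabilityTheory
open scoped ENNReal NNReal
open MeasureTheory.Measure (dirac)

/-! ### Couplings and transport cost -/

section Coupling

variable {X : Type*} [MeasurableSpace X] {π : Measure (X × X)} {μ μ' ν ν' : Measure X}

/-- `π` is a coupling of `μ` and `ν`: its two marginals are `μ` and `ν`. -/
def IsCoupling (π : Measure (X × X)) (μ ν : Measure X) : Prop :=
  π.map Prod.fst = μ ∧ π.map Prod.snd = ν

namespace IsCoupling

lemma lintegral_fst (h : IsCoupling π μ ν) {f : X → ℝ≥0∞} (hf : Measurable f) :
    ∫⁻ q, f q.1 ∂π = ∫⁻ z, f z ∂μ := by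
  rw [← h.1, lintegral_map hf measurable_fst]

lemma lintegral_snd (h : IsCoupling π μ ν) {f : X → ℝ≥0∞} (hf : Measurable f) :
    ∫⁻ q, f q.2 ∂π = ∫⁻ z, f z ∂ν := by
  rw [← h.2, lintegral_map hf measurable_snd]

lemma ae_fst (h : IsCoupling π μ ν) {P : X → Prop} (hP : ∀ᵐ z ∂μ, P z) : ∀ᵐ q ∂π, P q.1 :=
  ae_of_ae_map measurable_fst.aemeasurable (h.1 ▸ hP)

lemma ae_snd (h : IsCoupling π μ ν) {P : X → Prop} (hP : ∀ᵐ z ∂ν, P z) : ∀ᵐ q ∂π, P q.2 :=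
  ae_of_ae_map measurable_snd.aemeasurable (h.2 ▸ hP)

lemma measure_univ (h : IsCoupling π μ ν) : π univ = μ univ := by
  rw [← h.1, Measure.map_apply measurable_fst MeasurableSet.univ, preimage_univ]

lemma swap (h : IsCoupling π μ ν) : IsCoupling (π.map Prod.swap) ν μ := by
  constructor
  · rw [Measure.map_map measurable_fst measurable_swap]; exact h.2
  · rw [Measure.map_map measurable_snd measurable_swap]; exact h.1

lemma add {π' : Measure (X × X)} (h : IsCoupling π μ ν) (h' : IsCoupling π' μ' ν') :
    IsCoupling (π + π') (μ + μ') (ν + ν') := by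
  constructor
  · rw [Measure.map_add _ _ measurable_fst, h.1, h'.1]
  · rw [Measure.map_add _ _ measurable_snd, h.2, h'.2]

end IsCoupling

lemma isCoupling_prod (μ ν : Measure X) [IsProbabilityMeasure μ] [IsProbabilityMeasure ν] :
    IsCoupling (μ.prod ν) μ ν :=
  ⟨Measure.fst_prod, Measure.snd_prod⟩

lemma isCoupling_map_prodMk {Y : Type*} [MeasurableSpace Y] (ρ : Measure Y) {f g : Y → X}
    (hf : Measurable f) (hg : Measurable g) :
    IsCoupling (ρ.map fun z => (f z, g z)) (ρ.map f) (ρ.map g) := by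
  constructor
  · rw [Measure.map_map measurable_fst (hf.prodMk hg)]; rfl
  · rw [Measure.map_map measurable_snd (hf.prodMk hg)]; rfl

end Coupling

section TransportCost

variable {X : Type*} [MeasurableSpace X] [PseudoMetricSpace X] {p : ℝ} {μ μ' ν ν' : Measure X}

/-- The optimal transport cost between `μ` and `ν` for the cost function `edist x y ^ p`; for
`p ≥ 1` its `p`-th root is the Wasserstein distance. -/
noncomputable def transportCost (p : ℝ) (μ ν : Measure X) : ℝ≥0∞ :=
  ⨅ π ∈ {π : Measure (X × X) | IsCoupling π μ ν}, ∫⁻ q, edist q.1 q.2 ^ p ∂π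

lemma transportCost_le {π : Measure (X × X)} (h : IsCoupling π μ ν) :
    transportCost p μ ν ≤ ∫⁻ q, edist q.1 q.2 ^ p ∂π :=
  iInf₂_le π h

lemma le_transportCost {a : ℝ≥0∞}
    (h : ∀ π, IsCoupling π μ ν → a ≤ ∫⁻ q, edist q.1 q.2 ^ p ∂π) : a ≤ transportCost p μ ν :=
  le_iInf₂ h

lemma exists_isCoupling_lt {b : ℝ≥0∞} (h : transportCost p μ ν < b) :
    ∃ π, IsCoupling π μ ν ∧ ∫⁻ q, edist q.1 q.2 ^ p ∂π < b := by
  simpa only [transportCost, iInf_lt_iff, mem_ofPred_eq, exists_prop] using h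

lemma Wdist_eq_toReal_transportCost_rpow (hp : 0 < p) (μ ν : Measure X) :
    Wdist p μ ν = (transportCost p μ ν ^ (1 / p)).toReal :=
  congr_arg ENNReal.toReal
    ((ENNReal.orderIsoRpow (1 / p) (one_div_pos.2 hp)).map_iInf₂
      fun (π : Measure (X × X)) (_ : π ∈ {π : Measure (X × X) | IsCoupling π μ ν}) =>
        ∫⁻ q, edist q.1 q.2 ^ p ∂π).symm

lemma transportCost_add_le :
    transportCost p (μ + μ') (ν + ν') ≤ transportCost p μ ν + transportCost p μ' ν' := by
  simp only [transportCost, ENNReal.iInf_add, ENNReal.add_iInf]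
  refine le_iInf₂ fun π hπ => le_iInf₂ fun π' hπ' => (transportCost_le (hπ'.add hπ)).trans_eq ?_
  rw [lintegral_add_measure, add_comm]

end TransportCost

section MeasurableCost

variable {X : Type*} [MeasurableSpace X] [PseudoMetricSpace X] [OpensMeasurableSpace X]
  {p : ℝ} {μ ν : Measure X}

lemma measurable_edist_rpow_right (p : ℝ) (x : X) : Measurable fun z : X => edist z x ^ p :=
  (continuous_id.edist continuous_const).measurable.pow_const p

lemma WSet.lintegral_edist_rpow_lt_top (hp : 1 ≤ p) (h : μ ∈ WSet X p) (w : X) :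
    ∫⁻ z, edist z w ^ p ∂μ < ⊤ := by
  obtain ⟨hμ, x₀, hx₀⟩ := h
  have hp₀ : 0 ≤ p := zero_le_one.trans hp
  calc ∫⁻ z, edist z w ^ p ∂μ
      ≤ ∫⁻ z, 2 ^ (p - 1) * (edist z x₀ ^ p + edist x₀ w ^ p) ∂μ :=
        lintegral_mono fun z => (ENNReal.rpow_le_rpow (edist_triangle z x₀ w) hp₀).trans
          (ENNReal.rpow_add_le_mul_rpow_add_rpow _ _ hp)
    _ = 2 ^ (p - 1) * (∫⁻ z, edist z x₀ ^ p ∂μ + edist x₀ w ^ p) := by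
        rw [lintegral_const_mul _ (by fun_prop), lintegral_add_right _ measurable_const,
          lintegral_const, measure_univ, mul_one]
    _ < ⊤ := ENNReal.mul_lt_top (ENNReal.rpow_lt_top_of_nonneg (sub_nonneg.2 hp) (by simp))
        (ENNReal.add_lt_top.2 ⟨hx₀, ENNReal.rpow_lt_top_of_nonneg hp₀ (edist_ne_top _ _)⟩)

lemma WSet.integrable_dist_rpow (hp : 1 ≤ p) (h : μ ∈ WSet X p) (w : X) :
    Integrable (fun z => dist z w ^ p) μ := by
  have hp₀ : 0 ≤ p := zero_le_one.trans hp
  refine ⟨(((continuous_id.dist continuous_const).measurable).pow_const p).aestronglyMeasurable,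
    ?_⟩
  refine lt_of_eq_of_lt (lintegral_congr fun z => ?_) (WSet.lintegral_edist_rpow_lt_top hp h w)
  rw [edist_dist, ENNReal.ofReal_rpow_of_nonneg dist_nonneg hp₀,
    Real.enorm_of_nonneg (by positivity)]

lemma WSet.lintegral_edist_rpow_eq (hp : 1 ≤ p) (h : μ ∈ WSet X p) (w : X) :
    ∫⁻ z, edist z w ^ p ∂μ = ENNReal.ofReal (∫ z, dist z w ^ p ∂μ) := by
  rw [ofReal_integral_eq_lintegral_ofReal (WSet.integrable_dist_rpow hp h w)
    (ae_of_all _ fun z => by positivity)]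
  simp_rw [edist_dist, ENNReal.ofReal_rpow_of_nonneg dist_nonneg (zero_le_one.trans hp)]

lemma dirac_mem_WSet (hp : 0 < p) (x : X) : dirac x ∈ WSet X p := by
  refine ⟨inferInstance, x, ?_⟩
  rw [lintegral_dirac' _ (measurable_edist_rpow_right p x), edist_self, ENNReal.zero_rpow_of_pos hp]
  exact ENNReal.zero_lt_top

lemma WSet.smul_add_smul_mem (hp : 1 ≤ p) (hμ : μ ∈ WSet X p) (hν : ν ∈ WSet X p)
    {a b : ℝ≥0∞} (hab : a + b = 1) : a • μ + b • ν ∈ WSet X p := by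
  have := hμ.1
  have := hν.1
  obtain ⟨x⟩ : Nonempty X := μ.nonempty_of_neZero
  have ha : a ≠ ⊤ := ne_top_of_le_ne_top ENNReal.one_ne_top (hab ▸ le_self_add)
  have hb : b ≠ ⊤ := ne_top_of_le_ne_top ENNReal.one_ne_top (hab ▸ le_add_self)
  refine ⟨⟨by simp [hab]⟩, x, ?_⟩
  rw [lintegral_add_measure, lintegral_smul_measure, lintegral_smul_measure]
  exact ENNReal.add_lt_top.2
    ⟨ENNReal.mul_lt_top ha.lt_top (WSet.lintegral_edist_rpow_lt_top hp hμ x),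
      ENNReal.mul_lt_top hb.lt_top (WSet.lintegral_edist_rpow_lt_top hp hν x)⟩

/-- The measure `a δ_x + b δ_y`. -/
noncomputable def twoPoint (a b : ℝ≥0∞) (x y : X) : Measure X := a • dirac x + b • dirac y

lemma twoPoint_mem_WSet (hp : 1 ≤ p) {a b : ℝ≥0∞} (hab : a + b = 1) (x y : X) :
    twoPoint a b x y ∈ WSet X p :=
  WSet.smul_add_smul_mem hp (dirac_mem_WSet (zero_lt_one.trans_le hp) x)
    (dirac_mem_WSet (zero_lt_one.trans_le hp) y) hab

lemma transportCost_lt_top (hp : 1 ≤ p) (h : μ ∈ WSet X p) (h' : ν ∈ WSet X p) :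
    transportCost p μ ν < ⊤ := by
  have := h.1
  have := h'.1
  obtain ⟨x⟩ : Nonempty X := μ.nonempty_of_neZero
  have hm := measurable_edist_rpow_right p x
  refine (transportCost_le (isCoupling_prod μ ν)).trans_lt ?_
  calc ∫⁻ q, edist q.1 q.2 ^ p ∂(μ.prod ν)
      ≤ ∫⁻ q, 2 ^ (p - 1) * (edist q.1 x ^ p + edist q.2 x ^ p) ∂(μ.prod ν) :=
        lintegral_mono fun q =>
          (ENNReal.rpow_le_rpow (edist_triangle_right q.1 q.2 x) (zero_le_one.trans hp)).trans
            (ENNReal.rpow_add_le_mul_rpow_add_rpow _ _ hp)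
    _ = 2 ^ (p - 1) * (∫⁻ z, edist z x ^ p ∂μ + ∫⁻ z, edist z x ^ p ∂ν) := by
        rw [lintegral_const_mul _ (by fun_prop), lintegral_add_right _ (by fun_prop),
          (isCoupling_prod μ ν).lintegral_fst hm, (isCoupling_prod μ ν).lintegral_snd hm]
    _ < ⊤ := ENNReal.mul_lt_top (ENNReal.rpow_lt_top_of_nonneg (sub_nonneg.2 hp) (by simp))
        (ENNReal.add_lt_top.2 ⟨WSet.lintegral_edist_rpow_lt_top hp h x,
          WSet.lintegral_edist_rpow_lt_top hp h' x⟩)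

variable [SecondCountableTopology X]

lemma measurable_edist_rpow (p : ℝ) : Measurable fun q : X × X => edist q.1 q.2 ^ p :=
  measurable_edist.pow_const p

lemma transportCost_comm (p : ℝ) (μ ν : Measure X) :
    transportCost p μ ν = transportCost p ν μ := by
  have key (μ ν : Measure X) : transportCost p μ ν ≤ transportCost p ν μ := by
    refine le_transportCost fun π hπ => (transportCost_le hπ.swap).trans_eq ?_
    rw [lintegral_map (measurable_edist_rpow p) measurable_swap]
    simp only [Prod.fst_swap, Prod.snd_swap, edist_comm]
  exact le_antisymm (key _ _) (key _ _)

lemma transportCost_map_map_le {Y : Type*} [MeasurableSpace Y] (p : ℝ) (ρ : Measure Y)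
    {f g : Y → X} (hf : Measurable f) (hg : Measurable g) :
    transportCost p (ρ.map f) (ρ.map g) ≤ ∫⁻ z, edist (f z) (g z) ^ p ∂ρ :=
  (transportCost_le (isCoupling_map_prodMk ρ hf hg)).trans_eq
    (lintegral_map (measurable_edist_rpow p) (hf.prodMk hg))

lemma transportCost_self (hp : 0 < p) (μ : Measure X) : transportCost p μ μ = 0 := by
  refine le_antisymm ?_ bot_le
  simpa [ENNReal.zero_rpow_of_pos hp] using
    transportCost_map_map_le p μ measurable_id measurable_id

lemma transportCost_smul_dirac_le (p : ℝ) (μ : Measure X) (x : X) :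
    transportCost p μ (μ univ • dirac x) ≤ ∫⁻ z, edist z x ^ p ∂μ := by
  simpa using transportCost_map_map_le p μ measurable_id (measurable_const (a := x))

end MeasurableCost

section DiracCost

variable {X : Type*} [MeasurableSpace X] [PseudoMetricSpace X] [OpensMeasurableSpace X]
  [SecondCountableTopology X] [MeasurableSingletonClass X] {p : ℝ} {μ : Measure X}

lemma ae_eq_dirac_point {X : Type*} [MeasurableSpace X] [MeasurableSingletonClass X] (x : X) :
    ∀ᵐ z ∂(dirac x), z = x := by
  rw [ae_dirac_eq]; rfl

lemma transportCost_dirac_right (p : ℝ) (μ : Measure X) [IsProbabilityMeasure μ] (x : X) :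
    transportCost p μ (dirac x) = ∫⁻ z, edist z x ^ p ∂μ := by
  refine le_antisymm (by simpa using transportCost_smul_dirac_le p μ x) ?_
  refine le_transportCost fun π hπ => ?_
  rw [← hπ.lintegral_fst (measurable_edist_rpow_right p x)]
  refine (lintegral_congr_ae ?_).le
  filter_upwards [hπ.ae_snd (ae_eq_dirac_point x)] with q hq
  rw [hq]

lemma transportCost_dirac_left (p : ℝ) (μ : Measure X) [IsProbabilityMeasure μ] (x : X) :
    transportCost p (dirac x) μ = ∫⁻ z, edist z x ^ p ∂μ := by
  rw [transportCost_comm, transportCost_dirac_right]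

lemma transportCost_dirac_dirac (p : ℝ) (x y : X) :
    transportCost p (dirac x) (dirac y) = edist x y ^ p := by
  rw [transportCost_dirac_right, lintegral_dirac]

end DiracCost

section Atoms

variable {X : Type*} [MeasurableSpace X] {μ ν : Measure X}

lemma eq_dirac_of_ae_eq [IsProbabilityMeasure μ] {x : X} (h : ∀ᵐ z ∂μ, z = x) : μ = dirac x := by
  have : μ.map id = μ.map fun _ => x := Measure.map_congr h
  simpa using this

lemma measure_ext_of_ae_mem_finset [MeasurableSingletonClass X] (F : Finset X)
    (hμ : ∀ᵐ z ∂μ, z ∈ F) (hν : ∀ᵐ z ∂ν, z ∈ F) (h : ∀ z ∈ F, μ {z} = ν {z}) : μ = ν := by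
  classical
  have key (ρ : Measure X) (hρ : ∀ᵐ z ∂ρ, z ∈ F) (s : Set X) :
      ρ s = ∑ z ∈ F with z ∈ s, ρ {z} := by
    rw [sum_measure_singleton]
    refine measure_congr (eventuallyEq_set.2 ?_)
    filter_upwards [hρ] with z hz
    simp [hz]
  ext s -
  rw [key μ hμ, key ν hν]
  exact Finset.sum_congr rfl fun z hz => h z (Finset.mem_filter.1 hz).1

end Atoms

/-! ### Isometries of the Wasserstein space -/

section CostIsometry

variable {X : Type*} [MeasurableSpace X] [PseudoMetricSpace X] {p : ℝ} {Φ : Measure X → Measure X}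

/-- `Φ` is a bijection of the `p`-Wasserstein space preserving the transport cost. On measures
outside `WSet X p` nothing is required. -/
structure IsCostIsometry (p : ℝ) (Φ : Measure X → Measure X) : Prop where
  bijOn : BijOn Φ (WSet X p) (WSet X p)
  cost_eq : ∀ μ ∈ WSet X p, ∀ ν ∈ WSet X p,
    transportCost p (Φ μ) (Φ ν) = transportCost p μ ν

/-- A cost isometry fixing all Dirac measures. -/
structure FixesDiracs (p : ℝ) (Φ : Measure X → Measure X) : Prop extends IsCostIsometry p Φ where
  map_dirac_eq : ∀ x, Φ (dirac x) = dirac x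

namespace IsCostIsometry

variable {Ψ : Measure X → Measure X} {μ : Measure X}

lemma mem (h : IsCostIsometry p Φ) (hμ : μ ∈ WSet X p) : Φ μ ∈ WSet X p := h.bijOn.mapsTo hμ

lemma comp (h : IsCostIsometry p Ψ) (h' : IsCostIsometry p Φ) :
    IsCostIsometry p (fun μ => Ψ (Φ μ)) where
  bijOn := h.bijOn.comp h'.bijOn
  cost_eq μ hμ ν hν := by rw [h.cost_eq _ (h'.mem hμ) _ (h'.mem hν), h'.cost_eq _ hμ _ hν]

lemma exists_inverse (h : IsCostIsometry p Φ) : ∃ Ψ : Measure X → Measure X,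
    IsCostIsometry p Ψ ∧ InvOn Ψ Φ (WSet X p) (WSet X p) := by
  have hinv := h.bijOn.invOn_invFunOn
  have hbij := h.bijOn.symm hinv.symm
  refine ⟨_, ⟨hbij, fun μ hμ ν hν => ?_⟩, hinv⟩
  rw [← h.cost_eq _ (hbij.mapsTo hμ) _ (hbij.mapsTo hν), hinv.2 hμ, hinv.2 hν]

end IsCostIsometry

end CostIsometry

section Potential

variable {X : Type*} [MeasurableSpace X] [PseudoMetricSpace X] [OpensMeasurableSpace X]
  {p : ℝ} {Φ : Measure X → Measure X} {μ : Measure X}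

lemma IsCostIsometry.of_isWIsometry (hp : 1 ≤ p) (h : IsWIsometry X p Φ) :
    IsCostIsometry p Φ := by
  refine ⟨h.1, fun μ hμ ν hν => ?_⟩
  have hp' : 0 < 1 / p := by positivity
  have hne (μ) (hμ : μ ∈ WSet X p) (ν) (hν : ν ∈ WSet X p) :
      transportCost p μ ν ^ (1 / p) ≠ ⊤ :=
    ENNReal.rpow_ne_top_of_nonneg hp'.le (transportCost_lt_top hp hμ hν).ne
  have := h.2 μ hμ ν hν
  rw [Wdist_eq_toReal_transportCost_rpow (by linarith),
    Wdist_eq_toReal_transportCost_rpow (by linarith), ENNReal.toReal_eq_toReal_iff'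
      (hne _ (h.1.mapsTo hμ) _ (h.1.mapsTo hν)) (hne _ hμ _ hν)] at this
  exact ENNReal.rpow_left_injective hp'.ne' this

variable [SecondCountableTopology X] [MeasurableSingletonClass X]

lemma IsCostIsometry.lintegral_edist_rpow_eq (hp : 0 < p) (h : IsCostIsometry p Φ) {w w' : X}
    (hw : Φ (dirac w) = dirac w') (hμ : μ ∈ WSet X p) :
    ∫⁻ z, edist z w' ^ p ∂(Φ μ) = ∫⁻ z, edist z w ^ p ∂μ := by
  have := hμ.1
  have := (h.mem hμ).1
  rw [← transportCost_dirac_right, ← transportCost_dirac_right, ← hw,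
    h.cost_eq _ hμ _ (dirac_mem_WSet hp w)]

lemma IsCostIsometry.integral_dist_rpow_eq (hp : 1 ≤ p) (h : IsCostIsometry p Φ) {w w' : X}
    (hw : Φ (dirac w) = dirac w') (hμ : μ ∈ WSet X p) :
    ∫ z, dist z w' ^ p ∂(Φ μ) = ∫ z, dist z w ^ p ∂μ := by
  have := h.lintegral_edist_rpow_eq (by linarith) hw hμ
  rwa [WSet.lintegral_edist_rpow_eq hp hμ, WSet.lintegral_edist_rpow_eq hp (h.mem hμ),
    ENNReal.ofReal_eq_ofReal_iff (integral_nonneg fun z => by positivity)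
      (integral_nonneg fun z => by positivity)] at this

end Potential

section PushForward

variable {X : Type*} [MeasurableSpace X] [PseudoMetricSpace X] [BorelSpace X]
  {p : ℝ} {μ : Measure X}

lemma WSet.map_mem (hp : 1 ≤ p) {f : X → X} (hμ : μ ∈ WSet X p) (hf : Measurable f)
    {C : ℝ≥0∞} (hC : C ≠ ⊤) (w w' : X) (h : ∀ z, edist (f z) w' ≤ edist z w + C) :
    μ.map f ∈ WSet X p := by
  have := hμ.1
  have hp₀ : 0 ≤ p := zero_le_one.trans hp
  refine ⟨Measure.isProbabilityMeasure_map hf.aemeasurable, w', ?_⟩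
  rw [lintegral_map (measurable_edist_rpow_right p w') hf]
  calc ∫⁻ z, edist (f z) w' ^ p ∂μ
      ≤ ∫⁻ z, 2 ^ (p - 1) * (edist z w ^ p + C ^ p) ∂μ :=
        lintegral_mono fun z => (ENNReal.rpow_le_rpow (h z) hp₀).trans
          (ENNReal.rpow_add_le_mul_rpow_add_rpow _ _ hp)
    _ = 2 ^ (p - 1) * (∫⁻ z, edist z w ^ p ∂μ + C ^ p) := by
        rw [lintegral_const_mul _ ((measurable_edist_rpow_right p w).add_const _),
          lintegral_add_right _ measurable_const, lintegral_const, measure_univ, mul_one]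
    _ < ⊤ := ENNReal.mul_lt_top (ENNReal.rpow_lt_top_of_nonneg (sub_nonneg.2 hp) (by simp))
        (ENNReal.add_lt_top.2 ⟨WSet.lintegral_edist_rpow_lt_top hp hμ w,
          ENNReal.rpow_lt_top_of_nonneg hp₀ hC⟩)

lemma map_map_of_leftInverse {X : Type*} [MeasurableSpace X] {T R : X → X} (hT : Measurable T)
    (hR : Measurable R) (h : Function.LeftInverse R T) (μ : Measure X) :
    (μ.map T).map R = μ := by
  rw [Measure.map_map hR hT, h.comp_eq_id, Measure.map_id]

namespace IsIsom

variable {T : X → X}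

lemma isometry {X : Type*} [PseudoMetricSpace X] {T : X → X} (hT : IsIsom T) : Isometry T :=
  Isometry.of_dist_eq hT.2

lemma measurable (hT : IsIsom T) : Measurable T := (isometry hT).continuous.measurable

lemma exists_inverse {X : Type*} [PseudoMetricSpace X] {T : X → X} (hT : IsIsom T) :
    ∃ R : X → X, IsIsom R ∧ Function.LeftInverse R T ∧ Function.RightInverse R T := by
  obtain ⟨R, hRT, hTR⟩ := Function.bijective_iff_has_inverse.1 hT.1
  refine ⟨R, ⟨⟨hTR.injective, hRT.surjective⟩, fun x y => ?_⟩, hRT, hTR⟩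
  rw [← hT.2, hTR, hTR]

lemma map_mem_WSet (hp : 1 ≤ p) (hT : IsIsom T) (hμ : μ ∈ WSet X p) : μ.map T ∈ WSet X p := by
  obtain ⟨x, -⟩ := hμ.2
  exact WSet.map_mem hp hμ (measurable hT) ENNReal.zero_ne_top x (T x) fun z =>
    ((isometry hT).edist_eq z x).trans_le le_self_add

variable [SecondCountableTopology X]

lemma transportCost_map_le (hT : IsIsom T) (μ ν : Measure X) :
    transportCost p (μ.map T) (ν.map T) ≤ transportCost p μ ν := by
  have hm := measurable hT
  refine le_transportCost fun π hπ => ?_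
  rw [← hπ.1, ← hπ.2, Measure.map_map hm measurable_fst, Measure.map_map hm measurable_snd]
  refine (transportCost_map_map_le p π (hm.comp measurable_fst) (hm.comp measurable_snd)).trans ?_
  simp only [Function.comp_apply, (isometry hT).edist_eq, le_refl]

lemma isCostIsometry (hp : 1 ≤ p) (hT : IsIsom T) :
    IsCostIsometry p fun μ : Measure X => μ.map T := by
  obtain ⟨R, hR, hRT, hTR⟩ := exists_inverse hT
  have hT' := map_map_of_leftInverse (measurable hT) (measurable hR) hRT
  refine ⟨InvOn.bijOn (f' := fun μ => μ.map R) ⟨fun μ _ => hT' μ, fun μ _ =>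
    map_map_of_leftInverse (measurable hR) (measurable hT) hTR μ⟩
    (fun μ hμ => map_mem_WSet hp hT hμ) (fun μ hμ => map_mem_WSet hp hR hμ), fun μ _ ν _ => ?_⟩
  refine (transportCost_map_le hT μ ν).antisymm ?_
  simpa only [hT'] using transportCost_map_le (p := p) hR (μ.map T) (ν.map T)

end IsIsom

end PushForward

section Rigidity

variable {X : Type*} [MeasurableSpace X] [MetricSpace X] [BorelSpace X]
  [SecondCountableTopology X] {p : ℝ} {Φ : Measure X → Measure X}

lemma IsCostIsometry.exists_isIsom_of_map_dirac (hp : 1 ≤ p)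
    (hdirac : ∀ Ψ : Measure X → Measure X, IsCostIsometry p Ψ →
      ∀ x, ∃ y, Ψ (dirac x) = dirac y)
    (h : IsCostIsometry p Φ) : ∃ T : X → X, IsIsom T ∧ ∀ x, Φ (dirac x) = dirac (T x) := by
  have hp₀ : 0 < p := by linarith
  obtain ⟨Ψ, hΨ, hΨΦ, hΦΨ⟩ := h.exists_inverse
  choose T hT using hdirac Φ h
  choose R hR using hdirac Ψ hΨ
  have hTR (x) : T (R x) = x := by
    have := hΦΨ (dirac_mem_WSet hp₀ x)
    rwa [hR, hT, dirac_eq_dirac_iff] at this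
  have hRT (x) : R (T x) = x := by
    have := hΨΦ (dirac_mem_WSet hp₀ x)
    rwa [hT, hR, dirac_eq_dirac_iff] at this
  refine ⟨T, ⟨Function.bijective_iff_has_inverse.2 ⟨R, hRT, hTR⟩, fun x y => ?_⟩, hT⟩
  have := h.cost_eq _ (dirac_mem_WSet hp₀ x) _ (dirac_mem_WSet hp₀ y)
  rw [hT, hT, transportCost_dirac_dirac, transportCost_dirac_dirac] at this
  rw [dist_edist, dist_edist, ENNReal.rpow_left_injective hp₀.ne' this]

lemma existsUnique_isIsom_of_map_dirac (hp : 1 ≤ p)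
    (hfix : ∀ Ψ : Measure X → Measure X, FixesDiracs p Ψ → ∀ μ ∈ WSet X p, Ψ μ = μ)
    (hdirac : ∀ Ψ : Measure X → Measure X, IsCostIsometry p Ψ →
      ∀ x, ∃ y, Ψ (dirac x) = dirac y)
    (hΦ : IsWIsometry X p Φ) :
    ∃! T : X → X, IsIsom T ∧ ∀ μ ∈ WSet X p, Φ μ = μ.map T := by
  have h := IsCostIsometry.of_isWIsometry hp hΦ
  obtain ⟨T, hT, hTdirac⟩ := h.exists_isIsom_of_map_dirac hp hdirac
  obtain ⟨R, hR, hRT, hTR⟩ := IsIsom.exists_inverse hT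
  have hTm := IsIsom.measurable hT
  have hRm := IsIsom.measurable hR
  have hfixes : FixesDiracs p fun μ => (Φ μ).map R :=
    ⟨(IsIsom.isCostIsometry hp hR).comp h, fun x => by rw [hTdirac, Measure.map_dirac' hRm, hRT]⟩
  refine ⟨T, ⟨hT, fun μ hμ => ?_⟩, ?_⟩
  · rw [← map_map_of_leftInverse hRm hTm hTR (Φ μ), hfix _ hfixes μ hμ]
  · rintro T' ⟨hT', hT'map⟩
    funext x
    have := hT'map _ (dirac_mem_WSet (by linarith) x)
    rw [hTdirac, Measure.map_dirac' (IsIsom.measurable hT'), dirac_eq_dirac_iff] at this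
    exact this.symm

end Rigidity

/-! ### Jumps of the derivative of a potential -/

section SecondDifference

variable {f : ℝ → ℝ} {h h₀ : ℝ}

/-- The symmetric second difference quotient `(f h + f (-h) - 2 f 0) / h`; its limit as `h → 0⁺`
is the jump of the derivative of `f` at `0`. -/
noncomputable def secondDiffQuot (f : ℝ → ℝ) (h : ℝ) : ℝ := h⁻¹ * (f h + f (-h) - 2 * f 0)

lemma secondDiffQuot_nonneg_of_convexOn (hf : ConvexOn ℝ univ f) (hh : 0 < h) :
    0 ≤ secondDiffQuot f h := by
  have := hf.2 (mem_univ h) (mem_univ (-h)) (by norm_num : (0 : ℝ) ≤ 1 / 2)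
    (by norm_num : (0 : ℝ) ≤ 1 / 2) (by norm_num)
  rw [smul_neg, add_neg_cancel, smul_eq_mul, smul_eq_mul] at this
  exact mul_nonneg (by positivity) (by linarith)

lemma secondDiffQuot_mono_of_convexOn (hf : ConvexOn ℝ univ f) (hh : 0 < h) (hle : h ≤ h₀) :
    secondDiffQuot f h ≤ secondDiffQuot f h₀ := by
  have h₀pos : 0 < h₀ := hh.trans_le hle
  have key (e : ℝ) : f (h * e) ≤ (1 - h / h₀) * f 0 + h / h₀ * f (h₀ * e) := by
    have := hf.2 (mem_univ 0) (mem_univ (h₀ * e)) (sub_nonneg.2 ((div_le_one h₀pos).2 hle))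
      (by positivity : 0 ≤ h / h₀) (by ring)
    rwa [smul_zero, zero_add, smul_eq_mul, smul_eq_mul, smul_eq_mul,
      show h / h₀ * (h₀ * e) = h * e by field_simp] at this
  have hright := key 1
  have hleft := key (-1)
  simp only [mul_one, mul_neg] at hright hleft
  calc h⁻¹ * (f h + f (-h) - 2 * f 0)
      ≤ h⁻¹ * (h / h₀ * (f h₀ + f (-h₀) - 2 * f 0)) := by gcongr; linarith
    _ = h₀⁻¹ * (f h₀ + f (-h₀) - 2 * f 0) := by field_simp

lemma tendsto_secondDiffQuot_of_hasDerivAt {D : ℝ} (hf : HasDerivAt f D 0) :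
    Tendsto (secondDiffQuot f) (𝓝[>] 0) (𝓝 0) := by
  have hneg : HasDerivAt (fun h => f (-h)) (-D) 0 := by
    simpa [Function.comp_def] using
      HasDerivAt.scomp (0 : ℝ) (by simpa using hf) (hasDerivAt_neg (0 : ℝ))
  have := hf.tendsto_slope_zero_right.add hneg.tendsto_slope_zero_right
  simp only [add_neg_cancel, zero_add, smul_eq_mul, neg_zero] at this
  exact this.congr fun h => by rw [secondDiffQuot]; ring

lemma integrable_and_tendsto_secondDiffQuot_integral {X : Type*} [MeasurableSpace X]
    {μ : Measure X} {F : X → ℝ → ℝ} {J : X → ℝ} (h₀pos : 0 < h₀)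
    (hconv : ∀ z, ConvexOn ℝ univ (F z))
    (hint : ∀ h, |h| ≤ h₀ → Integrable (fun z => F z h) μ)
    (hlim : ∀ z, Tendsto (secondDiffQuot (F z)) (𝓝[>] 0) (𝓝 (J z))) :
    Integrable J μ ∧
      Tendsto (secondDiffQuot fun h => ∫ z, F z h ∂μ) (𝓝[>] 0) (𝓝 (∫ z, J z ∂μ)) := by
  have hev : ∀ᶠ h in 𝓝[>] (0 : ℝ), h ∈ Ioc 0 h₀ := Ioc_mem_nhdsGT h₀pos
  have hint₀ := hint 0 (by simpa using h₀pos.le)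
  have hadd (h) (hh : h ∈ Ioc 0 h₀) : Integrable (fun z => F z h + F z (-h)) μ :=
    (hint h (by rw [abs_of_pos hh.1]; exact hh.2)).add
      (hint (-h) (by rw [abs_neg, abs_of_pos hh.1]; exact hh.2))
  have hquot (h) (hh : h ∈ Ioc 0 h₀) : Integrable (fun z => secondDiffQuot (F z) h) μ :=
    ((hadd h hh).sub (hint₀.const_mul 2)).const_mul _
  have hbound : ∀ᶠ h in 𝓝[>] (0 : ℝ), ∀ᵐ z ∂μ,
      ‖secondDiffQuot (F z) h‖ ≤ secondDiffQuot (F z) h₀ := by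
    filter_upwards [hev] with h hh
    refine ae_of_all _ fun z => ?_
    rw [Real.norm_of_nonneg (secondDiffQuot_nonneg_of_convexOn (hconv z) hh.1)]
    exact secondDiffQuot_mono_of_convexOn (hconv z) hh.1 hh.2
  have hmeas : ∀ᶠ h in 𝓝[>] (0 : ℝ), AEStronglyMeasurable (fun z => secondDiffQuot (F z) h) μ :=
    hev.mono fun h hh => (hquot h hh).aestronglyMeasurable
  have hint' := hquot h₀ (right_mem_Ioc.2 h₀pos)
  constructor
  · refine hint'.mono' ?_ (ae_of_all _ fun z => ?_)
    · obtain ⟨x, hx⟩ := exists_seq_tendsto (𝓝[>] (0 : ℝ))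
      obtain ⟨N, hN⟩ := eventually_atTop.1 (hx.eventually hmeas)
      exact aestronglyMeasurable_of_tendsto_ae atTop (fun n => hN (n + N) (by lia))
        (ae_of_all _ fun z => ((hlim z).comp hx).comp (tendsto_add_atTop_nat N))
    · refine le_of_tendsto (hlim z).norm (hev.mono fun h hh => ?_)
      rw [Real.norm_of_nonneg (secondDiffQuot_nonneg_of_convexOn (hconv z) hh.1)]
      exact secondDiffQuot_mono_of_convexOn (hconv z) hh.1 hh.2
  · refine (tendsto_integral_filter_of_dominated_convergence _ hmeas hbound hint'
      (ae_of_all _ hlim)).congr' (hev.mono fun h hh => ?_)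
    simp only [secondDiffQuot]
    rw [integral_const_mul, integral_sub (hadd h hh) (hint₀.const_mul 2), integral_const_mul,
      integral_add (hint h (by rw [abs_of_pos hh.1]; exact hh.2))
        (hint (-h) (by rw [abs_neg, abs_of_pos hh.1]; exact hh.2))]

end SecondDifference

section CostProfile

variable {p m : ℝ}

/-- The cost `dist z w ^ p` as a function of the displacement `h` of one diagonal coordinate of
`w`, where `x` and `m` are the two diagonal coordinate differences at `h = 0`. -/
noncomputable def costProfile (p x m h : ℝ) : ℝ := ((|x + h| + m) / 2) ^ p

lemma convexOn_costProfile (hp : 1 ≤ p) (x : ℝ) (hm : 0 ≤ m) :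
    ConvexOn ℝ univ (costProfile p x m) := by
  have habs : ConvexOn ℝ univ fun h : ℝ => |x + h| := by
    simpa [Function.comp_def] using (convexOn_univ_norm (E := ℝ)).translate_right x
  have hinner : ConvexOn ℝ univ fun h : ℝ => (|x + h| + m) / 2 := by
    simpa [div_eq_inv_mul] using (habs.add_const m).smul (by norm_num : (0 : ℝ) ≤ 2⁻¹)
  have himage : (fun h : ℝ => (|x + h| + m) / 2) '' univ ⊆ Ici 0 := by
    rintro _ ⟨h, -, rfl⟩
    exact mem_Ici.2 (by positivity)
  refine (((convexOn_rpow hp).subset himage ?_).comp hinner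
    ((Real.monotoneOn_rpow_Ici_of_exponent_nonneg (by linarith)).mono himage))
  rw [image_univ]
  exact (isPreconnected_range (by fun_prop)).ordConnected.convex

lemma tendsto_secondDiffQuot_costProfile (hp : 1 ≤ p) (x m : ℝ) :
    Tendsto (secondDiffQuot (costProfile p x m)) (𝓝[>] 0)
      (𝓝 (if x = 0 then p * (m / 2) ^ (p - 1) else 0)) := by
  split_ifs with hx
  · subst hx
    have hderiv : HasDerivAt (fun h : ℝ => ((h + m) / 2) ^ p)
        (1 / 2 * p * ((0 + m) / 2) ^ (p - 1)) 0 := by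
      simpa using (((hasDerivAt_id (0 : ℝ)).add_const m).div_const 2).rpow_const (Or.inr hp)
    have := hderiv.tendsto_slope_zero_right.const_mul 2
    simp only [zero_add, smul_eq_mul] at this
    rw [show p * (m / 2) ^ (p - 1) = 2 * (1 / 2 * p * (m / 2) ^ (p - 1)) by ring]
    refine this.congr' ?_
    filter_upwards [self_mem_nhdsWithin] with h (hh : 0 < h)
    simp only [secondDiffQuot, costProfile, zero_add, abs_neg, abs_of_pos hh, abs_zero]
    ring
  · have habs : DifferentiableAt ℝ (fun h : ℝ => |x + h|) 0 :=
      DifferentiableAt.abs (by fun_prop) (by simpa using hx)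
    have hinner : DifferentiableAt ℝ (fun h : ℝ => (|x + h| + m) / 2) 0 := by fun_prop
    exact tendsto_secondDiffQuot_of_hasDerivAt (hinner.hasDerivAt.rpow_const (Or.inr hp))

end CostProfile

/-! ### Diagonal charts -/

/-- Coordinates `u`, `v` on `X` with image the convex set `S`, in which the metric is half the
`ℓ¹` metric. For the maximum metric on the plane these are `u = x₁ + x₂` and `v = x₁ - x₂`. -/
structure IsDiagonalChart {X : Type*} [MetricSpace X] (u v : X → ℝ) (S : Set (ℝ × ℝ)) : Prop where
  dist_eq : ∀ x y, dist x y = (|u x - u y| + |v x - v y|) / 2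
  mem : ∀ x, (u x, v x) ∈ S
  exists_eq : ∀ q ∈ S, ∃ x, u x = q.1 ∧ v x = q.2
  convex : Convex ℝ S

lemma exists_box_subset_of_mem_interior {S : Set (ℝ × ℝ)} {s t : ℝ} (h : (s, t) ∈ interior S) :
    ∃ r > 0, ∀ a b, |a - s| ≤ r → |b - t| ≤ r → (a, b) ∈ S := by
  obtain ⟨r, hr, hsub⟩ := Metric.nhds_basis_closedBall.mem_iff.1 (mem_interior_iff_mem_nhds.1 h)
  exact ⟨r, hr, fun a b ha hb => hsub (max_le ha hb)⟩

lemma swap_mem_interior_preimage_swap {S : Set (ℝ × ℝ)} {s t : ℝ} (h : (s, t) ∈ interior S) :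
    (t, s) ∈ interior (Prod.swap ⁻¹' S) :=
  preimage_interior_subset_interior_preimage continuous_swap h

namespace IsDiagonalChart

variable {X : Type*} [MetricSpace X] {u v : X → ℝ} {S : Set (ℝ × ℝ)}

lemma swap (c : IsDiagonalChart u v S) : IsDiagonalChart v u (Prod.swap ⁻¹' S) where
  dist_eq x y := by rw [c.dist_eq, add_comm]
  mem x := c.mem x
  exists_eq q hq := by
    obtain ⟨x, hu, hv⟩ := c.exists_eq q.swap hq
    exact ⟨x, hv, hu⟩
  convex := c.convex.is_linear_preimage ⟨fun _ _ => rfl, fun _ _ => rfl⟩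

lemma neg_left (c : IsDiagonalChart u v S) :
    IsDiagonalChart (fun x => -u x) v ((fun q => (-q.1, q.2)) ⁻¹' S) where
  dist_eq x y := by rw [c.dist_eq, neg_sub_neg, abs_sub_comm (u y)]
  mem x := by simpa using c.mem x
  exists_eq q hq := by
    obtain ⟨x, hu, hv⟩ := c.exists_eq _ hq
    exact ⟨x, neg_eq_iff_eq_neg.2 hu, hv⟩
  convex := c.convex.is_linear_preimage
    ⟨fun _ _ => by ext <;> simp [add_comm], fun _ _ => by ext <;> simp⟩

lemma eq_of_coord_eq (c : IsDiagonalChart u v S) {x y : X} (hu : u x = u y) (hv : v x = v y) :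
    x = y := by
  rw [← dist_eq_zero, c.dist_eq, hu, hv, sub_self, sub_self, abs_zero, add_zero, zero_div]

lemma continuous_left (c : IsDiagonalChart u v S) : Continuous u := by
  refine (LipschitzWith.of_dist_le_mul (K := 2) fun x y => ?_).continuous
  rw [Real.dist_eq, c.dist_eq]
  have := abs_nonneg (v x - v y)
  push_cast
  linarith

lemma continuous_right (c : IsDiagonalChart u v S) : Continuous v := c.swap.continuous_left

lemma dist_rpow_eq_costProfile (c : IsDiagonalChart u v S) (p : ℝ) {w : X} {s t h : ℝ}
    (hu : u w = s - h) (hv : v w = t) (z : X) :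
    dist z w ^ p = costProfile p (u z - s) |v z - t| h := by
  rw [c.dist_eq, hu, hv, costProfile, sub_sub_eq_add_sub, add_sub_right_comm]

variable [MeasurableSpace X] [OpensMeasurableSpace X]

lemma measurable_left (c : IsDiagonalChart u v S) : Measurable u := c.continuous_left.measurable

lemma measurable_right (c : IsDiagonalChart u v S) : Measurable v := c.continuous_right.measurable

end IsDiagonalChart

section Jump

variable {X : Type*} [MeasurableSpace X] {u v : X → ℝ} {p s t : ℝ} {μ ν : Measure X}

/-- `μ` and `ν` have the same potentials `w ↦ ∫ dist z w ^ p`. -/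
def SamePotentials [PseudoMetricSpace X] (p : ℝ) (μ ν : Measure X) : Prop :=
  ∀ w, ∫ z, dist z w ^ p ∂μ = ∫ z, dist z w ^ p ∂ν

lemma FixesDiracs.samePotentials [PseudoMetricSpace X] [OpensMeasurableSpace X]
    [SecondCountableTopology X] [MeasurableSingletonClass X] {Φ : Measure X → Measure X}
    (hp : 1 ≤ p) (hΦ : FixesDiracs p Φ) (hμ : μ ∈ WSet X p) : SamePotentials p (Φ μ) μ :=
  fun w => hΦ.toIsCostIsometry.integral_dist_rpow_eq hp (hΦ.map_dirac_eq w) hμ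

/-- The jump at `h = 0` of the derivative of `h ↦ dist z w ^ p` when the point `w`, with diagonal
coordinates `(s - h, t)`, crosses the line `u = s`. -/
noncomputable def jump {X : Type*} (u v : X → ℝ) (p s t : ℝ) : X → ℝ :=
  {z | u z = s}.indicator fun z => p * (|v z - t| / 2) ^ (p - 1)

lemma jump_nonneg {X : Type*} {u v : X → ℝ} (hp : 0 ≤ p) (z : X) : 0 ≤ jump u v p s t z :=
  indicator_nonneg (fun _ _ => by positivity) z

variable [MetricSpace X] [OpensMeasurableSpace X] {S : Set (ℝ × ℝ)}

lemma IsDiagonalChart.integrable_jump_and_tendsto (c : IsDiagonalChart u v S) (hp : 1 ≤ p)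
    (hμ : μ ∈ WSet X p) (hst : (s, t) ∈ interior S) :
    Integrable (jump u v p s t) μ ∧
      Tendsto (secondDiffQuot fun h => ∫ z, costProfile p (u z - s) |v z - t| h ∂μ) (𝓝[>] 0)
        (𝓝 (∫ z, jump u v p s t z ∂μ)) := by
  obtain ⟨r, hr, hbox⟩ := exists_box_subset_of_mem_interior hst
  refine integrable_and_tendsto_secondDiffQuot_integral hr
    (fun z => convexOn_costProfile hp _ (abs_nonneg _)) (fun h hh => ?_) fun z => ?_
  · obtain ⟨w, hu, hv⟩ :=
      c.exists_eq (s - h, t) (hbox _ _ (by simpa using hh) (by simpa using hr.le))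
    simpa only [c.dist_rpow_eq_costProfile p hu hv] using WSet.integrable_dist_rpow hp hμ w
  · simpa [jump, indicator_apply, sub_eq_zero] using
      tendsto_secondDiffQuot_costProfile hp (u z - s) |v z - t|

lemma IsDiagonalChart.integral_jump_eq (c : IsDiagonalChart u v S) (hp : 1 ≤ p)
    (hμ : μ ∈ WSet X p) (hν : ν ∈ WSet X p) (h : SamePotentials p μ ν)
    (hst : (s, t) ∈ interior S) :
    ∫ z, jump u v p s t z ∂μ = ∫ z, jump u v p s t z ∂ν := by
  obtain ⟨r, hr, hbox⟩ := exists_box_subset_of_mem_interior hst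
  have key (k) (hk : |k| ≤ r) : ∫ z, costProfile p (u z - s) |v z - t| k ∂ν
      = ∫ z, costProfile p (u z - s) |v z - t| k ∂μ := by
    obtain ⟨w, hu, hv⟩ :=
      c.exists_eq (s - k, t) (hbox _ _ (by simpa using hk) (by simpa using hr.le))
    simpa only [c.dist_rpow_eq_costProfile p hu hv] using (h w).symm
  refine tendsto_nhds_unique (c.integrable_jump_and_tendsto hp hμ hst).2
    ((c.integrable_jump_and_tendsto hp hν hst).2.congr' ?_)
  filter_upwards [Ioc_mem_nhdsGT hr] with k hk
  rw [secondDiffQuot, secondDiffQuot, key k (by rw [abs_of_pos hk.1]; exact hk.2),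
    key (-k) (by rw [abs_neg, abs_of_pos hk.1]; exact hk.2), key 0 (by simpa using hr.le)]

end Jump

/-! ### Atoms determined by potentials -/

lemma ae_eq_of_measure_preimage_le {X β : Type*} [MeasurableSpace X] [MeasurableSingletonClass X]
    {ν : Measure X} [IsFiniteMeasure ν] {f : X → β} {x : X} (h : ν (f ⁻¹' {f x}) ≤ ν {x}) :
    ∀ᵐ z ∂ν, f z = f x → z = x := by
  have hsub : {x} ⊆ f ⁻¹' {f x} := by simp
  exact (eventuallyEq_set.1 (ae_eq_of_subset_of_measure_ge hsub h
    (measurableSet_singleton x).nullMeasurableSet (measure_ne_top _ _))).mono fun _ hz => hz.2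

lemma ae_mem_finset_of_measure_preimage_eq {X β : Type*} [MeasurableSpace X] {μ ν : Measure X}
    [IsProbabilityMeasure μ] [IsProbabilityMeasure ν] {f : X → β} {F : Finset β}
    (hf : ∀ t ∈ F, MeasurableSet (f ⁻¹' {t})) (h : ∀ t ∈ F, ν (f ⁻¹' {t}) = μ (f ⁻¹' {t}))
    (hμ : ∀ᵐ z ∂μ, f z ∈ F) : ∀ᵐ z ∂ν, f z ∈ F := by
  have hF : MeasurableSet (f ⁻¹' F) := by
    rw [← biUnion_of_singleton (F : Set β), preimage_iUnion₂]
    exact F.measurableSet_biUnion hf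
  refine (prob_compl_eq_zero_iff hF).2 ?_
  rw [← sum_measure_preimage_singleton F hf, Finset.sum_congr rfl h,
    sum_measure_preimage_singleton F hf]
  exact (prob_compl_eq_zero_iff hF).1 hμ

lemma measure_ext_of_injOn {X β : Type*} [MeasurableSpace X] [MeasurableSingletonClass X]
    {μ ν : Measure X} {F : Finset X} {f : X → β} (hf : InjOn f F) (hμ : ∀ᵐ z ∂μ, z ∈ F)
    (hν : ∀ᵐ z ∂ν, z ∈ F) (h : ∀ z ∈ F, μ (f ⁻¹' {f z}) = ν (f ⁻¹' {f z})) : μ = ν := by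
  have key (ρ : Measure X) (hρ : ∀ᵐ z ∂ρ, z ∈ F) (z : X) (hz : z ∈ F) :
      ρ (f ⁻¹' {f z}) = ρ {z} := by
    refine measure_congr (eventuallyEq_set.2 ?_)
    filter_upwards [hρ] with w hw
    exact ⟨fun hwz => hf hw hz hwz, fun hwz => congrArg f hwz⟩
  refine measure_ext_of_ae_mem_finset F hμ hν fun z hz => ?_
  rw [← key μ hμ z hz, ← key ν hν z hz, h z hz]

lemma mid_mem_of_convex {S : Set (ℝ × ℝ)} (hS : Convex ℝ S) {s t s' t' : ℝ} (h : (s, t) ∈ S)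
    (h' : (s', t') ∈ S) : ((s + s') / 2, (t + t') / 2) ∈ S := by
  have := hS.midpoint_mem h h'
  rwa [midpoint_eq_smul_add, Prod.mk_add_mk, Prod.smul_mk, invOf_eq_inv, smul_eq_mul, smul_eq_mul,
    inv_mul_eq_div, inv_mul_eq_div] at this

section ChartAtoms

variable {X : Type*} [MeasurableSpace X] [MetricSpace X] [OpensMeasurableSpace X]
  {u v : X → ℝ} {S : Set (ℝ × ℝ)} {p : ℝ} {μ ν : Measure X} {x : X}

namespace IsDiagonalChart

lemma ae_eq_of_samePotentials (c : IsDiagonalChart u v S) (hp : 1 < p) (hμ : μ ∈ WSet X p)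
    (hν : ν ∈ WSet X p) (h : SamePotentials p μ ν) (hx : (u x, v x) ∈ interior S)
    (hlone : ∀ᵐ z ∂μ, u z = u x → z = x) : ∀ᵐ z ∂ν, u z = u x → z = x := by
  have hp' : p - 1 ≠ 0 := by linarith
  have hzero : ∫ z, jump u v p (u x) (v x) z ∂ν = 0 := by
    rw [← c.integral_jump_eq hp.le hμ hν h hx]
    refine integral_eq_zero_of_ae (hlone.mono fun z hz => indicator_apply_eq_zero.2 fun hu => ?_)
    rw [hz hu, sub_self, abs_zero, zero_div, Real.zero_rpow hp', mul_zero]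
  have hae := (integral_eq_zero_iff_of_nonneg (jump_nonneg (by linarith))
    (c.integrable_jump_and_tendsto hp.le hν hx).1).1 hzero
  filter_upwards [hae] with z hz hu
  have hprod : p * (|v z - v x| / 2) ^ (p - 1) = 0 :=
    (indicator_of_mem (s := {z | u z = u x}) hu _).symm.trans hz
  have hpow : (|v z - v x| / 2) ^ (p - 1) = 0 := (mul_eq_zero.1 hprod).resolve_left (by linarith)
  have habs := (Real.rpow_eq_zero (by positivity) hp').1 hpow
  exact c.eq_of_coord_eq hu (sub_eq_zero.1 (abs_eq_zero.1 (by linarith)))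

lemma integral_jump_of_ae_eq {ρ : Measure X} {t : ℝ} (hlone : ∀ᵐ z ∂ρ, u z = u x → z = x) :
    ∫ z, jump u v p (u x) t z ∂ρ = ρ.real {x} * (p * (|v x - t| / 2) ^ (p - 1)) := by
  rw [integral_congr_ae (g := ({x} : Set X).indicator fun _ => p * (|v x - t| / 2) ^ (p - 1)),
    integral_indicator (measurableSet_singleton x), setIntegral_const, smul_eq_mul]
  filter_upwards [hlone] with z hz
  by_cases hzx : z = x
  · simp [jump, hzx]
  · simp [jump, hzx, mt hz hzx]

lemma measure_singleton_eq (c : IsDiagonalChart u v S) (hp : 1 < p) (hμ : μ ∈ WSet X p)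
    (hν : ν ∈ WSet X p) (h : SamePotentials p μ ν) (hx : (u x, v x) ∈ interior S)
    (hlone : ∀ᵐ z ∂μ, u z = u x → z = x) : ν {x} = μ {x} := by
  have := hμ.1
  have := hν.1
  have hx' : (u x, v x) ∈ interior (interior S) := by rwa [interior_interior]
  obtain ⟨k, hk, hbox⟩ := exists_box_subset_of_mem_interior hx'
  have hjump := c.integral_jump_eq hp.le hμ hν h
    (hbox (u x) (v x + k) (by simpa using hk.le) (by simp [abs_of_pos hk]))
  rw [integral_jump_of_ae_eq hlone,
    integral_jump_of_ae_eq (c.ae_eq_of_samePotentials hp hμ hν h hx hlone), sub_add_cancel_left,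
    abs_neg, abs_of_pos hk] at hjump
  have := mul_right_cancel₀ (by positivity) hjump
  exact ((ENNReal.toReal_eq_toReal_iff' (measure_ne_top _ _) (measure_ne_top _ _)).1 this).symm

lemma measure_line_eq (c : IsDiagonalChart u v S) (hμ : μ ∈ WSet X 1) (hν : ν ∈ WSet X 1)
    (h : SamePotentials 1 μ ν) {s t : ℝ} (hst : (s, t) ∈ interior S) :
    μ (u ⁻¹' {s}) = ν (u ⁻¹' {s}) := by
  have := hμ.1
  have := hν.1
  have hm : MeasurableSet (u ⁻¹' {s}) := c.measurable_left (measurableSet_singleton s)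
  have key (ρ : Measure X) : ∫ z, jump u v 1 s t z ∂ρ = ρ.real (u ⁻¹' {s}) := by
    rw [← integral_indicator_one hm]
    exact integral_congr_ae (ae_of_all _ fun z => by simp [jump, indicator])
  have := c.integral_jump_eq le_rfl hμ hν h hst
  rw [key, key] at this
  exact (ENNReal.toReal_eq_toReal_iff' (measure_ne_top _ _) (measure_ne_top _ _)).1 this

end IsDiagonalChart

end ChartAtoms

/-! ### Betweenness in the `1`-Wasserstein space -/

section Betweenness

variable {X : Type*} [MeasurableSpace X] [PseudoMetricSpace X] {μ η ν : Measure X}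

/-- `η` lies between `μ` and `ν` in the `1`-Wasserstein space: the reverse triangle inequality. -/
def IsW1Between (μ η ν : Measure X) : Prop :=
  transportCost 1 μ η + transportCost 1 η ν ≤ transportCost 1 μ ν

lemma IsCostIsometry.isW1Between_iff {Φ : Measure X → Measure X} (hΦ : IsCostIsometry 1 Φ)
    (hμ : μ ∈ WSet X 1) (hη : η ∈ WSet X 1) (hν : ν ∈ WSet X 1) :
    IsW1Between (Φ μ) (Φ η) (Φ ν) ↔ IsW1Between μ η ν := by
  rw [IsW1Between, hΦ.cost_eq _ hμ _ hη, hΦ.cost_eq _ hη _ hν, hΦ.cost_eq _ hμ _ hν, IsW1Between]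

lemma exists_eq_add_smul_dirac {X : Type*} [MeasurableSpace X] [MeasurableSingletonClass X]
    {μ : Measure X} {x : X} {κ : ℝ≥0∞} (h : κ ≤ μ {x}) :
    ∃ θ : Measure X, μ = θ + κ • dirac x := by
  refine ⟨μ.restrict {x}ᶜ + (μ {x} - κ) • dirac x, ?_⟩
  rw [add_assoc, ← add_smul, tsub_add_cancel_of_le h, ← Measure.restrict_singleton,
    add_comm, Measure.restrict_add_restrict_compl (measurableSet_singleton x)]

variable [OpensMeasurableSpace X] [SecondCountableTopology X]

lemma transportCost_add_smul_dirac_le {p : ℝ} (hp : 0 < p) (θ : Measure X) (κ : ℝ≥0∞) (a b : X) :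
    transportCost p (θ + κ • dirac a) (θ + κ • dirac b) ≤ κ * edist a b ^ p := by
  have h := transportCost_smul_dirac_le p (κ • dirac a) b
  rw [lintegral_smul_measure, lintegral_dirac' _ (measurable_edist_rpow_right p b),
    Measure.smul_apply, measure_univ, smul_eq_mul, mul_one, smul_eq_mul] at h
  exact transportCost_add_le.trans (by rwa [transportCost_self hp, zero_add])

variable [MeasurableSingletonClass X] {x : X}

lemma isW1Between_add_smul_dirac {θ : Measure X} {κ : ℝ≥0∞} {a b : X}
    (ha : IsProbabilityMeasure (θ + κ • dirac a)) (hb : IsProbabilityMeasure (θ + κ • dirac b))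
    (h : edist a x + edist a b ≤ edist b x) :
    IsW1Between (dirac x) (θ + κ • dirac a) (θ + κ • dirac b) := by
  rw [IsW1Between, transportCost_dirac_left, transportCost_dirac_left, lintegral_add_measure,
    lintegral_add_measure, lintegral_smul_measure, lintegral_smul_measure, lintegral_dirac,
    lintegral_dirac, add_assoc]
  refine add_le_add_right
    ((add_le_add_right (transportCost_add_smul_dirac_le zero_lt_one θ κ a b) _).trans ?_) _
  simp only [ENNReal.rpow_one, smul_eq_mul, ← mul_add]
  gcongr

end Betweenness

section BetweennessAtom

variable {X : Type*} [MeasurableSpace X] [MetricSpace X] [OpensMeasurableSpace X]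
  [SecondCountableTopology X] {η μ : Measure X} {x : X}

lemma measurable_indicator_edist (x : X) :
    Measurable ((Prod.snd ⁻¹' {x}).indicator fun q : X × X => edist q.1 x) :=
  ((continuous_id.edist continuous_const).measurable.comp measurable_fst).indicator
    (measurable_snd (measurableSet_singleton x))

lemma IsW1Between.exists_isCoupling_lintegral_le (hη : η ∈ WSet X 1) (hμ : μ ∈ WSet X 1)
    (h : IsW1Between (dirac x) η μ) {ε : ℝ≥0∞} (hε : ε ≠ 0) :
    ∃ π, IsCoupling π η μ ∧ ∫⁻ q, (Prod.snd ⁻¹' {x}).indicator (fun q => edist q.1 x) q ∂π ≤ ε := by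
  have := hη.1
  have := hμ.1
  have htop : transportCost 1 (dirac x) μ ≠ ⊤ :=
    (transportCost_lt_top le_rfl (dirac_mem_WSet zero_lt_one x) hμ).ne
  have hηtop : transportCost 1 η μ ≠ ⊤ := (transportCost_lt_top le_rfl hη hμ).ne
  obtain ⟨π, hπ, hlt⟩ := exists_isCoupling_lt (ENNReal.lt_add_right hηtop hε)
  refine ⟨π, hπ, (ENNReal.add_le_add_iff_left htop).1 ?_⟩
  have hx := measurable_edist_rpow_right 1 x
  have hfst : Measurable fun q : X × X => edist q.1 x ^ (1 : ℝ) := hx.comp measurable_fst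
  have hind := measurable_indicator_edist x
  calc transportCost 1 (dirac x) μ
        + ∫⁻ q, (Prod.snd ⁻¹' {x}).indicator (fun q => edist q.1 x) q ∂π
      = ∫⁻ q, edist q.2 x ^ (1 : ℝ)
          + (Prod.snd ⁻¹' {x}).indicator (fun q => edist q.1 x) q ∂π := by
        rw [transportCost_dirac_left, lintegral_add_right _ hind, hπ.lintegral_snd hx]
    _ ≤ ∫⁻ q, edist q.1 x ^ (1 : ℝ) + edist q.1 q.2 ^ (1 : ℝ) ∂π := by
        refine lintegral_mono fun q => ?_
        by_cases hq : q.2 = x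
        · simp [hq]
        · simpa [hq, add_comm, edist_comm q.1 q.2] using edist_triangle q.2 q.1 x
    _ = transportCost 1 (dirac x) η + ∫⁻ q, edist q.1 q.2 ^ (1 : ℝ) ∂π := by
        rw [transportCost_dirac_left, lintegral_add_left hfst,
          hπ.lintegral_fst hx]
    _ ≤ transportCost 1 (dirac x) μ + ε := by
        refine (add_le_add_right hlt.le _).trans ?_
        rw [← add_assoc]
        exact add_le_add_left h _

lemma IsW1Between.measure_le_edist_le (hη : η ∈ WSet X 1) (hμ : μ ∈ WSet X 1)
    (h : IsW1Between (dirac x) η μ) {δ : ℝ≥0∞} (hδ : δ ≠ 0) (hδ' : δ ≠ ⊤) :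
    η {z | δ ≤ edist z x} ≤ μ {x}ᶜ := by
  refine ENNReal.le_of_forall_pos_le_add fun ε hε _ => ?_
  obtain ⟨π, hπ, hle⟩ := h.exists_isCoupling_lintegral_le hη hμ
    (mul_ne_zero hδ (ENNReal.coe_ne_zero.2 hε.ne'))
  have hclose : MeasurableSet {z | δ ≤ edist z x} :=
    measurableSet_le measurable_const (continuous_id.edist continuous_const).measurable
  have hsub : Prod.fst ⁻¹' {z | δ ≤ edist z x} ⊆ Prod.snd ⁻¹' {x}ᶜ ∪
      {q : X × X | δ ≤ (Prod.snd ⁻¹' {x}).indicator (fun q => edist q.1 x) q} := by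
    intro q hq
    by_cases hqx : q.2 = x
    · right
      simpa [hqx] using hq
    · exact Or.inl hqx
  have hmarkov : π {q | δ ≤ (Prod.snd ⁻¹' {x}).indicator (fun q => edist q.1 x) q} ≤ ε :=
    (ENNReal.mul_le_mul_iff_right hδ hδ').1 ((mul_meas_ge_le_lintegral₀
      (measurable_indicator_edist x).aemeasurable δ).trans hle)
  rw [← hπ.1, ← hπ.2, Measure.map_apply measurable_fst hclose,
    Measure.map_apply measurable_snd (measurableSet_singleton x).compl]
  exact (measure_mono hsub).trans ((measure_union_le _ _).trans (add_le_add_right hmarkov _))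

lemma IsW1Between.measure_compl_singleton_le (hη : η ∈ WSet X 1) (hμ : μ ∈ WSet X 1)
    (h : IsW1Between (dirac x) η μ) : η {x}ᶜ ≤ μ {x}ᶜ := by
  have hunion : ({x}ᶜ : Set X) = ⋃ n : ℕ, {z | (n + 1 : ℝ≥0∞)⁻¹ ≤ edist z x} := by
    ext z
    simp only [mem_compl_iff, mem_singleton_iff, mem_iUnion, mem_ofPred_eq]
    constructor
    · intro hz
      obtain ⟨n, hn⟩ := ENNReal.exists_inv_nat_lt (edist_pos.2 hz).ne'
      exact ⟨n, (ENNReal.inv_le_inv.2 le_self_add).trans hn.le⟩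
    · rintro ⟨n, hn⟩ rfl
      simp at hn
  have hmono : Monotone fun n : ℕ => {z | (n + 1 : ℝ≥0∞)⁻¹ ≤ edist z x} := by
    intro n m hnm z hz
    exact (ENNReal.inv_le_inv.2 (by gcongr)).trans hz
  conv_lhs => rw [hunion]
  rw [hmono.measure_iUnion]
  exact iSup_le fun n => h.measure_le_edist_le hη hμ (by simp) (by simp)

end BetweennessAtom

/-! ### Two-point measures -/

section TwoPoint

variable {X : Type*} [MeasurableSpace X] {a b : ℝ≥0∞} {x y : X}

lemma twoPoint_comm (a b : ℝ≥0∞) (x y : X) : twoPoint a b x y = twoPoint b a y x := add_comm _ _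

lemma ae_twoPoint [MeasurableSingletonClass X] (a b : ℝ≥0∞) (x y : X) :
    ∀ᵐ z ∂twoPoint a b x y, z = x ∨ z = y := by
  refine ae_add_measure_iff.2 ⟨Measure.ae_smul_measure ?_ a, Measure.ae_smul_measure ?_ b⟩
  · exact (ae_eq_dirac_point x).mono fun _ => Or.inl
  · exact (ae_eq_dirac_point y).mono fun _ => Or.inr

lemma twoPoint_apply_singleton_left [MeasurableSingletonClass X] (hxy : x ≠ y) :
    twoPoint a b x y {x} = a := by
  simp [twoPoint, hxy.symm]

lemma twoPoint_preimage_left {f : X → ℝ} (hf : Measurable f) (h : f x ≠ f y) :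
    twoPoint a b x y (f ⁻¹' {f x}) = a := by
  simp [twoPoint, hf (measurableSet_singleton (f x)), h.symm]

lemma twoPoint_preimage_right {f : X → ℝ} (hf : Measurable f) (h : f x ≠ f y) :
    twoPoint a b x y (f ⁻¹' {f y}) = b := by
  rw [twoPoint_comm, twoPoint_preimage_left hf h.symm]

lemma exists_eq_add_smul_dirac_add_smul_dirac [MeasurableSingletonClass X] {ν : Measure X}
    {κ : ℝ≥0∞} (hxy : x ≠ y) (hx : κ ≤ ν {x}) (hy : κ ≤ ν {y}) :
    ∃ θ : Measure X, ν = θ + κ • dirac x + κ • dirac y := by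
  obtain ⟨θ, rfl⟩ := exists_eq_add_smul_dirac hy
  have hx' : κ ≤ θ {x} := by simpa [hxy.symm] using hx
  obtain ⟨θ', rfl⟩ := exists_eq_add_smul_dirac hx'
  exact ⟨θ', rfl⟩

end TwoPoint

section FixTwoPoint

lemma IsDiagonalChart.exists_mid_left {X : Type*} [MetricSpace X] {u v : X → ℝ}
    {S : Set (ℝ × ℝ)} {x y : X} (c : IsDiagonalChart u v S) (h : u x = u y) :
    ∃ q, u q = u y ∧ v q = (v x + v y) / 2 := by
  obtain ⟨q, hqu, hqv⟩ := c.exists_eq _ (mid_mem_of_convex c.convex (c.mem x) (c.mem y))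
  exact ⟨q, by rw [hqu, h, add_self_div_two], hqv⟩

lemma IsDiagonalChart.edist_add_edist_le_of_mid {X : Type*} [MetricSpace X] {u v : X → ℝ}
    {S : Set (ℝ × ℝ)} (c : IsDiagonalChart u v S) {x q z : X} (hu : u q = u z)
    (hv : v q = (v x + v z) / 2) : edist q x + edist q z ≤ edist z x := by
  rw [edist_dist, edist_dist, edist_dist, ← ENNReal.ofReal_add dist_nonneg dist_nonneg]
  refine ENNReal.ofReal_le_ofReal (le_of_eq ?_)
  have h₁ : v q - v x = (v z - v x) / 2 := by rw [hv]; ring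
  have h₂ : v q - v z = -((v z - v x) / 2) := by rw [hv]; ring
  rw [c.dist_eq, c.dist_eq, c.dist_eq, hu, h₁, h₂, abs_neg, abs_div, abs_two, sub_self, abs_zero]
  ring

variable {X : Type*} [MetricSpace X] [MeasurableSpace X] [OpensMeasurableSpace X]
  {u v : X → ℝ} {S : Set (ℝ × ℝ)} {x y : X} {a b : ℝ≥0∞} {η : Measure X}

lemma ae_mem_of_isW1Between_twoPoint [SecondCountableTopology X] {β : Type*} {u v : X → β}
    (hη : η ∈ WSet X 1) (hab : a + b = 1) (h : IsW1Between (dirac x) η (twoPoint a b x y))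
    (hxy : x ≠ y) (hu : ∀ᵐ z ∂η, u z = u x ∨ u z = u y) (hux : η (u ⁻¹' {u x}) = a)
    (hvx : η (v ⁻¹' {v x}) = a) : ∀ᵐ z ∂η, z = x ∨ (u z = u y ∧ v z ≠ v x) := by
  have := hη.1
  have hμ := twoPoint_mem_WSet le_rfl hab x y
  have := hμ.1
  have hatom : a ≤ η {x} := by
    have hle := h.measure_compl_singleton_le hη hμ
    rw [prob_compl_eq_one_sub (measurableSet_singleton x),
      prob_compl_eq_one_sub (measurableSet_singleton x), twoPoint_apply_singleton_left hxy] at hle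
    exact (ENNReal.sub_le_sub_iff_left (le_self_add.trans hab.le) ENNReal.one_ne_top).1 hle
  filter_upwards [hu, ae_eq_of_measure_preimage_le (hux.le.trans hatom),
    ae_eq_of_measure_preimage_le (hvx.le.trans hatom)] with z hz hzu hzv
  rcases hz with hz | hz
  · exact Or.inl (hzu hz)
  · exact or_iff_not_imp_left.2 fun hne => ⟨hz, fun hzvx => hne (hzv hzvx)⟩

lemma add_smul_dirac_mem_WSet {X : Type*} [PseudoMetricSpace X] [MeasurableSpace X]
    [OpensMeasurableSpace X] {p : ℝ} (hp : 1 ≤ p) {θ : Measure X} {κ : ℝ≥0∞} {z : X}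
    (h : θ + κ • dirac z ∈ WSet X p) (q : X) : θ + κ • dirac q ∈ WSet X p := by
  have huniv : θ univ + κ = 1 := by simpa using h.1.measure_univ
  refine ⟨⟨by simpa using huniv⟩, q, ?_⟩
  have hq := WSet.lintegral_edist_rpow_lt_top hp h q
  rw [lintegral_add_measure] at hq ⊢
  rw [lintegral_smul_measure, lintegral_dirac' _ (measurable_edist_rpow_right p q), edist_self,
    ENNReal.zero_rpow_of_pos (zero_lt_one.trans_le hp), smul_zero, add_zero]
  exact le_self_add.trans_lt hq

namespace IsDiagonalChart

lemma measurableSet_preimage_left (c : IsDiagonalChart u v S) (s : ℝ) :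
    MeasurableSet (u ⁻¹' {s}) :=
  c.measurable_left (measurableSet_singleton s)

end IsDiagonalChart

namespace FixesDiracs

variable [SecondCountableTopology X] {Φ : Measure X → Measure X} {μ : Measure X}

lemma measure_line_eq (hΦ : FixesDiracs 1 Φ) (c : IsDiagonalChart u v S) (hμ : μ ∈ WSet X 1)
    {s t : ℝ} (hst : (s, t) ∈ interior S) : Φ μ (u ⁻¹' {s}) = μ (u ⁻¹' {s}) :=
  c.measure_line_eq (hΦ.mem hμ) hμ (hΦ.samePotentials le_rfl hμ) hst

lemma ae_coord_mem_iff (hΦ : FixesDiracs 1 Φ) (c : IsDiagonalChart u v S) (hμ : μ ∈ WSet X 1)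
    {F : Finset ℝ} (hF : ∀ s ∈ F, ∃ t, (s, t) ∈ interior S) :
    (∀ᵐ z ∂Φ μ, u z ∈ F) ↔ ∀ᵐ z ∂μ, u z ∈ F := by
  have := hμ.1
  have := (hΦ.mem hμ).1
  have heq (s : ℝ) (hs : s ∈ F) : Φ μ (u ⁻¹' {s}) = μ (u ⁻¹' {s}) :=
    (hF s hs).elim fun _ hst => hΦ.measure_line_eq c hμ hst
  exact ⟨ae_mem_finset_of_measure_preimage_eq (fun s _ => c.measurableSet_preimage_left s)
      fun s hs => (heq s hs).symm,
    ae_mem_finset_of_measure_preimage_eq (fun s _ => c.measurableSet_preimage_left s) heq⟩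

lemma ae_coord_mem_twoPoint (hΦ : FixesDiracs 1 Φ) (c : IsDiagonalChart u v S) (hab : a + b = 1)
    (hx : (u x, v x) ∈ interior S) (hy : (u y, v y) ∈ interior S) :
    ∀ᵐ z ∂Φ (twoPoint a b x y), u z = u x ∨ u z = u y := by
  have h := (hΦ.ae_coord_mem_iff c (twoPoint_mem_WSet le_rfl hab x y) (F := {u x, u y}) ?_).2
    ((ae_twoPoint a b x y).mono fun z hz => by rcases hz with rfl | rfl <;> simp)
  · simpa using h
  · simpa using ⟨⟨v x, hx⟩, ⟨v y, hy⟩⟩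

lemma twoPoint_eq_of_ae (hΦ : FixesDiracs 1 Φ) (c : IsDiagonalChart u v S) (hab : a + b = 1)
    (hx : (u x, v x) ∈ interior S) (hy : (u y, v y) ∈ interior S) (hu : u x ≠ u y)
    (h : ∀ᵐ z ∂Φ (twoPoint a b x y), z = x ∨ z = y) :
    Φ (twoPoint a b x y) = twoPoint a b x y := by
  classical
  have hμ := twoPoint_mem_WSet le_rfl hab x y
  refine measure_ext_of_injOn (F := {x, y}) (f := u) ?_ (h.mono fun z hz => by simpa using hz)
    ((ae_twoPoint a b x y).mono fun z hz => by simpa using hz) fun z hz => ?_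
  · simp [InjOn, hu, hu.symm]
  · rcases (by simpa using hz : z = x ∨ z = y) with rfl | rfl
    exacts [hΦ.measure_line_eq c hμ hx, hΦ.measure_line_eq c hμ hy]

lemma twoPoint_eq_of_left_eq (hΦ : FixesDiracs 1 Φ) (c : IsDiagonalChart u v S) (hab : a + b = 1)
    (hx : (u x, v x) ∈ interior S) (hy : (u y, v y) ∈ interior S) (hu : u x = u y)
    (hv : v x ≠ v y) : Φ (twoPoint a b x y) = twoPoint a b x y := by
  refine hΦ.twoPoint_eq_of_ae c.swap hab (swap_mem_interior_preimage_swap hx)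
    (swap_mem_interior_preimage_swap hy) hv ?_
  filter_upwards [hΦ.ae_coord_mem_twoPoint c hab hx hy, hΦ.ae_coord_mem_twoPoint c.swap hab
    (swap_mem_interior_preimage_swap hx) (swap_mem_interior_preimage_swap hy)] with z hzu hzv
  have hzx : u z = u x := hzu.elim id fun h => h.trans hu.symm
  exact hzv.imp (c.eq_of_coord_eq hzx) (c.eq_of_coord_eq (hzx.trans hu))

lemma twoPoint_eq_of_ae_left (hΦ : FixesDiracs 1 Φ) (c : IsDiagonalChart u v S) (hab : a + b = 1)
    (hx : (u x, v x) ∈ interior S) (hy : (u y, v y) ∈ interior S) (hu : u x ≠ u y)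
    (hv : v x ≠ v y) (h : ∀ᵐ z ∂Φ (twoPoint a b x y), u z = u x → z = x) :
    Φ (twoPoint a b x y) = twoPoint a b x y := by
  have hμ := twoPoint_mem_WSet le_rfl hab x y
  have := (hΦ.mem hμ).1
  have hx' := swap_mem_interior_preimage_swap hx
  have hy' := swap_mem_interior_preimage_swap hy
  have hle : Φ (twoPoint a b x y) (v ⁻¹' {v x}) ≤ Φ (twoPoint a b x y) {x} :=
    calc Φ (twoPoint a b x y) (v ⁻¹' {v x}) = Φ (twoPoint a b x y) (u ⁻¹' {u x}) := by
          rw [hΦ.measure_line_eq c.swap hμ hx', hΦ.measure_line_eq c hμ hx,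
            twoPoint_preimage_left c.measurable_left hu,
            twoPoint_preimage_left c.measurable_right hv]
      _ ≤ Φ (twoPoint a b x y) {x} := measure_mono_ae h
  refine hΦ.twoPoint_eq_of_ae c hab hx hy hu ?_
  filter_upwards [h, ae_eq_of_measure_preimage_le hle, hΦ.ae_coord_mem_twoPoint c hab hx hy,
    hΦ.ae_coord_mem_twoPoint c.swap hab hx' hy'] with z hzu hzv hu hv
  rcases hu with hu | hu
  · exact Or.inl (hzu hu)
  · exact hv.imp hzv (c.eq_of_coord_eq hu)

lemma exists_corner_atom (hΦ : FixesDiracs 1 Φ) (c : IsDiagonalChart u v S) (hab : a + b = 1)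
    (hx : (u x, v x) ∈ interior S) (hy : (u y, v y) ∈ interior S) (hu : u x ≠ u y)
    (hv : v x ≠ v y) (hne : Φ (twoPoint a b x y) ≠ twoPoint a b x y) :
    ∃ z, u z = u x ∧ v z = v y ∧ Φ (twoPoint a b x y) {z} ≠ 0 := by
  have hfreq : ∃ᶠ z in ae (Φ (twoPoint a b x y)), ¬(u z = u x → z = x) := fun h =>
    hne (hΦ.twoPoint_eq_of_ae_left c hab hx hy hu hv (h.mono fun _ => not_not.1))
  have hv' := hΦ.ae_coord_mem_twoPoint c.swap hab (swap_mem_interior_preimage_swap hx)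
    (swap_mem_interior_preimage_swap hy)
  have hcorner : ∃ᶠ z in ae (Φ (twoPoint a b x y)), u z = u x ∧ v z = v y :=
    (hfreq.and_eventually hv').mono fun z hz => by
      obtain ⟨hzu, hzx⟩ := Classical.not_imp.1 hz.1
      exact ⟨hzu, hz.2.resolve_left fun h => hzx (c.eq_of_coord_eq hzu h)⟩
  obtain ⟨z, hzu, hzv⟩ := hcorner.exists
  refine ⟨z, hzu, hzv, fun h => hcorner ?_⟩
  filter_upwards [measure_eq_zero_iff_ae_notMem.1 h] with w hw hwz
  exact hw (c.eq_of_coord_eq (hwz.1.trans hzu.symm) (hwz.2.trans hzv.symm))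

lemma exists_preimage_isW1Between (hΦ : FixesDiracs 1 Φ) (hμ : μ ∈ WSet X 1) {θ : Measure X}
    {κ : ℝ≥0∞} {q z : X} (hμθ : Φ μ = θ + κ • dirac z)
    (hq : edist q x + edist q z ≤ edist z x) :
    ∃ η ∈ WSet X 1, Φ η = θ + κ • dirac q ∧ IsW1Between (dirac x) η μ := by
  have hz : θ + κ • dirac z ∈ WSet X 1 := hμθ ▸ hΦ.mem hμ
  have hq' := add_smul_dirac_mem_WSet le_rfl hz q
  obtain ⟨η, hη, hΦη⟩ := hΦ.bijOn.surjOn hq'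
  refine ⟨η, hη, hΦη, ?_⟩
  rw [← hΦ.isW1Between_iff (dirac_mem_WSet zero_lt_one x) hη hμ, hΦ.map_dirac_eq, hΦη, hμθ]
  exact isW1Between_add_smul_dirac hq'.1 hz.1 hq

lemma exists_preimage_ae_mem (hΦ : FixesDiracs 1 Φ) (c : IsDiagonalChart u v S)
    (hab : a + b = 1) (hx : (u x, v x) ∈ interior S) (hy : (u y, v y) ∈ interior S)
    (hu : u x ≠ u y) (hv : v x ≠ v y) {m q z : X} (hmu : u m = u y)
    (hmv : v m = (v x + v y) / 2) (hqu : u q = u z) (hqv : v q = (v x + v y) / 2)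
    (hzu : u z = u x ∨ u z = u y) (hzv : v z = v y) {θ : Measure X} {κ : ℝ≥0∞}
    (hθ : Φ (twoPoint a b x y) = θ + κ • dirac z) :
    ∃ η ∈ WSet X 1, Φ η = θ + κ • dirac q ∧ ∀ᵐ z ∂η, z = x ∨ z = m ∨ z = y := by
  have hμ := twoPoint_mem_WSet le_rfl hab x y
  have hx' := swap_mem_interior_preimage_swap hx
  have hy' := swap_mem_interior_preimage_swap hy
  have hm' := swap_mem_interior_preimage_swap (mid_mem_of_convex c.convex.interior hx hy)
  have hqx : v q ≠ v x := fun h => hv (by linarith)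
  obtain ⟨η, hη, hΦη, hbetween⟩ := hΦ.exists_preimage_isW1Between hμ hθ
    (c.edist_add_edist_le_of_mid hqu (hzv ▸ hqv))
  have haeu := hΦ.ae_coord_mem_twoPoint c hab hx hy
  have haev := hΦ.ae_coord_mem_twoPoint c.swap hab hx' hy'
  rw [hθ, ae_add_measure_iff] at haeu haev
  have hηu : ∀ᵐ z ∂η, u z ∈ ({u x, u y} : Finset ℝ) := by
    rw [← hΦ.ae_coord_mem_iff c hη (by simpa using ⟨⟨_, hx⟩, ⟨_, hy⟩⟩), hΦη, ae_add_measure_iff]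
    exact ⟨by simpa using haeu.1, Measure.ae_smul_measure
      ((ae_eq_dirac_point q).mono fun w hw => by simpa [hw, hqu] using hzu) κ⟩
  have hηv : ∀ᵐ z ∂η, v z ∈ ({v x, v y, v q} : Finset ℝ) := by
    rw [← hΦ.ae_coord_mem_iff c.swap hη (by rw [hqv]; simpa using ⟨⟨_, hx'⟩, ⟨_, hy'⟩, ⟨_, hm'⟩⟩),
      hΦη, ae_add_measure_iff]
    exact ⟨haev.1.mono fun w hw => by simpa using hw.imp_right Or.inl, Measure.ae_smul_measure
      ((ae_eq_dirac_point q).mono fun w hw => by simp [hw]) κ⟩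
  have hux : η (u ⁻¹' {u x}) = a := by
    rw [← twoPoint_preimage_left (a := a) (b := b) c.measurable_left hu,
      ← hΦ.measure_line_eq c hη hx, ← hΦ.measure_line_eq c hμ hx, hθ, hΦη]
    simp [c.measurableSet_preimage_left, indicator, hqu]
  have hvx : η (v ⁻¹' {v x}) = a := by
    rw [← twoPoint_preimage_left (a := a) (b := b) c.measurable_right hv,
      ← hΦ.measure_line_eq c.swap hη hx', ← hΦ.measure_line_eq c.swap hμ hx', hθ, hΦη]
    simp [c.swap.measurableSet_preimage_left, indicator, hqx, hzv, hv.symm]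
  refine ⟨η, hη, hΦη, ?_⟩
  filter_upwards [ae_mem_of_isW1Between_twoPoint hη hab hbetween (fun h => hu (congrArg u h))
    (by simpa using hηu) hux hvx, hηv] with w hw hwv
  refine hw.imp_right fun ⟨hwu, hwx⟩ => ?_
  rcases (by simpa [hwx] using hwv : v w = v y ∨ v w = v q) with h | h
  · exact Or.inr (c.eq_of_coord_eq hwu h)
  · exact Or.inl (c.eq_of_coord_eq (hwu.trans hmu.symm) (h.trans (hqv.trans hmv.symm)))

lemma eq_of_measure_map_line_eq (hΦ : FixesDiracs 1 Φ) (c : IsDiagonalChart u v S)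
    {η₁ η₂ : Measure X} (hη₁ : η₁ ∈ WSet X 1) (hη₂ : η₂ ∈ WSet X 1) {F : Finset X}
    (hinj : InjOn u F) (hint : ∀ z ∈ F, ∃ t, (u z, t) ∈ interior S)
    (hae₁ : ∀ᵐ z ∂η₁, z ∈ F) (hae₂ : ∀ᵐ z ∂η₂, z ∈ F)
    (h : ∀ z ∈ F, Φ η₁ (u ⁻¹' {u z}) = Φ η₂ (u ⁻¹' {u z})) : η₁ = η₂ := by
  refine measure_ext_of_injOn hinj hae₁ hae₂ fun z hz => ?_
  obtain ⟨t, ht⟩ := hint z hz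
  rw [← hΦ.measure_line_eq c hη₁ ht, ← hΦ.measure_line_eq c hη₂ ht, h z hz]

lemma measure_corner_eq_zero_or (hΦ : FixesDiracs 1 Φ) (c : IsDiagonalChart u v S)
    (hab : a + b = 1) (hx : (u x, v x) ∈ interior S) (hy : (u y, v y) ∈ interior S)
    (hu : u x ≠ u y) (hv : v x ≠ v y) {z w : X} (hzu : u z = u x) (hzv : v z = v y)
    (hwu : u w = u y) (hwv : v w = v x) :
    Φ (twoPoint a b x y) {z} = 0 ∨ Φ (twoPoint a b x y) {y} = 0 := by
  classical
  rw [← bot_eq_zero, ← min_eq_bot]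
  set κ := min (Φ (twoPoint a b x y) {z}) (Φ (twoPoint a b x y) {y})
  have hzy : z ≠ y := fun h => hu (by rw [← hzu, h])
  obtain ⟨θ, hθ⟩ := exists_eq_add_smul_dirac_add_smul_dirac hzy (min_le_left _ _) (min_le_right _ _)
  obtain ⟨q, hqu, hqv⟩ := c.exists_mid_left hzu.symm
  obtain ⟨m, hmu, hmv⟩ := c.exists_mid_left hwu
  rw [hzv] at hqv
  rw [hwv] at hmv
  have hqy : q ≠ y := fun h => hu (by rw [← hzu, ← hqu, h])
  have hqz : q ≠ z := fun h => hv (by rw [h] at hqv; linarith)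
  have hqm : q ≠ m := fun h => hu (by rw [← hzu, ← hqu, h, hmu])
  obtain ⟨η₁, hη₁, hΦη₁, hae₁⟩ := hΦ.exists_preimage_ae_mem c hab hx hy hu hv hmu hmv hqu hqv
    (Or.inl hzu) hzv (hθ.trans (add_right_comm _ _ _))
  obtain ⟨η₂, hη₂, hΦη₂, hae₂⟩ := hΦ.exists_preimage_ae_mem c hab hx hy hu hv hmu hmv hmu hmv
    (Or.inr rfl) rfl hθ
  have hη : η₁ = η₂ := by
    refine hΦ.eq_of_measure_map_line_eq c.swap (F := {x, m, y}) hη₁ hη₂ ?_ ?_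
      (by simpa using hae₁) (by simpa using hae₂) fun w _ => ?_
    · have hmx : v m ≠ v x := fun h => hv (by linarith)
      have hmy : v m ≠ v y := fun h => hv (by linarith)
      simp [InjOn, hv, hv.symm, hmx, hmx.symm, hmy, hmy.symm]
    · simpa [hmv] using ⟨⟨_, swap_mem_interior_preimage_swap hx⟩,
        ⟨_, swap_mem_interior_preimage_swap (mid_mem_of_convex c.convex.interior hx hy)⟩,
        ⟨_, swap_mem_interior_preimage_swap hy⟩⟩
    · rw [hΦη₁, hΦη₂]
      simp [c.swap.measurableSet_preimage_left, indicator, hqv, hmv, hzv]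
  have hΦq : (θ + κ • dirac y + κ • dirac q) {q} = (θ + κ • dirac z + κ • dirac m) {q} := by
    rw [← hΦη₁, ← hΦη₂, hη]
  have hfin : θ {q} ≠ ⊤ := by
    have := (hΦ.mem (twoPoint_mem_WSet le_rfl hab x y)).1
    refine ne_top_of_le_ne_top (measure_ne_top (Φ (twoPoint a b x y)) {q}) ?_
    rw [hθ, add_assoc]
    exact Measure.le_add_right le_rfl _
  have hθκ : θ {q} + κ = θ {q} + 0 := by
    simpa [hqy, hqy.symm, hqz, hqz.symm, hqm, hqm.symm] using hΦq
  exact (ENNReal.add_right_inj hfin).1 hθκ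

lemma twoPoint_eq_of_lt (hΦ : FixesDiracs 1 Φ) (c : IsDiagonalChart u v S) (hab : a + b = 1)
    (hx : (u x, v x) ∈ interior S) (hy : (u y, v y) ∈ interior S) (hu : u x ≠ u y)
    (hv : v x ≠ v y) (hlt : a < b) : Φ (twoPoint a b x y) = twoPoint a b x y := by
  by_contra hne
  have hμ := twoPoint_mem_WSet le_rfl hab x y
  have hx' := swap_mem_interior_preimage_swap hx
  have hy' := swap_mem_interior_preimage_swap hy
  obtain ⟨z, hzu, hzv, hz⟩ := hΦ.exists_corner_atom c hab hx hy hu hv hne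
  obtain ⟨w, hwv, hwu, -⟩ := hΦ.exists_corner_atom c.swap hab hx' hy' hv hu hne
  have hy₀ := (hΦ.measure_corner_eq_zero_or c hab hx hy hu hv hzu hzv hwu hwv).resolve_left hz
  refine hlt.not_ge ?_
  calc b = Φ (twoPoint a b x y) (v ⁻¹' {v y}) := by
        rw [hΦ.measure_line_eq c.swap hμ hy', twoPoint_preimage_right c.measurable_right hv]
    _ ≤ Φ (twoPoint a b x y) (u ⁻¹' {u x}) := by
        refine measure_mono_ae ?_
        filter_upwards [hΦ.ae_coord_mem_twoPoint c hab hx hy,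
          measure_eq_zero_iff_ae_notMem.1 hy₀] with q hq hqy hqv
        exact hq.resolve_right fun hqu => hqy (c.eq_of_coord_eq hqu hqv)
    _ = a := by rw [hΦ.measure_line_eq c hμ hx, twoPoint_preimage_left c.measurable_left hu]

end FixesDiracs

end FixTwoPoint

section MinCost

variable {X : Type*} [PseudoMetricSpace X]

/-- The cost of moving `z` to the nearer one of the points `x` and `y`. -/
noncomputable def minCost (p : ℝ) (x y z : X) : ℝ≥0∞ := min (edist z x ^ p) (edist z y ^ p)

variable [MeasurableSpace X] [OpensMeasurableSpace X]

lemma measurable_minCost (p : ℝ) (x y : X) : Measurable (minCost p x y) :=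
  (measurable_edist_rpow_right p x).min (measurable_edist_rpow_right p y)

lemma lintegral_minCost_ne_top {p : ℝ} {μ : Measure X} (hp : 1 ≤ p) (hμ : μ ∈ WSet X p)
    (x y : X) :    ∫⁻ z, minCost p x y z ∂μ ≠ ⊤ :=
  ((lintegral_mono fun _ => min_le_left _ _).trans_lt
    (WSet.lintegral_edist_rpow_lt_top hp hμ x)).ne

lemma lintegral_minCost_le_transportCost [MeasurableSingletonClass X] (p : ℝ) (μ : Measure X)
    (a b : ℝ≥0∞) (x y : X) :
    ∫⁻ z, minCost p x y z ∂μ ≤ transportCost p μ (twoPoint a b x y) := by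
  refine le_transportCost fun π hπ => ?_
  rw [← hπ.lintegral_fst (measurable_minCost p x y)]
  refine lintegral_mono_ae ?_
  filter_upwards [hπ.ae_snd (ae_twoPoint a b x y)] with q hq
  rcases hq with hq | hq
  · exact hq ▸ min_le_left _ _
  · exact hq ▸ min_le_right _ _

lemma transportCost_twoPoint_twoPoint_le [SecondCountableTopology X] {p : ℝ} (hp : 0 < p)
    (a b κ : ℝ≥0∞) (x y : X) :
    transportCost p (twoPoint (a + κ) b x y) (twoPoint a (b + κ) x y) ≤ κ * edist x y ^ p := by
  have h := transportCost_add_smul_dirac_le hp (twoPoint a b x y) κ x y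
  rwa [twoPoint, add_right_comm, add_assoc _ _ (κ • dirac y), ← add_smul, ← add_smul] at h

end MinCost

namespace FixesDiracs

variable {X : Type*} [MetricSpace X] [MeasurableSpace X] [OpensMeasurableSpace X]
  [SecondCountableTopology X] {u v : X → ℝ} {S : Set (ℝ × ℝ)} {x y : X} {a b : ℝ≥0∞}
  {Φ : Measure X → Measure X}

lemma twoPoint_self_eq (hΦ : FixesDiracs 1 Φ) (c : IsDiagonalChart u v S) (ha : a + a = 1)
    (hx : (u x, v x) ∈ interior S) (hy : (u y, v y) ∈ interior S) (hu : u x ≠ u y)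
    (hv : v x ≠ v y) : Φ (twoPoint a a x y) = twoPoint a a x y := by
  have hμ := twoPoint_mem_WSet le_rfl ha x y
  have ha₀ : 0 < a := pos_of_ne_zero fun h => by simp [h] at ha
  have ha_top : a ≠ ⊤ := fun h => by simp [h] at ha
  have hle (κ : ℝ≥0∞) (hκ : κ ∈ Ioc 0 a) :
      ∫⁻ z, minCost 1 x y z ∂Φ (twoPoint a a x y) ≤ κ * edist x y ^ (1 : ℝ) := by
    have hsum : a - κ + (a + κ) = 1 := by
      rw [add_comm a κ, ← add_assoc, tsub_add_cancel_of_le hκ.2, ha]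
    have hlt : a - κ < a + κ := (tsub_le_self).trans_lt (ENNReal.lt_add_right ha_top hκ.1.ne')
    calc ∫⁻ z, minCost 1 x y z ∂Φ (twoPoint a a x y)
        ≤ transportCost 1 (Φ (twoPoint a a x y)) (Φ (twoPoint (a - κ) (a + κ) x y)) := by
          rw [hΦ.twoPoint_eq_of_lt c hsum hx hy hu hv hlt]
          exact lintegral_minCost_le_transportCost ..
      _ = transportCost 1 (twoPoint a a x y) (twoPoint (a - κ) (a + κ) x y) :=
          hΦ.cost_eq _ hμ _ (twoPoint_mem_WSet le_rfl hsum x y)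
      _ ≤ κ * edist x y ^ (1 : ℝ) := by
          have h := transportCost_twoPoint_twoPoint_le zero_lt_one (a - κ) a κ x y
          rwa [tsub_add_cancel_of_le hκ.2] at h
  have hzero : ∫⁻ z, minCost 1 x y z ∂Φ (twoPoint a a x y) = 0 := by
    have hlim : Tendsto (fun κ => κ * edist x y ^ (1 : ℝ)) (𝓝[>] 0) (𝓝 (0 * _)) :=
      ENNReal.Tendsto.mul_const (tendsto_id.mono_left nhdsWithin_le_nhds)
        (Or.inr (by simp [edist_ne_top]))
    rw [zero_mul] at hlim
    exact le_antisymm (ge_of_tendsto hlim (eventually_of_mem (Ioc_mem_nhdsGT ha₀) hle)) bot_le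
  refine hΦ.twoPoint_eq_of_ae c ha hx hy hu ?_
  filter_upwards [(lintegral_eq_zero_iff (measurable_minCost 1 x y)).1 hzero] with z hz
  simpa [minCost] using hz

lemma twoPoint_eq_of_one_lt {p : ℝ} (hp : 1 < p) (hΦ : FixesDiracs p Φ)
    (c : IsDiagonalChart u v S) (hab : a + b = 1) (hx : (u x, v x) ∈ interior S)
    (hy : (u y, v y) ∈ interior S) (hu : u x ≠ u y) :
    Φ (twoPoint a b x y) = twoPoint a b x y := by
  classical
  have hμ := twoPoint_mem_WSet hp.le hab x y
  have := hμ.1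
  have := (hΦ.mem hμ).1
  have hF : ∀ᵐ z ∂twoPoint a b x y, z ∈ ({x, y} : Finset X) :=
    (ae_twoPoint a b x y).mono fun z hz => by simpa using hz
  have hatom : ∀ z ∈ ({x, y} : Finset X), Φ (twoPoint a b x y) {z} = twoPoint a b x y {z} := by
    intro z hz
    have hint : (u z, v z) ∈ interior S := by
      rcases (by simpa using hz : z = x ∨ z = y) with rfl | rfl <;> assumption
    refine c.measure_singleton_eq hp hμ (hΦ.mem hμ)
      (fun w => (hΦ.samePotentials hp.le hμ w).symm) hint ?_
    filter_upwards [hF] with w hw hwz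
    have hinj : InjOn u ({x, y} : Finset X) := by simp [InjOn, hu, hu.symm]
    exact hinj hw hz hwz
  exact measure_ext_of_ae_mem_finset _ (ae_mem_finset_of_measure_preimage_eq (f := id)
    (fun z _ => measurableSet_singleton z) hatom hF) hF hatom

theorem twoPoint_eq {p : ℝ} (hp : 1 ≤ p) (hΦ : FixesDiracs p Φ) (c : IsDiagonalChart u v S)
    (hab : a + b = 1) (hx : (u x, v x) ∈ interior S) (hy : (u y, v y) ∈ interior S) :
    Φ (twoPoint a b x y) = twoPoint a b x y := by
  rcases eq_or_ne x y with rfl | hxy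
  · rw [twoPoint, ← add_smul, hab, one_smul, hΦ.map_dirac_eq]
  have hx' := swap_mem_interior_preimage_swap hx
  have hy' := swap_mem_interior_preimage_swap hy
  rcases hp.eq_or_lt with rfl | hp
  · by_cases hu : u x = u y
    · exact hΦ.twoPoint_eq_of_left_eq c hab hx hy hu fun hv => hxy (c.eq_of_coord_eq hu hv)
    by_cases hv : v x = v y
    · exact hΦ.twoPoint_eq_of_left_eq c.swap hab hx' hy' hv hu
    rcases lt_trichotomy a b with hlt | rfl | hlt
    · exact hΦ.twoPoint_eq_of_lt c hab hx hy hu hv hlt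
    · exact hΦ.twoPoint_self_eq c hab hx hy hu hv
    · rw [twoPoint_comm]
      rw [add_comm] at hab
      exact hΦ.twoPoint_eq_of_lt c hab hy hx (Ne.symm hu) (Ne.symm hv) hlt
  · by_cases hu : u x = u y
    · exact hΦ.twoPoint_eq_of_one_lt hp c.swap hab hx' hy' fun hv => hxy (c.eq_of_coord_eq hu hv)
    · exact hΦ.twoPoint_eq_of_one_lt hp c hab hx hy hu

end FixesDiracs

/-! ### Voronoi cells, half-planes and quadrants -/

section Voronoi

/-- The points lying strictly closer to `x` than to `y`. -/
def voronoiCell {X : Type*} [PseudoMetricSpace X] (x y : X) : Set X := {z | dist z x < dist z y}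

variable {X : Type*} [MetricSpace X] [MeasurableSpace X] [OpensMeasurableSpace X]
  [SecondCountableTopology X] {p : ℝ} {μ ν : Measure X} {x y : X} {a b : ℝ≥0∞}

lemma measurableSet_voronoiCell (x y : X) : MeasurableSet (voronoiCell x y) :=
  measurableSet_lt (measurable_id.dist measurable_const) (measurable_id.dist measurable_const)

lemma edist_rpow_lt_iff_mem_voronoiCell {X : Type*} [PseudoMetricSpace X] {p : ℝ} (hp : 0 < p)
    {x y z : X} : edist z x ^ p < edist z y ^ p ↔ z ∈ voronoiCell x y := by
  rw [ENNReal.rpow_lt_rpow_iff hp, edist_dist, edist_dist,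
    ENNReal.ofReal_lt_ofReal_iff_of_nonneg dist_nonneg]
  rfl

lemma transportCost_twoPoint_voronoiCell_le (hp : 0 < p) (μ : Measure X) (x y : X) :
    transportCost p μ (twoPoint (μ (voronoiCell x y)) (μ (voronoiCell x y)ᶜ) x y) ≤
      ∫⁻ z, minCost p x y z ∂μ := by
  have hm := measurableSet_voronoiCell x y
  have hadd := transportCost_add_le (p := p) (μ := μ.restrict (voronoiCell x y))
    (ν := μ (voronoiCell x y) • dirac x) (μ' := μ.restrict (voronoiCell x y)ᶜ)
    (ν' := μ (voronoiCell x y)ᶜ • dirac y)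
  rw [Measure.restrict_add_restrict_compl hm] at hadd
  have hx := transportCost_smul_dirac_le p (μ.restrict (voronoiCell x y)) x
  have hy := transportCost_smul_dirac_le p (μ.restrict (voronoiCell x y)ᶜ) y
  rw [Measure.restrict_apply_univ] at hx hy
  refine (hadd.trans (add_le_add hx hy)).trans_eq ?_
  rw [← lintegral_add_compl (minCost p x y) hm]
  congr 1
  · refine setLIntegral_congr_fun hm fun z hz => (min_eq_left ?_).symm
    exact ((edist_rpow_lt_iff_mem_voronoiCell hp).2 hz).le
  · refine setLIntegral_congr_fun hm.compl fun z hz => (min_eq_right (not_lt.1 ?_)).symm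
    exact fun hlt => hz ((edist_rpow_lt_iff_mem_voronoiCell hp).1 hlt)

lemma lintegral_minCost_add_le (hxy : x ≠ y) (p : ℝ) (μ : Measure X) (a b δ : ℝ≥0∞) :
    ∫⁻ z, minCost p x y z ∂μ + δ * μ {z | edist z x ^ p + δ ≤ edist z y ^ p} ≤
      transportCost p μ (twoPoint a b x y) + δ * a := by
  set A : Set X := {z | edist z x ^ p + δ ≤ edist z y ^ p}
  have hA : MeasurableSet A := measurableSet_le
    ((measurable_edist_rpow_right p x).add measurable_const) (measurable_edist_rpow_right p y)
  rw [← tsub_le_iff_right]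
  refine le_transportCost fun π hπ => ?_
  rw [tsub_le_iff_right]
  have hfst : ∫⁻ z, minCost p x y z ∂μ + δ * μ A =
      ∫⁻ q, minCost p x y q.1 + A.indicator (fun _ => δ) q.1 ∂π := by
    rw [← lintegral_indicator_const hA, ← lintegral_add_left (measurable_minCost p x y)]
    exact (hπ.lintegral_fst ((measurable_minCost p x y).add (measurable_const.indicator hA))).symm
  have hsnd : δ * a = ∫⁻ q, ({x} : Set X).indicator (fun _ => δ) q.2 ∂π := by
    rw [hπ.lintegral_snd (measurable_const.indicator (measurableSet_singleton x)),
      lintegral_indicator_const (measurableSet_singleton x), twoPoint_apply_singleton_left hxy]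
  rw [hfst, hsnd, ← lintegral_add_left (measurable_edist_rpow p)]
  refine lintegral_mono_ae ?_
  filter_upwards [hπ.ae_snd (ae_twoPoint a b x y)] with q hq
  rcases hq with hq | hq
  · rw [hq, indicator_of_mem (mem_singleton x)]
    exact add_le_add (min_le_left _ _) (indicator_le (fun _ _ => le_rfl) _)
  · rw [hq, indicator_of_notMem (mt mem_singleton_iff.1 hxy.symm) (fun _ => δ), add_zero]
    by_cases hqA : q.1 ∈ A
    · rw [indicator_of_mem hqA]
      exact (add_le_add_left (min_le_left _ _) _).trans hqA
    · rw [indicator_of_notMem hqA, add_zero]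
      exact min_le_right _ _

lemma measure_voronoiCell_le_of_transportCost_le (hp : 1 ≤ p) (hμ : μ ∈ WSet X p) (hxy : x ≠ y)
    (h : transportCost p μ (twoPoint a b x y) ≤ ∫⁻ z, minCost p x y z ∂μ) :
    μ (voronoiCell x y) ≤ a := by
  have hp₀ : 0 < p := zero_lt_one.trans_le hp
  let A : ℕ → Set X := fun n => {z | edist z x ^ p + ((n : ℝ≥0∞) + 1)⁻¹ ≤ edist z y ^ p}
  have hA (n : ℕ) : μ (A n) ≤ a := by
    have hle := (lintegral_minCost_add_le hxy p μ a b ((n : ℝ≥0∞) + 1)⁻¹).trans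
      (add_le_add_left h _)
    refine (ENNReal.mul_le_mul_iff_right (by simp) (by simp)).1
      ((ENNReal.add_le_add_iff_left (lintegral_minCost_ne_top hp hμ x y)).1 hle)
  have hmono : Monotone A := fun n m hnm z hz =>
    le_trans (add_le_add_right (ENNReal.inv_le_inv.2 (by gcongr)) _) hz
  refine (measure_mono fun z hz => ?_).trans ((hmono.measure_iUnion).trans_le (iSup_le hA))
  have hlt := (edist_rpow_lt_iff_mem_voronoiCell hp₀).2 hz
  obtain ⟨n, hn⟩ := ENNReal.exists_inv_nat_lt (tsub_pos_of_lt hlt).ne'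
  refine mem_iUnion.2 ⟨n, ?_⟩
  calc edist z x ^ p + ((n : ℝ≥0∞) + 1)⁻¹
      ≤ edist z x ^ p + (edist z y ^ p - edist z x ^ p) := by
        refine add_le_add_right ((ENNReal.inv_le_inv.2 ?_).trans hn.le) _
        exact le_self_add
    _ = edist z y ^ p := add_tsub_cancel_of_le hlt.le

lemma measure_voronoiCell_le (hp : 1 ≤ p) (hμ : μ ∈ WSet X p) (hν : ν ∈ WSet X p) (hxy : x ≠ y)
    (h : ∀ a b, a + b = 1 →
      transportCost p ν (twoPoint a b x y) = transportCost p μ (twoPoint a b x y)) :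
    ν (voronoiCell x y) ≤ μ (voronoiCell x y) := by
  have := hμ.1
  have := hν.1
  have hp₀ : 0 < p := zero_lt_one.trans_le hp
  have hm := measurableSet_voronoiCell x y
  refine measure_voronoiCell_le_of_transportCost_le (b := μ (voronoiCell x y)ᶜ) hp hν hxy ?_
  rw [h _ _ (prob_add_prob_compl hm)]
  calc transportCost p μ (twoPoint (μ (voronoiCell x y)) (μ (voronoiCell x y)ᶜ) x y)
      ≤ ∫⁻ z, minCost p x y z ∂μ := transportCost_twoPoint_voronoiCell_le hp₀ μ x y
    _ ≤ transportCost p μ (twoPoint (ν (voronoiCell x y)) (ν (voronoiCell x y)ᶜ) x y) :=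
        lintegral_minCost_le_transportCost ..
    _ = transportCost p ν (twoPoint (ν (voronoiCell x y)) (ν (voronoiCell x y)ᶜ) x y) :=
        (h _ _ (prob_add_prob_compl hm)).symm
    _ ≤ ∫⁻ z, minCost p x y z ∂ν := transportCost_twoPoint_voronoiCell_le hp₀ ν x y

end Voronoi

lemma abs_sub_lt_abs_add_iff {r w : ℝ} (hr : 0 < r) : |w - r| < |w + r| ↔ 0 < w := by
  rw [← sq_lt_sq]
  constructor <;> intro h <;> nlinarith

lemma abs_sub_add_abs_sub_lt_iff {r w w' : ℝ} (hr : 0 < r) :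
    |w - r| + |w' - r| < |w| + |w'| ↔ 0 < w ∧ 0 < w' ∧ r < w + w' := by
  grind [abs_cases]

namespace FixesDiracs

variable {X : Type*} [MetricSpace X] [MeasurableSpace X] [OpensMeasurableSpace X]
  [SecondCountableTopology X] {u v : X → ℝ} {S : Set (ℝ × ℝ)} {p : ℝ} {μ : Measure X}
  {Φ : Measure X → Measure X}

lemma measure_voronoiCell_eq (hp : 1 ≤ p) (hΦ : FixesDiracs p Φ) (c : IsDiagonalChart u v S)
    (hμ : μ ∈ WSet X p) {x y : X} (hx : (u x, v x) ∈ interior S) (hy : (u y, v y) ∈ interior S) :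
    Φ μ (voronoiCell x y) = μ (voronoiCell x y) := by
  rcases eq_or_ne x y with rfl | hxy
  · simp [voronoiCell]
  have h (a b : ℝ≥0∞) (hab : a + b = 1) :
      transportCost p (Φ μ) (twoPoint a b x y) = transportCost p μ (twoPoint a b x y) := by
    have := hΦ.cost_eq μ hμ _ (twoPoint_mem_WSet hp hab x y)
    rwa [hΦ.twoPoint_eq hp c hab hx hy] at this
  exact le_antisymm (measure_voronoiCell_le hp hμ (hΦ.mem hμ) hxy h)
    (measure_voronoiCell_le hp (hΦ.mem hμ) hμ hxy fun a b hab => (h a b hab).symm)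

lemma measure_halfPlane_eq (hp : 1 ≤ p) (hΦ : FixesDiracs p Φ) (c : IsDiagonalChart u v S)
    (hμ : μ ∈ WSet X p) {s t : ℝ} (hst : (s, t) ∈ interior S) :
    Φ μ {z | s < u z} = μ {z | s < u z} := by
  have hst' : (s, t) ∈ interior (interior S) := by rwa [interior_interior]
  obtain ⟨r, hr, hbox⟩ := exists_box_subset_of_mem_interior hst'
  have hy : (s - r, t) ∈ interior S := hbox _ _ (by simp [abs_of_pos hr]) (by simpa using hr.le)
  have hx : (s + r, t) ∈ interior S := hbox _ _ (by simp [abs_of_pos hr]) (by simpa using hr.le)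
  obtain ⟨x, hxu, hxv⟩ := c.exists_eq _ (interior_subset hx)
  obtain ⟨y, hyu, hyv⟩ := c.exists_eq _ (interior_subset hy)
  have hcell : voronoiCell x y = {z | s < u z} := by
    ext z
    simp only [voronoiCell, mem_ofPred_eq, c.dist_eq, hxu, hxv, hyu, hyv]
    rw [div_lt_div_iff_of_pos_right two_pos, add_lt_add_iff_right, ← sub_sub, ← sub_add,
      abs_sub_lt_abs_add_iff hr, sub_pos]
  rw [← hcell]
  exact hΦ.measure_voronoiCell_eq hp c hμ (by rwa [hxu, hxv]) (by rwa [hyu, hyv])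

lemma measure_quadrant_eq (hp : 1 ≤ p) (hΦ : FixesDiracs p Φ) (c : IsDiagonalChart u v S)
    (hμ : μ ∈ WSet X p) {s t : ℝ} (hst : (s, t) ∈ interior S) :
    Φ μ {z | s < u z ∧ t < v z} = μ {z | s < u z ∧ t < v z} := by
  have hst' : (s, t) ∈ interior (interior S) := by rwa [interior_interior]
  obtain ⟨k, hk, hbox⟩ := exists_box_subset_of_mem_interior hst'
  obtain ⟨y, hyu, hyv⟩ := c.exists_eq _ (interior_subset hst)
  let B : ℝ → Set X := fun r => {z | 0 < u z - s ∧ 0 < v z - t ∧ r < u z - s + (v z - t)}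
  have hB (r : ℝ) (hr : 0 < r) (hrk : r ≤ k) : Φ μ (B r) = μ (B r) := by
    have hx : (s + r, t + r) ∈ interior S := hbox _ _ (by simpa [abs_of_pos hr] using hrk)
      (by simpa [abs_of_pos hr] using hrk)
    obtain ⟨x, hxu, hxv⟩ := c.exists_eq _ (interior_subset hx)
    have hcell : voronoiCell x y = B r := by
      ext z
      simp only [voronoiCell, mem_ofPred_eq, c.dist_eq, hxu, hxv, hyu, hyv, B]
      rw [div_lt_div_iff_of_pos_right two_pos, ← sub_sub, ← sub_sub,
        abs_sub_add_abs_sub_lt_iff hr]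
    rw [← hcell]
    exact hΦ.measure_voronoiCell_eq hp c hμ (by rwa [hxu, hxv]) (by rwa [hyu, hyv])
  have hunion : {z | s < u z ∧ t < v z} = ⋃ n : ℕ, B (k / (n + 1)) := by
    ext z
    simp only [B, mem_iUnion, mem_ofPred_eq, sub_pos, exists_and_left, ← and_assoc,
      iff_self_and, and_imp]
    intro hs ht
    obtain ⟨n, hn⟩ := exists_nat_one_div_lt (div_pos (add_pos (sub_pos.2 hs) (sub_pos.2 ht)) hk)
    refine ⟨n, ?_⟩
    rwa [lt_div_iff₀ hk, one_div_mul_eq_div] at hn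
  have hmono : Monotone fun n : ℕ => B (k / (n + 1)) := fun n m hnm z hz =>
    ⟨hz.1, hz.2.1, lt_of_le_of_lt (by gcongr) hz.2.2⟩
  rw [hunion, hmono.measure_iUnion, hmono.measure_iUnion]
  exact iSup_congr fun n => hB _ (by positivity) (div_le_self hk.le (by simp))

end FixesDiracs

section Quadrants

lemma isCountablySpanning_range_Ioi : IsCountablySpanning (range (Ioi : ℝ → Set ℝ)) := by
  refine ⟨fun n => Ioi (-(n : ℝ)), fun n => ⟨_, rfl⟩, eq_univ_of_forall fun x => ?_⟩
  obtain ⟨n, hn⟩ := exists_nat_gt (-x)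
  exact mem_iUnion.2 ⟨n, neg_lt.1 hn⟩

lemma measure_ext_of_Ioi_prod_Ioi {μ ν : Measure (ℝ × ℝ)} [IsProbabilityMeasure μ]
    [IsProbabilityMeasure ν] (h : ∀ s t, μ (Ioi s ×ˢ Ioi t) = ν (Ioi s ×ˢ Ioi t)) : μ = ν := by
  refine ext_of_generate_finite (image2 (· ×ˢ ·) (range Ioi) (range Ioi)) ?_ ?_ ?_ (by simp)
  · rw [← generateFrom_prod_eq isCountablySpanning_range_Ioi isCountablySpanning_range_Ioi,
      ← borel_eq_generateFrom_Ioi, ← BorelSpace.measurable_eq]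
  · exact isPiSystem_Ioi.prod isPiSystem_Ioi
  · rintro _ ⟨_, ⟨s, rfl⟩, _, ⟨t, rfl⟩, rfl⟩
    exact h s t

lemma measure_lt_inter_eq_of_forall {X : Type*} [MeasurableSpace X] {μ ν : Measure X} {f : X → ℝ}
    {A : Set X} {s k : ℝ} (hk : 0 < k)
    (h : ∀ τ ∈ Ioo 0 k, μ ({z | s + τ < f z} ∩ A) = ν ({z | s + τ < f z} ∩ A)) :
    μ ({z | s < f z} ∩ A) = ν ({z | s < f z} ∩ A) := by
  obtain ⟨τ, hτ, hmem, hlim⟩ := exists_seq_strictAnti_tendsto' hk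
  have hunion : {z | s < f z} ∩ A = ⋃ n, {z | s + τ n < f z} ∩ A := by
    rw [← iUnion_inter]
    congr 1
    ext z
    simp only [mem_ofPred_eq, mem_iUnion]
    constructor
    · intro hz
      exact (hlim.eventually_lt_const (sub_pos.2 hz)).exists.imp fun n hn => lt_sub_iff_add_lt'.1 hn
    · rintro ⟨n, hn⟩
      linarith [(hmem n).1]
  have hmono : Monotone fun n => {z | s + τ n < f z} ∩ A := fun i j hij =>
    inter_subset_inter_left _ fun z hz =>
      (add_le_add_right (hτ.antitone hij) s).trans_lt hz
  rw [hunion, hmono.measure_iUnion, hmono.measure_iUnion]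
  exact iSup_congr fun n => h _ (hmem n)

namespace IsDiagonalChart

variable {X : Type*} [MetricSpace X] {u v : X → ℝ} {S : Set (ℝ × ℝ)}

lemma isInducing (c : IsDiagonalChart u v S) : IsInducing fun x => (u x, v x) := by
  have hanti : AntilipschitzWith 1 fun x => (u x, v x) := by
    refine AntilipschitzWith.of_le_mul_dist fun x y => ?_
    rw [c.dist_eq, Prod.dist_eq, Real.dist_eq, Real.dist_eq, NNReal.coe_one, one_mul]
    linarith [le_max_left |u x - u y| |v x - v y|, le_max_right |u x - u y| |v x - v y|]
  have hlip : LipschitzWith 2 fun x => (u x, v x) := by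
    refine LipschitzWith.of_dist_le_mul fun x y => ?_
    rw [c.dist_eq, Prod.dist_eq, Real.dist_eq, Real.dist_eq, NNReal.coe_ofNat]
    refine max_le ?_ ?_ <;> linarith [abs_nonneg (u x - u y), abs_nonneg (v x - v y)]
  exact (hanti.isUniformInducing hlip.uniformContinuous).isInducing

lemma measure_ext_of_quadrant [MeasurableSpace X] [BorelSpace X] {μ ν : Measure X}
    [IsProbabilityMeasure μ] [IsProbabilityMeasure ν] (c : IsDiagonalChart u v S)
    (h : ∀ s t, μ {z | s < u z ∧ t < v z} = ν {z | s < u z ∧ t < v z}) : μ = ν := by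
  have hm : Measurable fun x => (u x, v x) := c.isInducing.continuous.measurable
  have := Measure.isProbabilityMeasure_map (μ := μ) hm.aemeasurable
  have := Measure.isProbabilityMeasure_map (μ := ν) hm.aemeasurable
  have hmap : μ.map (fun x => (u x, v x)) = ν.map fun x => (u x, v x) := by
    refine measure_ext_of_Ioi_prod_Ioi fun s t => ?_
    rw [Measure.map_apply hm (measurableSet_Ioi.prod measurableSet_Ioi),
      Measure.map_apply hm (measurableSet_Ioi.prod measurableSet_Ioi)]
    exact h s t
  ext A hA
  have hcomap : ‹MeasurableSpace X› =
      MeasurableSpace.comap (fun x => (u x, v x)) inferInstance := by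
    rw [BorelSpace.measurable_eq (α := X), c.isInducing.eq_induced, borel_comap,
      BorelSpace.measurable_eq (α := ℝ × ℝ)]
  rw [hcomap] at hA
  obtain ⟨B, hB, rfl⟩ := hA
  rw [← Measure.map_apply hm hB, ← Measure.map_apply hm hB, hmap]

end IsDiagonalChart

end Quadrants

section Diamond

/-- The image of the square `[-1, 1]²` under the diagonal coordinates `(x + y, x - y)`. -/
def diamond : Set (ℝ × ℝ) := {q | |q.1| + |q.2| ≤ 2}

lemma preimage_swap_diamond : Prod.swap ⁻¹' diamond = diamond := by
  ext ⟨s, t⟩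
  simp [diamond, add_comm]

lemma mem_interior_diamond {s t : ℝ} (h : |s| + |t| < 2) : (s, t) ∈ interior diamond := by
  have hopen : IsOpen {q : ℝ × ℝ | |q.1| + |q.2| < 2} := isOpen_lt (by fun_prop) continuous_const
  have hsub : {q : ℝ × ℝ | |q.1| + |q.2| < 2} ⊆ diamond :=
    fun _ hq => (mem_ofPred_eq.mp hq).le
  exact interior_maximal hsub hopen h

end Diamond

namespace FixesDiracs

variable {X : Type*} [MetricSpace X] [MeasurableSpace X] [SecondCountableTopology X] {u v : X → ℝ}
  {p : ℝ} {μ : Measure X} {Φ : Measure X → Measure X}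

theorem eq_self_of_univ [BorelSpace X] (hp : 1 ≤ p) (hΦ : FixesDiracs p Φ)
    (c : IsDiagonalChart u v univ) (hμ : μ ∈ WSet X p) : Φ μ = μ := by
  have := hμ.1
  have := (hΦ.mem hμ).1
  exact c.measure_ext_of_quadrant fun s t => hΦ.measure_quadrant_eq hp c hμ (by simp)

lemma measure_halfPlane_eq_of_diamond [OpensMeasurableSpace X] (hp : 1 ≤ p)
    (hΦ : FixesDiracs p Φ) (c : IsDiagonalChart u v diamond) (hμ : μ ∈ WSet X p) (s : ℝ) :
    Φ μ {z | s < u z} = μ {z | s < u z} := by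
  have := hμ.1
  have := (hΦ.mem hμ).1
  have hu (z : X) : |u z| ≤ 2 := (le_add_of_nonneg_right (abs_nonneg _)).trans (c.mem z)
  have hint (s : ℝ) (hs : |s| < 2) : Φ μ {z | s < u z} = μ {z | s < u z} :=
    hΦ.measure_halfPlane_eq hp c hμ (t := 0) (mem_interior_diamond (by simpa using hs))
  rcases lt_trichotomy s (-2) with hs | rfl | hs
  · have : {z | s < u z} = univ := eq_univ_of_forall fun z => hs.trans_le (abs_le.1 (hu z)).1
    rw [this, measure_univ, measure_univ]
  · have := measure_lt_inter_eq_of_forall (μ := Φ μ) (ν := μ) (f := u) (A := univ) (s := -2)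
      one_pos fun τ hτ => by
        simpa using hint (-2 + τ) (abs_lt.2 ⟨by linarith [hτ.1], by linarith [hτ.2]⟩)
    simpa using this
  · rcases lt_or_ge s 2 with hs' | hs'
    · exact hint s (abs_lt.2 ⟨hs, hs'⟩)
    · have : {z | s < u z} = ∅ := eq_empty_of_forall_notMem fun z hz =>
        ((abs_le.1 (hu z)).2.trans hs').not_gt hz
      rw [this, measure_empty, measure_empty]

lemma measure_quadrant_eq_of_diamond_of_neg [OpensMeasurableSpace X] (hp : 1 ≤ p)
    (hΦ : FixesDiracs p Φ) (c : IsDiagonalChart u v diamond) (hμ : μ ∈ WSet X p) {s t : ℝ}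
    (hs : s < 0) (ht : t < 0) : Φ μ {z | s < u z ∧ t < v z} = μ {z | s < u z ∧ t < v z} := by
  have := hμ.1
  have := (hΦ.mem hμ).1
  have hint (s : ℝ) (hs : s < 0) (hst : -2 < s + t) :
      Φ μ {z | s < u z ∧ t < v z} = μ {z | s < u z ∧ t < v z} :=
    hΦ.measure_quadrant_eq hp c hμ (mem_interior_diamond (by
      rw [abs_of_neg hs, abs_of_neg ht]; linarith))
  rcases lt_trichotomy (s + t) (-2) with hst | hst | hst
  · have hunion : {z | s < u z} ∪ {z | t < v z} = univ := by
      refine eq_univ_of_forall fun z => or_iff_not_imp_left.2 fun hz => ?_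
      have := c.mem z
      simp only [diamond, mem_ofPred_eq, not_lt] at this hz ⊢
      linarith [neg_abs_le (u z), neg_abs_le (v z)]
    have key (ρ : Measure X) [IsProbabilityMeasure ρ] :
        1 + ρ {z | s < u z ∧ t < v z} = ρ {z | s < u z} + ρ {z | t < v z} := by
      rw [← measure_union_add_inter _ (measurableSet_lt measurable_const c.measurable_right),
        hunion, measure_univ]
      rfl
    have c' : IsDiagonalChart v u diamond := preimage_swap_diamond ▸ c.swap
    refine (ENNReal.add_right_inj ENNReal.one_ne_top).1 ?_
    rw [key, key, hΦ.measure_halfPlane_eq_of_diamond hp c hμ,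
      hΦ.measure_halfPlane_eq_of_diamond hp c' hμ]
  · exact measure_lt_inter_eq_of_forall (A := {z | t < v z}) (neg_pos.2 hs) fun τ hτ =>
      hint _ (by linarith [hτ.2]) (by linarith [hτ.1])
  · exact hint s hs hst

theorem eq_self_of_diamond [BorelSpace X] (hp : 1 ≤ p) (hΦ : FixesDiracs p Φ)
    (c : IsDiagonalChart u v diamond) (hμ : μ ∈ WSet X p) : Φ μ = μ := by
  have := hμ.1
  have := (hΦ.mem hμ).1
  have c' : IsDiagonalChart v u diamond := preimage_swap_diamond ▸ c.swap
  have hmem (z : X) : |u z| + |v z| ≤ 2 := c.mem z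
  refine c.measure_ext_of_quadrant fun s t => ?_
  rcases lt_or_ge (|s| + |t|) 2 with hst | hst
  · exact hΦ.measure_quadrant_eq hp c hμ (mem_interior_diamond hst)
  rcases lt_or_ge s 0 with hs | hs <;> rcases lt_or_ge t 0 with ht | ht
  · exact hΦ.measure_quadrant_eq_of_diamond_of_neg hp c hμ hs ht
  · rw [abs_of_neg hs, abs_of_nonneg ht] at hst
    have : {z | s < u z ∧ t < v z} = {z | t < v z} := by
      ext z
      simp only [mem_ofPred_eq, and_iff_right_iff_imp]
      intro hz
      linarith [hmem z, neg_abs_le (u z), le_abs_self (v z)]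
    rw [this, hΦ.measure_halfPlane_eq_of_diamond hp c' hμ]
  · rw [abs_of_nonneg hs, abs_of_neg ht] at hst
    have : {z | s < u z ∧ t < v z} = {z | s < u z} := by
      ext z
      simp only [mem_ofPred_eq, and_iff_left_iff_imp]
      intro hz
      linarith [hmem z, neg_abs_le (v z), le_abs_self (u z)]
    rw [this, hΦ.measure_halfPlane_eq_of_diamond hp c hμ]
  · rw [abs_of_nonneg hs, abs_of_nonneg ht] at hst
    have : {z | s < u z ∧ t < v z} = ∅ := eq_empty_of_forall_notMem fun z hz => by
      linarith [hz.1, hz.2, hmem z, le_abs_self (u z), le_abs_self (v z)]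
    rw [this, measure_empty, measure_empty]

end FixesDiracs

/-! ### Extendable geodesics -/

section RadonInequality

variable {p a b s t : ℝ}

lemma add_rpow_eq_mul_rpow_convexCombination (ha : 0 < a) (hb : 0 < b) (hs : 0 ≤ s)
    (ht : 0 ≤ t) :
    (s + t) ^ p = (a + b) ^ p * (a / (a + b) * (s / a) + b / (a + b) * (t / b)) ^ p := by
  rw [← Real.mul_rpow (by positivity) (by positivity)]
  congr 1
  field_simp

lemma add_rpow_le_mul_convexCombination_rpow (hp : 1 ≤ p) (ha : 0 < a) (hb : 0 < b) (hs : 0 ≤ s)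
    (ht : 0 ≤ t) :
    (s + t) ^ p ≤ (a + b) ^ p * (a / (a + b) * (s / a) ^ p + b / (a + b) * (t / b) ^ p) := by
  rw [add_rpow_eq_mul_rpow_convexCombination ha hb hs ht]
  exact mul_le_mul_of_nonneg_left ((convexOn_rpow hp).2 (div_nonneg hs ha.le)
    (div_nonneg ht hb.le) (by positivity) (by positivity) (by field_simp)) (by positivity)

lemma div_eq_div_of_add_rpow_eq (hp : 1 < p) (ha : 0 < a) (hb : 0 < b) (hs : 0 ≤ s) (ht : 0 ≤ t)
    (h : (s + t) ^ p = (a + b) ^ p * (a / (a + b) * (s / a) ^ p + b / (a + b) * (t / b) ^ p)) :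
    s / a = t / b := by
  by_contra hne
  rw [add_rpow_eq_mul_rpow_convexCombination ha hb hs ht] at h
  exact ((strictConvexOn_rpow hp).2 (div_nonneg hs ha.le) (div_nonneg ht hb.le) hne
    (by positivity) (by positivity) (by field_simp)).ne (mul_left_cancel₀ (by positivity) h)

/-- The equality case of Minkowski's inequality. -/
lemma ae_div_eq_div_of_add_rpow_le_lintegral {α : Type*} [MeasurableSpace α] {ρ : Measure α}
    {f g : α → ℝ} (hp : 1 < p) (ha : 0 < a) (hb : 0 < b) (hf : Measurable f) (hg : Measurable g)
    (hf₀ : ∀ x, 0 ≤ f x) (hg₀ : ∀ x, 0 ≤ g x)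
    (hfa : ∫⁻ x, ENNReal.ofReal (f x ^ p) ∂ρ = ENNReal.ofReal (a ^ p))
    (hgb : ∫⁻ x, ENNReal.ofReal (g x ^ p) ∂ρ = ENNReal.ofReal (b ^ p))
    (h : ENNReal.ofReal ((a + b) ^ p) ≤ ∫⁻ x, ENNReal.ofReal ((f x + g x) ^ p) ∂ρ) :
    ∀ᵐ x ∂ρ, f x / a = g x / b := by
  set G : α → ℝ := fun x =>
    (a + b) ^ p * (a / (a + b) * (f x / a) ^ p + b / (a + b) * (g x / b) ^ p) with hG
  have hG₀ (x) : 0 ≤ G x := by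
    have := hf₀ x
    have := hg₀ x
    positivity
  have hle (x) : (f x + g x) ^ p ≤ G x :=
    add_rpow_le_mul_convexCombination_rpow hp.le ha hb (hf₀ x) (hg₀ x)
  have hGsum (x) : ENNReal.ofReal (G x) =
      ENNReal.ofReal ((a + b) ^ p * (a / (a + b)) / a ^ p) * ENNReal.ofReal (f x ^ p) +
      ENNReal.ofReal ((a + b) ^ p * (b / (a + b)) / b ^ p) * ENNReal.ofReal (g x ^ p) := by
    have := hf₀ x
    have := hg₀ x
    rw [← ENNReal.ofReal_mul (by positivity), ← ENNReal.ofReal_mul (by positivity),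
      ← ENNReal.ofReal_add (by positivity) (by positivity), hG]
    simp only [Real.div_rpow (hf₀ x) ha.le, Real.div_rpow (hg₀ x) hb.le]
    ring_nf
  have hGint : ∫⁻ x, ENNReal.ofReal (G x) ∂ρ = ENNReal.ofReal ((a + b) ^ p) := by
    simp only [hGsum]
    rw [lintegral_add_left (by fun_prop), lintegral_const_mul _ (by fun_prop),
      lintegral_const_mul _ (by fun_prop), hfa, hgb, ← ENNReal.ofReal_mul (by positivity),
      ← ENNReal.ofReal_mul (by positivity), ← ENNReal.ofReal_add (by positivity) (by positivity)]
    congr 1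
    field_simp
  have hae := ae_eq_of_ae_le_of_lintegral_le
    (ae_of_all ρ fun x => ENNReal.ofReal_le_ofReal (hle x))
    (((lintegral_mono fun x => ENNReal.ofReal_le_ofReal (hle x)).trans_lt
      (hGint.trans_lt ENNReal.ofReal_lt_top)).ne) (by fun_prop) (hGint.trans_le h)
  filter_upwards [hae] with x hx
  have : 0 ≤ (f x + g x) ^ p := Real.rpow_nonneg (add_nonneg (hf₀ x) (hg₀ x)) p
  exact div_eq_div_of_add_rpow_eq hp ha hb (hf₀ x) (hg₀ x)
    ((ENNReal.ofReal_eq_ofReal_iff this (hG₀ x)).1 hx)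

end RadonInequality

section GeodesicExtension

lemma ofReal_dist_rpow {X : Type*} [PseudoMetricSpace X] {p : ℝ} (hp : 0 ≤ p) (x y : X) :
    ENNReal.ofReal (dist x y ^ p) = edist x y ^ p := by
  rw [edist_dist, ENNReal.ofReal_rpow_of_nonneg dist_nonneg hp]

variable {X : Type*} [MetricSpace X] [MeasurableSpace X]

/-- Every geodesic of the `p`-Wasserstein space issuing from `μ` extends beyond its endpoint `ν`,
expressed by equality in the triangle inequality for `μ, ν` and some `η ≠ ν`. -/
def IsGeodesicallyExtendable (p : ℝ) (μ : Measure X) : Prop :=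
  ∀ ν ∈ WSet X p, ∃ η ∈ WSet X p, η ≠ ν ∧
    transportCost p μ ν ^ (1 / p) + transportCost p ν η ^ (1 / p) ≤ transportCost p μ η ^ (1 / p)

variable {p : ℝ} {μ η : Measure X} {x : X}

lemma IsCostIsometry.isGeodesicallyExtendable {Φ : Measure X → Measure X}
    (h : IsCostIsometry p Φ) (hμ : μ ∈ WSet X p) (he : IsGeodesicallyExtendable p μ) :
    IsGeodesicallyExtendable p (Φ μ) := by
  intro ν' hν'
  obtain ⟨ν, hν, rfl⟩ := h.bijOn.surjOn hν'
  obtain ⟨η, hη, hne, hle⟩ := he ν hν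
  refine ⟨Φ η, h.mem hη, fun he => hne (h.bijOn.injOn hη hν he), ?_⟩
  rwa [h.cost_eq _ hμ _ hν, h.cost_eq _ hν _ hη, h.cost_eq _ hμ _ hη]

lemma exists_eq_dirac_of_ae_dist_eq [SecondCountableTopology X] [IsProbabilityMeasure μ]
    (h : ∀ x, ∃ c, ∀ᵐ z ∂μ, dist z x = c) : ∃ y, μ = dirac y := by
  choose c hc using h
  have : Nonempty X := μ.nonempty_of_neZero
  obtain ⟨D, hDcount, hDdense⟩ := TopologicalSpace.exists_countable_dense X
  have hD : ∀ᵐ z ∂μ, ∀ x ∈ D, dist z x = c x := (ae_ball_iff hDcount).2 fun x _ => hc x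
  obtain ⟨y, hy⟩ := hD.exists
  refine ⟨y, eq_dirac_of_ae_eq ?_⟩
  filter_upwards [hD] with z hz
  have heq : (fun x => dist z x) = fun x => dist y x :=
    Continuous.ext_on hDdense (by fun_prop) (by fun_prop) fun x hx =>
      (hz x hx).trans (hy x hx).symm
  simpa using congrFun heq y

lemma lintegral_edist_rpow_pos [BorelSpace X] (hp : 0 < p) [IsProbabilityMeasure η]
    (h : η ≠ dirac x) : 0 < ∫⁻ z, edist z x ^ p ∂η := by
  refine pos_iff_ne_zero.2 fun h₀ => h (eq_dirac_of_ae_eq ?_)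
  filter_upwards [(lintegral_eq_zero_iff (measurable_edist_rpow_right p x)).1 h₀] with z hz
  simpa [hp, hp.not_gt] using hz

lemma exists_pos_lintegral_edist_rpow_eq [BorelSpace X] (hp : 1 ≤ p) (hη : η ∈ WSet X p)
    (hne : η ≠ dirac x) : ∃ a : ℝ, 0 < a ∧ ∫⁻ z, edist z x ^ p ∂η = ENNReal.ofReal (a ^ p) := by
  have := hη.1
  have hp₀ : 0 < p := by linarith
  have hfin := (WSet.lintegral_edist_rpow_lt_top hp hη x).ne
  have hpos := ENNReal.toReal_pos (lintegral_edist_rpow_pos hp₀ hne).ne' hfin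
  refine ⟨(∫⁻ z, edist z x ^ p ∂η).toReal ^ (1 / p), Real.rpow_pos_of_pos hpos _, ?_⟩
  rw [← Real.rpow_mul hpos.le, one_div_mul_cancel hp₀.ne', Real.rpow_one,
    ENNReal.ofReal_toReal hfin]

variable [BorelSpace X] [SecondCountableTopology X]

lemma ae_dist_eq_of_transportCost_dirac_add_le (hp : 1 < p) (hμ : μ ∈ WSet X p)
    (hη : η ∈ WSet X p) (hne : η ≠ dirac x)
    (h : transportCost p μ (dirac x) ^ (1 / p) + transportCost p (dirac x) η ^ (1 / p) ≤
      transportCost p μ η ^ (1 / p)) :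
    ∃ c, ∀ᵐ z ∂μ, dist z x = c := by
  have := hμ.1
  have := hη.1
  have hp₀ : 0 < p := by linarith
  rcases eq_or_ne μ (dirac x) with rfl | hne'
  · exact ⟨0, by filter_upwards [ae_eq_dirac_point x] with z hz using by simp [hz]⟩
  have hm := measurable_edist_rpow_right p x
  obtain ⟨a, ha, haint⟩ := exists_pos_lintegral_edist_rpow_eq hp.le hμ hne'
  obtain ⟨b, hb, hbint⟩ := exists_pos_lintegral_edist_rpow_eq hp.le hη hne
  have hroot (c : ℝ) (hc : 0 < c) : ENNReal.ofReal (c ^ p) ^ (1 / p) = ENNReal.ofReal c := by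
    rw [← ENNReal.ofReal_rpow_of_pos hc, ← ENNReal.rpow_mul, mul_one_div_cancel hp₀.ne',
      ENNReal.rpow_one]
  rw [transportCost_dirac_right, transportCost_dirac_left, haint, hbint, hroot a ha, hroot b hb,
    ← ENNReal.ofReal_add ha.le hb.le, one_div, ENNReal.le_rpow_inv_iff hp₀,
    ENNReal.ofReal_rpow_of_pos (by positivity)] at h
  have hae : ∀ᵐ q ∂(μ.prod η), dist q.1 x / a = dist q.2 x / b := by
    refine ae_div_eq_div_of_add_rpow_le_lintegral hp ha hb (by fun_prop) (by fun_prop)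
      (fun _ => dist_nonneg) (fun _ => dist_nonneg) ?_ ?_
      ((h.trans (transportCost_le (isCoupling_prod μ η))).trans (lintegral_mono fun q => ?_))
    · simpa only [ofReal_dist_rpow hp₀.le, (isCoupling_prod μ η).lintegral_fst hm] using haint
    · simpa only [ofReal_dist_rpow hp₀.le, (isCoupling_prod μ η).lintegral_snd hm] using hbint
    · rw [← ofReal_dist_rpow hp₀.le]
      exact ENNReal.ofReal_le_ofReal
        (Real.rpow_le_rpow dist_nonneg (dist_triangle_right _ _ _) hp₀.le)
  have hmeas : MeasurableSet {q : X × X | dist q.1 x / a = dist q.2 x / b} :=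
    measurableSet_eq_fun (by fun_prop) (by fun_prop)
  obtain ⟨y, hy⟩ := ((Measure.ae_ae_comm hmeas).1 (Measure.ae_ae_of_ae_prod hae)).exists
  exact ⟨dist y x / b * a, by filter_upwards [hy] with z hz; rw [← hz, div_mul_cancel₀ _ ha.ne']⟩

lemma IsGeodesicallyExtendable.exists_eq_dirac (hp : 1 < p) (hμ : μ ∈ WSet X p)
    (h : IsGeodesicallyExtendable p μ) : ∃ y, μ = dirac y := by
  have := hμ.1
  refine exists_eq_dirac_of_ae_dist_eq fun x => ?_
  obtain ⟨η, hη, hne, hle⟩ := h _ (dirac_mem_WSet (by linarith) x)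
  exact ae_dist_eq_of_transportCost_dirac_add_le hp hμ hη hne hle

end GeodesicExtension

section NormedSpace

lemma edist_homothety_two_center {E : Type*} [NormedAddCommGroup E] [NormedSpace ℝ E]
    (x z : E) : edist (AffineMap.homothety x (2 : ℝ) z) x = 2 * edist z x := by
  rw [edist_nndist, nndist_homothety_center, edist_nndist, nndist_comm x z]
  simp

lemma edist_self_homothety_two {E : Type*} [NormedAddCommGroup E] [NormedSpace ℝ E]
    (x z : E) : edist z (AffineMap.homothety x (2 : ℝ) z) = edist z x := by
  rw [edist_nndist, nndist_self_homothety, edist_nndist, nndist_comm x z]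
  norm_num

lemma lintegral_edist_rpow_map_homothety_two {E : Type*} [NormedAddCommGroup E]
    [NormedSpace ℝ E] [MeasurableSpace E] [BorelSpace E] {p : ℝ} (hp : 0 ≤ p) (ν : Measure E)
    (x : E) :
    ∫⁻ z, edist z x ^ p ∂(ν.map (AffineMap.homothety x (2 : ℝ))) =
      2 ^ p * ∫⁻ z, edist z x ^ p ∂ν := by
  have hm := measurable_edist_rpow_right p x
  rw [lintegral_map hm (AffineMap.homothety_continuous x (2 : ℝ)).measurable,
    ← lintegral_const_mul _ hm]
  simp only [edist_homothety_two_center, ENNReal.mul_rpow_of_nonneg _ _ hp]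

variable {E : Type*} [NormedAddCommGroup E] [NormedSpace ℝ E] [MeasurableSpace E] [BorelSpace E]
  [SecondCountableTopology E] {p : ℝ}

lemma transportCost_map_homothety_two_le (p : ℝ) (ν : Measure E) (x : E) :
    transportCost p ν (ν.map (AffineMap.homothety x (2 : ℝ))) ≤ ∫⁻ z, edist z x ^ p ∂ν := by
  simpa [edist_self_homothety_two] using transportCost_map_map_le p ν measurable_id
    (AffineMap.homothety_continuous x (2 : ℝ)).measurable

lemma isGeodesicallyExtendable_dirac [Nontrivial E] (hp : 1 ≤ p) (x : E) :
    IsGeodesicallyExtendable p (dirac x) := by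
  intro ν hν
  have := hν.1
  have hp₀ : 0 < p := by linarith
  rcases eq_or_ne ν (dirac x) with rfl | hne
  · obtain ⟨y, hy⟩ := exists_ne x
    refine ⟨dirac y, dirac_mem_WSet hp₀ y, mt dirac_eq_dirac_iff.1 hy, ?_⟩
    rw [transportCost_self hp₀, ENNReal.zero_rpow_of_pos (by positivity), zero_add]
  have hfin := (WSet.lintegral_edist_rpow_lt_top hp hν x).ne
  have hint := lintegral_edist_rpow_map_homothety_two hp₀.le ν x
  have hprob : IsProbabilityMeasure (ν.map (AffineMap.homothety x (2 : ℝ))) :=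
    Measure.isProbabilityMeasure_map (AffineMap.homothety_continuous x (2 : ℝ)).aemeasurable
  refine ⟨_, ⟨hprob, x, ?_⟩, fun heq => ?_, ?_⟩
  · rw [hint]
    exact ENNReal.mul_lt_top (ENNReal.rpow_lt_top_of_nonneg hp₀.le (by simp)) hfin.lt_top
  · rw [heq, eq_comm, ENNReal.mul_eq_right (lintegral_edist_rpow_pos hp₀ hne).ne' hfin] at hint
    exact (ENNReal.one_lt_rpow ENNReal.one_lt_two hp₀).ne' hint
  · rw [transportCost_dirac_left, transportCost_dirac_left, hint,
      ENNReal.mul_rpow_of_nonneg _ _ (by positivity), ← ENNReal.rpow_mul,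
      mul_one_div_cancel hp₀.ne', ENNReal.rpow_one, two_mul]
    gcongr
    exact transportCost_map_homothety_two_le p ν x

lemma IsCostIsometry.exists_map_dirac_eq_of_one_lt [Nontrivial E] {Φ : Measure E → Measure E}
    (hp : 1 < p) (h : IsCostIsometry p Φ) (x : E) : ∃ y, Φ (dirac x) = dirac y :=
  have hx := dirac_mem_WSet (by linarith) x
  (h.isGeodesicallyExtendable hx (isGeodesicallyExtendable_dirac hp.le x)).exists_eq_dirac hp
    (h.mem hx)

end NormedSpace

/-! ### Geodesic extension for `p = 1` -/

section TriangleInequality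

lemma exists_gluing {X Y Z : Type*} [MeasurableSpace X] [MeasurableSpace Y] [MeasurableSpace Z]
    [StandardBorelSpace Y] [StandardBorelSpace Z] [Nonempty Y] [Nonempty Z]
    (π : Measure (X × Y)) (π' : Measure (X × Z)) [IsFiniteMeasure π] [IsFiniteMeasure π']
    (h : π.fst = π'.fst) : ∃ Γ : Measure (X × Y × Z),
      Γ.map (fun q => (q.1, q.2.1)) = π ∧ Γ.map (fun q => (q.1, q.2.2)) = π' := by
  refine ⟨π.fst ⊗ₘ (π.condKernel ×ₖ π'.condKernel), ?_, ?_⟩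
  · conv_rhs => rw [← π.disintegrate π.condKernel, ← Kernel.fst_prod π.condKernel π'.condKernel,
      Kernel.fst_eq, Measure.compProd_map measurable_fst]
    rfl
  · conv_rhs => rw [← π'.disintegrate π'.condKernel, ← h,
      ← Kernel.snd_prod π.condKernel π'.condKernel, Kernel.snd_eq,
      Measure.compProd_map measurable_snd]
    rfl

variable {X : Type*} [MetricSpace X] [MeasurableSpace X] [BorelSpace X]
  [SecondCountableTopology X]

lemma transportCost_one_triangle [StandardBorelSpace X] (μ η ν : Measure X)
    [IsProbabilityMeasure η] :
    transportCost 1 μ ν ≤ transportCost 1 μ η + transportCost 1 η ν := by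
  have : Nonempty X := η.nonempty_of_neZero
  rw [transportCost_comm 1 μ η]
  simp only [transportCost, ENNReal.iInf_add, ENNReal.add_iInf]
  refine le_iInf₂ fun π' hπ' => le_iInf₂ fun π hπ => ?_
  have hfin (ρ : Measure (X × X)) (ν : Measure X) (hρ : IsCoupling ρ η ν) : IsFiniteMeasure ρ :=
    ⟨by rw [hρ.measure_univ]; exact measure_lt_top η univ⟩
  have := hfin π _ hπ
  have := hfin π' _ hπ'
  obtain ⟨Γ, rfl, rfl⟩ := exists_gluing π π' (hπ.1.trans hπ'.1.symm)
  have hm := measurable_edist_rpow (X := X) 1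
  have hΓ : IsCoupling (Γ.map Prod.snd) μ ν := by
    constructor
    · rw [← hπ.2, Measure.map_map (by fun_prop) (by fun_prop),
        Measure.map_map (by fun_prop) (by fun_prop)]
      rfl
    · rw [← hπ'.2, Measure.map_map (by fun_prop) (by fun_prop),
        Measure.map_map (by fun_prop) (by fun_prop)]
      rfl
  refine (transportCost_le hΓ).trans ?_
  have hm₂ : Measurable fun q : X × X × X => edist q.1 q.2.2 ^ (1 : ℝ) :=
    hm.comp (measurable_fst.prodMk measurable_snd.snd)
  rw [lintegral_map hm (by fun_prop), lintegral_map hm (by fun_prop),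
    lintegral_map hm (by fun_prop), ← lintegral_add_right _ hm₂]
  refine lintegral_mono fun q => ?_
  simp only [ENNReal.rpow_one]
  exact edist_triangle_left _ _ _

end TriangleInequality

section OneSided

variable {X : Type*} [MeasurableSpace X]

lemma exists_ae_eq_const_of_ae_le_or_ae_ge {μ : Measure X} [IsProbabilityMeasure μ] {f : X → ℝ}
    (h : ∀ s, (∀ᵐ z ∂μ, f z ≤ s) ∨ ∀ᵐ z ∂μ, s ≤ f z) : ∃ a, ∀ᵐ z ∂μ, f z = a := by
  classical
  have hcut : ∀ᵐ z ∂μ, ∀ s : ℚ, if ∀ᵐ z ∂μ, f z ≤ s then f z ≤ s else s ≤ f z := by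
    refine ae_all_iff.2 fun s => ?_
    split_ifs with hs
    exacts [hs, (h s).resolve_left hs]
  obtain ⟨y, hy⟩ := hcut.exists
  refine ⟨f y, ?_⟩
  filter_upwards [hcut] with z hz
  by_contra hne
  rcases lt_or_gt_of_ne hne with hlt | hlt <;>
  · obtain ⟨s, hs₁, hs₂⟩ := exists_rat_btwn hlt
    have hys := hy s
    have hzs := hz s
    split_ifs at hys hzs <;> linarith

lemma ae_le_or_ae_ge_of_ae_abs_sub_eq {μ : Measure X} {f : X → ℝ} {a b : ℝ} (hab : a ≠ b)
    (h : ∀ᵐ z ∂μ, |f z - b| = |f z - a| + |a - b|) :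
    (∀ᵐ z ∂μ, f z ≤ a) ∨ ∀ᵐ z ∂μ, a ≤ f z := by
  have hside : ∀ᵐ z ∂μ, 0 ≤ f z - a ∧ 0 ≤ a - b ∨ f z - a ≤ 0 ∧ a - b ≤ 0 := by
    filter_upwards [h] with z hz
    rwa [← abs_add_eq_add_abs_iff, sub_add_sub_cancel]
  rcases hab.lt_or_gt with hlt | hlt
  · left
    filter_upwards [hside] with z hz
    rcases hz with hz | hz <;> linarith
  · right
    filter_upwards [hside] with z hz
    rcases hz with hz | hz <;> linarith

variable [MetricSpace X] {μ ν η : Measure X} {u v : X → ℝ}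

lemma isGeodesicallyExtendable_one_iff : IsGeodesicallyExtendable 1 μ ↔
    ∀ ν ∈ WSet X 1, ∃ η ∈ WSet X 1, η ≠ ν ∧ IsW1Between μ ν η := by
  simp only [IsGeodesicallyExtendable, IsW1Between, div_one, ENNReal.rpow_one]

variable [BorelSpace X]

lemma IsDiagonalChart.exists_measurable_map_right (c : IsDiagonalChart u v univ) {φ : ℝ → ℝ}
    (hφ : Measurable φ) :
    ∃ F : X → X, Measurable F ∧ (∀ z, u (F z) = u z) ∧ ∀ z, v (F z) = φ (v z) := by
  choose E hu hv using fun q => c.exists_eq q (mem_univ q)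
  have hE : LipschitzWith 1 E := by
    refine LipschitzWith.of_dist_le_mul fun q r => ?_
    rw [c.dist_eq, hu, hu, hv, hv, Prod.dist_eq, Real.dist_eq, Real.dist_eq, NNReal.coe_one]
    linarith [le_max_left |q.1 - r.1| |q.2 - r.2|, le_max_right |q.1 - r.1| |q.2 - r.2|]
  exact ⟨fun z => E (u z, φ (v z)), hE.continuous.measurable.comp
    (c.measurable_left.prodMk (hφ.comp c.measurable_right)), fun z => hu _, fun z => hv _⟩

variable [SecondCountableTopology X]

lemma exists_ae_dist_eq_of_isW1Between_dirac (hμ : μ ∈ WSet X 1) (hη : η ∈ WSet X 1) {x : X}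
    (hne : η ≠ dirac x) (h : IsW1Between μ (dirac x) η) :
    ∃ y ≠ x, ∀ᵐ z ∂μ, dist z y = dist z x + dist x y := by
  have := hμ.1
  have := hη.1
  have hm := measurable_edist_rpow_right 1 x
  have hsum : ∫⁻ q, (edist q.1 x ^ (1 : ℝ) + edist q.2 x ^ (1 : ℝ)) ∂μ.prod η =
      ∫⁻ z, edist z x ^ (1 : ℝ) ∂μ + ∫⁻ w, edist w x ^ (1 : ℝ) ∂η := by
    have hm₁ : Measurable fun q : X × X => edist q.1 x ^ (1 : ℝ) := hm.comp measurable_fst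
    rw [lintegral_add_left hm₁, (isCoupling_prod μ η).lintegral_fst hm,
      (isCoupling_prod μ η).lintegral_snd hm]
  have hae : ∀ᵐ q ∂μ.prod η, edist q.1 q.2 ^ (1 : ℝ) = edist q.1 x ^ (1 : ℝ) +
      edist q.2 x ^ (1 : ℝ) := by
    refine ae_eq_of_ae_le_of_lintegral_le (ae_of_all _ fun q => ?_) ?_
      ((hm.comp measurable_fst).add (hm.comp measurable_snd)).aemeasurable ?_
    · simpa only [ENNReal.rpow_one] using edist_triangle_right _ _ _
    · refine ne_top_of_le_ne_top (b := ∫⁻ z, edist z x ^ (1 : ℝ) ∂μ +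
        ∫⁻ w, edist w x ^ (1 : ℝ) ∂η) ?_ ((lintegral_mono fun q => ?_).trans_eq hsum)
      · exact ENNReal.add_ne_top.2 ⟨(WSet.lintegral_edist_rpow_lt_top le_rfl hμ x).ne,
          (WSet.lintegral_edist_rpow_lt_top le_rfl hη x).ne⟩
      · simpa only [ENNReal.rpow_one] using edist_triangle_right _ _ _
    · rw [hsum, ← transportCost_dirac_right, ← transportCost_dirac_left]
      exact h.trans (transportCost_le (isCoupling_prod μ η))
  have hmeas : MeasurableSet {q : X × X | edist q.1 q.2 ^ (1 : ℝ) = edist q.1 x ^ (1 : ℝ) +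
      edist q.2 x ^ (1 : ℝ)} :=
    measurableSet_eq_fun (by fun_prop) (by fun_prop)
  have hfreq : ∃ᶠ y in ae η, y ≠ x := fun h => hne (eq_dirac_of_ae_eq (by simpa using h))
  obtain ⟨y, hyx, hy⟩ :=
    (hfreq.and_eventually ((Measure.ae_ae_comm hmeas).1 (Measure.ae_ae_of_ae_prod hae))).exists
  refine ⟨y, hyx, ?_⟩
  filter_upwards [hy] with z hz
  simp only [ENNReal.rpow_one, edist_dist] at hz
  rwa [← ENNReal.ofReal_add dist_nonneg dist_nonneg,
    ENNReal.ofReal_eq_ofReal_iff dist_nonneg (by positivity), dist_comm y x] at hz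

lemma transportCost_one_map_add_lintegral_le {G : X → X} (hG : Measurable G) {s t : Set X}
    (hs : ∀ᵐ z ∂μ, z ∈ s) (ht : ∀ᵐ w ∂η, w ∈ t)
    (h : ∀ z ∈ s, ∀ w ∈ t, dist z (G w) + dist (G w) w = dist z w) :
    transportCost 1 μ (η.map G) + ∫⁻ w, edist (G w) w ∂η ≤ transportCost 1 μ η := by
  refine le_transportCost fun π hπ => ?_
  have hc : IsCoupling (π.map fun q => (q.1, G q.2)) μ (η.map G) := by
    rw [← hπ.1, ← hπ.2, Measure.map_map hG measurable_snd]
    exact isCoupling_map_prodMk π measurable_fst (hG.comp measurable_snd)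
  have hm : Measurable fun w => edist (G w) w := hG.edist measurable_id
  rw [← hπ.lintegral_snd hm]
  refine (add_le_add_left (transportCost_le hc) _).trans ?_
  rw [lintegral_map (measurable_edist_rpow 1) (by fun_prop),
    ← lintegral_add_right _ (by fun_prop)]
  refine lintegral_mono_ae ?_
  filter_upwards [hπ.ae_fst hs, hπ.ae_snd ht] with q hq₁ hq₂
  simp only [ENNReal.rpow_one, edist_dist]
  rw [← ENNReal.ofReal_add dist_nonneg dist_nonneg, h _ hq₁ _ hq₂]

end OneSided

section CommonLine

variable {X : Type*} [MetricSpace X] [MeasurableSpace X] [BorelSpace X]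
  [SecondCountableTopology X] {μ ν η : Measure X} {u v : X → ℝ} {a : ℝ}

lemma transportCost_one_add_lintegral_le_map {F G : X → X} (hF : Measurable F) (hG : Measurable G)
    (hGF : Function.LeftInverse G F) {s : Set X} (hs : ∀ᵐ z ∂μ, z ∈ s)
    (h : ∀ z ∈ s, ∀ w, dist z w + dist w (F w) = dist z (F w)) :
    transportCost 1 μ ν + ∫⁻ w, edist w (F w) ∂ν ≤ transportCost 1 μ (ν.map F) := by
  have hm : MeasurableSet {w | F (G w) = w} := measurableSet_eq_fun (hF.comp hG) measurable_id
  have hbound := transportCost_one_map_add_lintegral_le (η := ν.map F) (t := {w | F (G w) = w})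
    hG hs ((ae_map_iff hF.aemeasurable hm).2 (ae_of_all ν fun w => congrArg F (hGF w)))
    fun z hz w hw => by simpa only [mem_ofPred.1 hw] using h z hz (G w)
  have hm' : Measurable fun w => edist (G w) w := hG.edist measurable_id
  rw [map_map_of_leftInverse hF hG hGF, lintegral_map hm' hF] at hbound
  simpa only [hGF _] using hbound

lemma IsDiagonalChart.isGeodesicallyExtendable_of_ae_right_eq (c : IsDiagonalChart u v univ)
    (hμ : μ ∈ WSet X 1) (h : ∀ᵐ z ∂μ, v z = a) : IsGeodesicallyExtendable 1 μ := by
  refine isGeodesicallyExtendable_one_iff.2 fun ν hν => ?_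
  have := hν.1
  have hside : MeasurableSet {t | a ≤ t} := measurableSet_Ici
  obtain ⟨F, hF, huF, hvF⟩ := c.exists_measurable_map_right
    (φ := fun t => if a ≤ t then t + 1 else t - 1)
    (Measurable.ite hside (by fun_prop) (by fun_prop))
  obtain ⟨G, hG, huG, hvG⟩ := c.exists_measurable_map_right
    (φ := fun t => if a ≤ t then t - 1 else t + 1)
    (Measurable.ite hside (by fun_prop) (by fun_prop))
  have hGF : Function.LeftInverse G F := fun z => by
    refine c.eq_of_coord_eq (by rw [huG, huF]) ?_
    rw [hvG, hvF]
    grind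
  have hdist (z : X) : dist z (F z) = 1 / 2 := by
    rw [c.dist_eq, huF, hvF]
    split_ifs <;> simp
  have hmem : ν.map F ∈ WSet X 1 := by
    obtain ⟨x⟩ : Nonempty X := ν.nonempty_of_neZero
    refine WSet.map_mem le_rfl hν hF (C := ENNReal.ofReal (1 / 2)) (by simp) x x fun z => ?_
    rw [← hdist z, ← edist_dist, add_comm, edist_comm z (F z)]
    exact edist_triangle _ _ _
  have hlower : transportCost 1 μ ν + ENNReal.ofReal (1 / 2) ≤ transportCost 1 μ (ν.map F) := by
    have := transportCost_one_add_lintegral_le_map (ν := ν) hF hG hGF h fun z hz w => ?_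
    · simpa only [edist_dist, hdist, lintegral_const, measure_univ, mul_one] using this
    · have hz : v z = a := hz
      rw [c.dist_eq, c.dist_eq, c.dist_eq, huF, hvF, hz]
      split_ifs with hw
      · rw [abs_of_nonpos (sub_nonpos.2 hw), abs_of_nonpos (by linarith : a - (v w + 1) ≤ 0)]
        simp
        ring
      · have hw := (not_le.1 hw).le
        rw [abs_of_nonneg (sub_nonneg.2 hw), abs_of_nonneg (by linarith : 0 ≤ a - (v w - 1))]
        simp
        ring
  have hupper : transportCost 1 ν (ν.map F) ≤ ENNReal.ofReal (1 / 2) := by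
    simpa [edist_dist, hdist] using transportCost_map_map_le 1 ν measurable_id hF
  refine ⟨ν.map F, hmem, fun he => ?_, (add_le_add_right hupper _).trans hlower⟩
  rw [he] at hlower
  exact hlower.not_gt (ENNReal.lt_add_right (transportCost_lt_top le_rfl hμ hν).ne (by simp))

lemma IsDiagonalChart.ae_side_left_or_ae_side_right (c : IsDiagonalChart u v univ)
    (hμ : μ ∈ WSet X 1) (h : IsGeodesicallyExtendable 1 μ) (s t : ℝ) :
    ((∀ᵐ z ∂μ, u z ≤ s) ∨ ∀ᵐ z ∂μ, s ≤ u z) ∨ ((∀ᵐ z ∂μ, v z ≤ t) ∨ ∀ᵐ z ∂μ, t ≤ v z) := by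
  obtain ⟨x, rfl, rfl⟩ := c.exists_eq (s, t) (mem_univ _)
  obtain ⟨η, hη, hne, hbtw⟩ :=
    isGeodesicallyExtendable_one_iff.1 h _ (dirac_mem_WSet zero_lt_one x)
  obtain ⟨y, hyx, hy⟩ := exists_ae_dist_eq_of_isW1Between_dirac hμ hη hne hbtw
  have hcoord : ∀ᵐ z ∂μ, |u z - u y| = |u z - u x| + |u x - u y| ∧
      |v z - v y| = |v z - v x| + |v x - v y| := by
    filter_upwards [hy] with z hz
    rw [c.dist_eq, c.dist_eq, c.dist_eq] at hz
    constructor <;> linarith [abs_sub_le (u z) (u x) (u y), abs_sub_le (v z) (v x) (v y)]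
  by_cases hu : u x = u y
  · exact Or.inr (ae_le_or_ae_ge_of_ae_abs_sub_eq (fun hv => hyx (c.eq_of_coord_eq hu hv).symm)
      (hcoord.mono fun z hz => hz.2))
  · exact Or.inl (ae_le_or_ae_ge_of_ae_abs_sub_eq hu (hcoord.mono fun z hz => hz.1))

lemma IsDiagonalChart.exists_ae_right_eq_or_exists_ae_left_eq (c : IsDiagonalChart u v univ)
    (hμ : μ ∈ WSet X 1) (h : IsGeodesicallyExtendable 1 μ) :
    (∃ a, ∀ᵐ z ∂μ, v z = a) ∨ ∃ a, ∀ᵐ z ∂μ, u z = a := by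
  have := hμ.1
  have hside := c.ae_side_left_or_ae_side_right hμ h
  by_cases hu : ∀ s, (∀ᵐ z ∂μ, u z ≤ s) ∨ ∀ᵐ z ∂μ, s ≤ u z
  · exact Or.inr (exists_ae_eq_const_of_ae_le_or_ae_ge hu)
  · obtain ⟨s, hs⟩ := not_forall.1 hu
    exact Or.inl (exists_ae_eq_const_of_ae_le_or_ae_ge fun t => (hside s t).resolve_left hs)

lemma IsDiagonalChart.ae_right_eq_of_isW1Between [StandardBorelSpace X]
    (c : IsDiagonalChart u v univ) (hμ : μ ∈ WSet X 1) (hη : η ∈ WSet X 1) (hν : ν ∈ WSet X 1)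
    (hμa : ∀ᵐ z ∂μ, v z = a) (hνa : ∀ᵐ z ∂ν, v z = a) (h : IsW1Between μ η ν) :
    ∀ᵐ z ∂η, v z = a := by
  have := hη.1
  obtain ⟨G, hG, huG, hvG⟩ := c.exists_measurable_map_right (φ := fun _ => a) measurable_const
  have hsplit (z : X) (hz : v z = a) (w : X) : dist z (G w) + dist (G w) w = dist z w := by
    rw [c.dist_eq, c.dist_eq, c.dist_eq, huG, hvG, hz]
    simp
    ring
  have hμG := transportCost_one_map_add_lintegral_le (μ := μ) (η := η) (t := univ) hG hμa
    (by simp) fun z hz w _ => hsplit z hz w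
  have hνG := transportCost_one_map_add_lintegral_le (μ := ν) (η := η) (t := univ) hG hνa
    (by simp) fun z hz w _ => hsplit z hz w
  rw [transportCost_comm 1 ν, transportCost_comm 1 ν] at hνG
  have hprob : IsProbabilityMeasure (η.map G) := Measure.isProbabilityMeasure_map hG.aemeasurable
  have hfin : transportCost 1 μ (η.map G) + transportCost 1 (η.map G) ν ≠ ⊤ :=
    ne_top_of_le_ne_top (transportCost_lt_top le_rfl hμ hν).ne
      ((add_le_add (le_self_add.trans hμG) (le_self_add.trans hνG)).trans h)
  have hzero : ∫⁻ w, edist (G w) w ∂η = 0 := by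
    have hle := ((add_le_add hμG hνG).trans h).trans (transportCost_one_triangle μ (η.map G) ν)
    rw [add_add_add_comm, ← add_zero (transportCost 1 μ (η.map G) + _), add_assoc,
      ENNReal.add_le_add_iff_left hfin] at hle
    simpa using hle
  filter_upwards [(lintegral_eq_zero_iff (hG.edist measurable_id)).1 hzero] with w hw
  have hwG : G w = w := edist_eq_zero.1 hw
  rw [← hwG, hvG]

end CommonLine

section ExtendableBetween

variable {X : Type*} [MetricSpace X] [MeasurableSpace X] {μ ν ν₁ ν₂ : Measure X}
  {u v : X → ℝ} {Φ : Measure X → Measure X} {a b : ℝ≥0∞}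

/-- Every measure of the `1`-Wasserstein space lying between `μ` and `ν` is geodesically extendable.
In a plane with a diagonal chart this says that `μ` and `ν` are carried by a common coordinate line,
so it is a metric form of collinearity. -/
def ExtendableBetween (μ ν : Measure X) : Prop :=
  ∀ η ∈ WSet X 1, IsW1Between μ η ν → IsGeodesicallyExtendable 1 η

lemma IsCostIsometry.extendableBetween (hΦ : IsCostIsometry 1 Φ) (hμ : μ ∈ WSet X 1)
    (hν : ν ∈ WSet X 1) (h : ExtendableBetween μ ν) : ExtendableBetween (Φ μ) (Φ ν) := by
  intro η' hη' hbtw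
  obtain ⟨η, hη, rfl⟩ := hΦ.bijOn.surjOn hη'
  exact hΦ.isGeodesicallyExtendable hη (h η hη ((hΦ.isW1Between_iff hμ hη hν).1 hbtw))

lemma IsCostIsometry.extendableBetween_iff (hΦ : IsCostIsometry 1 Φ) (hμ : μ ∈ WSet X 1)
    (hν : ν ∈ WSet X 1) : ExtendableBetween (Φ μ) (Φ ν) ↔ ExtendableBetween μ ν := by
  refine ⟨fun h => ?_, hΦ.extendableBetween hμ hν⟩
  obtain ⟨Ψ, hΨ, hinv⟩ := hΦ.exists_inverse
  simpa only [hinv.1 hμ, hinv.1 hν] using hΨ.extendableBetween (hΦ.mem hμ) (hΦ.mem hν) h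

lemma transportCost_smul_le {X : Type*} [MeasurableSpace X] [PseudoMetricSpace X] (p : ℝ)
    (μ ν : Measure X) {c : ℝ≥0∞} (hc₀ : c ≠ 0) (hc : c ≠ ⊤) :
    transportCost p (c • μ) (c • ν) ≤ c * transportCost p μ ν := by
  simp only [transportCost, ENNReal.mul_iInf_of_ne hc₀ hc]
  refine le_iInf₂ fun π hπ => (transportCost_le (π := c • π) ⟨?_, ?_⟩).trans_eq
    (lintegral_smul_measure _ _)
  · rw [Measure.map_smul, hπ.1]
  · rw [Measure.map_smul, hπ.2]

variable [BorelSpace X] [SecondCountableTopology X]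

lemma transportCost_smul_add_smul_le {p : ℝ} (hp : 0 < p) (μ ν : Measure X) (hab : a + b = 1)
    (hb : b ≠ 0) : transportCost p μ (a • μ + b • ν) ≤ b * transportCost p μ ν := by
  have hb' : b ≠ ⊤ := ne_top_of_le_ne_top ENNReal.one_ne_top (hab ▸ le_add_self)
  calc transportCost p μ (a • μ + b • ν)
      = transportCost p (a • μ + b • μ) (a • μ + b • ν) := by rw [← add_smul, hab, one_smul]
    _ ≤ transportCost p (a • μ) (a • μ) + transportCost p (b • μ) (b • ν) := transportCost_add_le
    _ ≤ b * transportCost p μ ν := by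
      rw [transportCost_self hp, zero_add]
      exact transportCost_smul_le p μ ν hb hb'

lemma isW1Between_smul_add_smul (μ ν : Measure X) (hab : a + b = 1) (ha : a ≠ 0) (hb : b ≠ 0) :
    IsW1Between μ (a • μ + b • ν) ν := by
  have hμ := transportCost_smul_add_smul_le one_pos μ ν hab hb
  have hν := transportCost_smul_add_smul_le one_pos ν μ ((add_comm b a).trans hab) ha
  rw [transportCost_comm, transportCost_comm 1 ν μ, add_comm (b • ν)] at hν
  refine (add_le_add hμ hν).trans_eq ?_
  rw [← add_mul, add_comm, hab, one_mul]

variable (c : IsDiagonalChart u v univ)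

include c

lemma IsDiagonalChart.exists_common_line (hμ : μ ∈ WSet X 1) (hν : ν ∈ WSet X 1)
    (h : ExtendableBetween μ ν) :
    (∃ t, (∀ᵐ z ∂μ, v z = t) ∧ ∀ᵐ z ∂ν, v z = t) ∨
      ∃ t, (∀ᵐ z ∂μ, u z = t) ∧ ∀ᵐ z ∂ν, u z = t := by
  have hmid := WSet.smul_add_smul_mem le_rfl hμ hν ENNReal.inv_two_add_inv_two
  have hext := h _ hmid (isW1Between_smul_add_smul μ ν ENNReal.inv_two_add_inv_two
    (by simp) (by simp))
  have hac (P : X → Prop) (hP : ∀ᵐ z ∂((2 : ℝ≥0∞)⁻¹ • μ + (2 : ℝ≥0∞)⁻¹ • ν), P z) :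
      (∀ᵐ z ∂μ, P z) ∧ ∀ᵐ z ∂ν, P z := by
    rw [ae_add_measure_iff] at hP
    rwa [Measure.ae_ennreal_smul_measure_iff (by simp),
      Measure.ae_ennreal_smul_measure_iff (by simp)] at hP
  exact (c.exists_ae_right_eq_or_exists_ae_left_eq hmid hext).imp
    (fun ⟨t, ht⟩ => ⟨t, hac _ ht⟩) fun ⟨t, ht⟩ => ⟨t, hac _ ht⟩

variable [StandardBorelSpace X]

lemma IsDiagonalChart.extendableBetween_of_ae_right_eq (hμ : μ ∈ WSet X 1) (hν : ν ∈ WSet X 1)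
    {t : ℝ} (hμt : ∀ᵐ z ∂μ, v z = t) (hνt : ∀ᵐ z ∂ν, v z = t) : ExtendableBetween μ ν :=
  fun _ hη hbtw => c.isGeodesicallyExtendable_of_ae_right_eq hη
    (c.ae_right_eq_of_isW1Between hμ hη hν hμt hνt hbtw)

lemma IsDiagonalChart.extendableBetween_of_common_right (hμ : μ ∈ WSet X 1) (hν₁ : ν₁ ∈ WSet X 1)
    (hν₂ : ν₂ ∈ WSet X 1) (h₁ : ∃ t, (∀ᵐ z ∂μ, v z = t) ∧ ∀ᵐ z ∂ν₁, v z = t)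
    (h₂ : ∃ t, (∀ᵐ z ∂μ, v z = t) ∧ ∀ᵐ z ∂ν₂, v z = t) : ExtendableBetween ν₁ ν₂ := by
  obtain ⟨s, hμs, hs⟩ := h₁
  obtain ⟨t, hμt, ht⟩ := h₂
  have := hμ.1
  obtain ⟨z, rfl, rfl⟩ := (hμs.and hμt).exists
  exact c.extendableBetween_of_ae_right_eq hν₁ hν₂ hs ht

lemma IsDiagonalChart.exists_eq_dirac_of_extendableBetween (hμ : μ ∈ WSet X 1)
    (hν₁ : ν₁ ∈ WSet X 1) (hν₂ : ν₂ ∈ WSet X 1) (h₁ : ExtendableBetween μ ν₁)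
    (h₂ : ExtendableBetween μ ν₂) (h₁₂ : ¬ExtendableBetween ν₁ ν₂) : ∃ y, μ = dirac y := by
  have := hμ.1
  have hpoint (s t : ℝ) (hs : ∀ᵐ z ∂μ, u z = s) (ht : ∀ᵐ z ∂μ, v z = t) : ∃ y, μ = dirac y := by
    obtain ⟨y, hu, hv⟩ := c.exists_eq (s, t) (mem_univ _)
    refine ⟨y, eq_dirac_of_ae_eq ?_⟩
    filter_upwards [hs, ht] with z hzs hzt
    exact c.eq_of_coord_eq (hzs.trans hu.symm) (hzt.trans hv.symm)
  rcases c.exists_common_line hμ hν₁ h₁ with hv₁ | hu₁ <;>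
  rcases c.exists_common_line hμ hν₂ h₂ with hv₂ | hu₂
  · exact absurd (c.extendableBetween_of_common_right hμ hν₁ hν₂ hv₁ hv₂) h₁₂
  · exact hpoint _ _ hu₂.choose_spec.1 hv₁.choose_spec.1
  · exact hpoint _ _ hu₁.choose_spec.1 hv₂.choose_spec.1
  · exact absurd (c.swap.extendableBetween_of_common_right hμ hν₁ hν₂ hu₁ hu₂) h₁₂

lemma IsDiagonalChart.exists_extendableBetween_dirac (x : X) :
    ∃ y z, ExtendableBetween (dirac x) (dirac y) ∧ ExtendableBetween (dirac x) (dirac z) ∧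
      ¬ExtendableBetween (dirac y) (dirac z) := by
  have hmem := dirac_mem_WSet (X := X) zero_lt_one
  have hae (f : X → ℝ) (y : X) : ∀ᵐ z ∂dirac y, f z = f y := by
    filter_upwards [ae_eq_dirac_point y] with z hz using congrArg f hz
  obtain ⟨y, huy, hvy⟩ := c.exists_eq (u x + 1, v x) (mem_univ _)
  obtain ⟨z, huz, hvz⟩ := c.exists_eq (u x, v x + 1) (mem_univ _)
  have hline (f : X → ℝ) (h : ∃ t, (∀ᵐ w ∂dirac y, f w = t) ∧ ∀ᵐ w ∂dirac z, f w = t) :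
      f y = f z := by
    obtain ⟨t, hty, htz⟩ := h
    obtain ⟨w, hw, hwt⟩ := ((hae f y).and hty).exists
    obtain ⟨w', hw', hwt'⟩ := ((hae f z).and htz).exists
    rw [← hw, hwt, ← hw', hwt']
  refine ⟨y, z, c.extendableBetween_of_ae_right_eq (hmem x) (hmem y) (hae v x) ?_,
    c.swap.extendableBetween_of_ae_right_eq (hmem x) (hmem z) (hae u x) ?_, fun h => ?_⟩
  · simpa only [hvy] using hae v y
  · simpa only [huz] using hae u z
  · rcases c.exists_common_line (hmem y) (hmem z) h with h | h
    · linarith [hline v h]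
    · linarith [hline u h]

lemma IsCostIsometry.exists_map_dirac_eq_of_univ (hΦ : IsCostIsometry 1 Φ) (x : X) :
    ∃ y, Φ (dirac x) = dirac y := by
  have hmem := dirac_mem_WSet (X := X) zero_lt_one
  obtain ⟨y, z, hxy, hxz, hyz⟩ := c.exists_extendableBetween_dirac x
  exact c.exists_eq_dirac_of_extendableBetween (hΦ.mem (hmem x)) (hΦ.mem (hmem y))
    (hΦ.mem (hmem z)) ((hΦ.extendableBetween_iff (hmem x) (hmem y)).2 hxy)
    ((hΦ.extendableBetween_iff (hmem x) (hmem z)).2 hxz)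
    (mt (hΦ.extendableBetween_iff (hmem y) (hmem z)).1 hyz)

end ExtendableBetween

/-! ### Measures at maximal distance -/

section MaximalDistance

variable {X : Type*} [MetricSpace X] [MeasurableSpace X] {p : ℝ} {D : ℝ≥0∞} {μ ν : Measure X}
  {a b : ℝ≥0∞} {x y z : X}

lemma ae_ae_edist_eq_of_le_transportCost (hp : 0 < p) (hD : ∀ x y : X, edist x y ≤ D)
    (hD' : D ≠ ⊤) [IsProbabilityMeasure μ] [IsProbabilityMeasure ν]
    (h : D ^ p ≤ transportCost p μ ν) : ∀ᵐ x ∂μ, ∀ᵐ y ∂ν, edist x y = D := by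
  have hle : (fun q : X × X => edist q.1 q.2 ^ p) ≤ᵐ[μ.prod ν] fun _ => D ^ p :=
    ae_of_all _ fun q => ENNReal.rpow_le_rpow (hD _ _) hp.le
  have hconst : ∫⁻ _, D ^ p ∂μ.prod ν = D ^ p := by simp
  have heq := ae_eq_of_ae_le_of_lintegral_le hle
    ((lintegral_mono_ae hle).trans_lt
      (by rw [hconst]; exact ENNReal.rpow_lt_top_of_nonneg hp.le hD')).ne aemeasurable_const
    (hconst.trans_le (h.trans (transportCost_le (isCoupling_prod μ ν))))
  exact Measure.ae_ae_of_ae_prod (heq.mono fun q hq => ENNReal.rpow_left_injective hp.ne' hq)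

variable [OpensMeasurableSpace X] [SecondCountableTopology X]

lemma transportCost_twoPoint_dirac (p : ℝ) (hab : a + b = 1) (x y z : X) :
    transportCost p (twoPoint a b x y) (dirac z) = a * edist x z ^ p + b * edist y z ^ p := by
  have : IsProbabilityMeasure (twoPoint a b x y) := ⟨by simpa [twoPoint] using hab⟩
  rw [transportCost_dirac_right, twoPoint, lintegral_add_measure, lintegral_smul_measure,
    lintegral_smul_measure, lintegral_dirac, lintegral_dirac, smul_eq_mul, smul_eq_mul]

lemma transportCost_twoPoint_dirac_of_edist_eq (p : ℝ) (hab : a + b = 1) (hx : edist x z = D)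
    (hy : edist y z = D) : transportCost p (twoPoint a b x y) (dirac z) = D ^ p := by
  rw [transportCost_twoPoint_dirac p hab, hx, hy, ← add_mul, hab, one_mul]

lemma eq_of_ae_eq_or_eq_of_transportCost_dirac_eq (hp : 0 < p) [IsProbabilityMeasure μ]
    [IsProbabilityMeasure ν] (hxy : x ≠ y) (hμ : ∀ᵐ z ∂μ, z = x ∨ z = y)
    (hν : ∀ᵐ z ∂ν, z = x ∨ z = y)
    (h : transportCost p μ (dirac x) = transportCost p ν (dirac x)) : μ = ν := by
  classical
  have hcost {ρ : Measure X} (hρ : ∀ᵐ z ∂ρ, z = x ∨ z = y) :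
      ∫⁻ z, edist z x ^ p ∂ρ = edist y x ^ p * ρ {y} := by
    rw [← lintegral_indicator_const (measurableSet_singleton y)]
    refine lintegral_congr_ae (hρ.mono fun z hz => ?_)
    rcases hz with rfl | rfl <;> simp [hxy, hp]
  have hcompl {ρ : Measure X} [IsProbabilityMeasure ρ] (hρ : ∀ᵐ z ∂ρ, z = x ∨ z = y) :
      ρ {x} = 1 - ρ {y} := by
    rw [← prob_compl_eq_one_sub (measurableSet_singleton y)]
    refine measure_congr (eventuallyEq_set.2 (hρ.mono fun z hz => ?_))
    rcases hz with rfl | rfl <;> simp [hxy, hxy.symm]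
  rw [transportCost_dirac_right, transportCost_dirac_right, hcost hμ, hcost hν] at h
  have hy : μ {y} = ν {y} := by
    refine (ENNReal.mul_right_inj ?_ ?_).1 h
    · simp [ENNReal.rpow_eq_zero_iff, hxy.symm, edist_ne_top]
    · exact ENNReal.rpow_ne_top_of_nonneg hp.le (edist_ne_top y x)
  refine measure_ext_of_ae_mem_finset {x, y} (by simpa using hμ) (by simpa using hν) fun z hz => ?_
  rcases (by simpa using hz : z = x ∨ z = y) with rfl | rfl
  · rw [hcompl hμ, hcompl hν, hy]
  · exact hy

lemma ae_edist_eq_of_le_transportCost_dirac (hp : 0 < p) (hD : ∀ x y : X, edist x y ≤ D)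
    (hD' : D ≠ ⊤) [IsProbabilityMeasure μ] (h : D ^ p ≤ transportCost p μ (dirac y)) :
    ∀ᵐ x ∂μ, edist x y = D := by
  filter_upwards [ae_ae_edist_eq_of_le_transportCost hp hD hD' h] with x hx
  obtain ⟨z, hxz, rfl⟩ := (hx.and (ae_eq_dirac_point y)).exists
  exact hxz

namespace IsCostIsometry

variable {Φ : Measure X → Measure X} {x₀ x₁ y₀ y₁ x₀' x₁' y₀' y₁' : X}

lemma eq_of_transportCost_dirac_eq (hp : 1 ≤ p) (hΦ : IsCostIsometry p Φ)
    (hD : ∀ x y : X, edist x y ≤ D) (hD' : D ≠ ⊤) (hx : x₀ ≠ x₁)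
    (honly : ∀ w, edist w y₀ = D → edist w y₁ = D → w = x₀ ∨ w = x₁)
    (hx₀ : Φ (dirac x₀) = dirac x₀') (hy₀ : Φ (dirac y₀) = dirac y₀')
    (hy₁ : Φ (dirac y₁) = dirac y₁') (hμ : μ ∈ WSet X p) (hν : ν ∈ WSet X p)
    (hμ₀ : transportCost p μ (dirac y₀') = D ^ p) (hμ₁ : transportCost p μ (dirac y₁') = D ^ p)
    (hν₀ : transportCost p ν (dirac y₀') = D ^ p) (hν₁ : transportCost p ν (dirac y₁') = D ^ p)
    (h : transportCost p μ (dirac x₀') = transportCost p ν (dirac x₀')) : μ = ν := by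
  have hp₀ : 0 < p := by linarith
  have hcost {ρ : Measure X} (hρ : ρ ∈ WSet X p) {w w' : X} (hw : Φ (dirac w) = dirac w') :
      transportCost p ρ (dirac w) = transportCost p (Φ ρ) (dirac w') := by
    rw [← hw, hΦ.cost_eq _ hρ _ (dirac_mem_WSet hp₀ w)]
  have hsupp {ρ : Measure X} (hρ : ρ ∈ WSet X p)
      (h₀ : transportCost p (Φ ρ) (dirac y₀') = D ^ p)
      (h₁ : transportCost p (Φ ρ) (dirac y₁') = D ^ p) : ∀ᵐ w ∂ρ, w = x₀ ∨ w = x₁ := by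
    have := hρ.1
    filter_upwards [
      ae_edist_eq_of_le_transportCost_dirac hp₀ hD hD' (h₀.ge.trans (hcost hρ hy₀).ge),
      ae_edist_eq_of_le_transportCost_dirac hp₀ hD hD' (h₁.ge.trans (hcost hρ hy₁).ge)] with w
    exact honly w
  obtain ⟨μ, hμ', rfl⟩ := hΦ.bijOn.surjOn hμ
  obtain ⟨ν, hν', rfl⟩ := hΦ.bijOn.surjOn hν
  have := hμ'.1
  have := hν'.1
  rw [eq_of_ae_eq_or_eq_of_transportCost_dirac_eq hp₀ hx (hsupp hμ' hμ₀ hμ₁) (hsupp hν' hν₀ hν₁)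
    ((hcost hμ' hx₀).trans (h.trans (hcost hν' hx₀).symm))]

lemma eq_or_eq_of_edist_eq (hp : 1 ≤ p) (hΦ : IsCostIsometry p Φ)
    (hD : ∀ x y : X, edist x y ≤ D) (hD₀ : D ≠ 0) (hD' : D ≠ ⊤) (hx : x₀ ≠ x₁)
    (honly : ∀ w, edist w y₀ = D → edist w y₁ = D → w = x₀ ∨ w = x₁)
    (hx₀ : Φ (dirac x₀) = dirac x₀') (hy₀ : Φ (dirac y₀) = dirac y₀')
    (hy₁ : Φ (dirac y₁) = dirac y₁') (hxx : edist x₁' x₀' = D)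
    (h₀₀ : edist x₀' y₀' = D) (h₀₁ : edist x₀' y₁' = D) (h₁₀ : edist x₁' y₀' = D)
    (h₁₁ : edist x₁' y₁' = D) {w : X} (hw₀ : edist w y₀' = D) (hw₁ : edist w y₁' = D) :
    w = x₀' ∨ w = x₁' := by
  have hp₀ : 0 < p := by linarith
  set b := (edist w x₀' / D) ^ p with hb
  have hb1 : b ≤ 1 := ENNReal.rpow_le_one (ENNReal.div_le_of_le_mul (by simpa using hD _ _)) hp₀.le
  have hab : 1 - b + b = 1 := tsub_add_cancel_of_le hb1
  have h : dirac w = twoPoint (1 - b) b x₀' x₁' :=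
    hΦ.eq_of_transportCost_dirac_eq hp hD hD' hx honly hx₀ hy₀ hy₁
      (dirac_mem_WSet hp₀ w) (twoPoint_mem_WSet hp hab x₀' x₁')
      (by rw [transportCost_dirac_dirac, hw₀]) (by rw [transportCost_dirac_dirac, hw₁])
      (transportCost_twoPoint_dirac_of_edist_eq p hab h₀₀ h₁₀)
      (transportCost_twoPoint_dirac_of_edist_eq p hab h₀₁ h₁₁)
      (by rw [transportCost_dirac_dirac, transportCost_twoPoint_dirac p hab, edist_self,
        ENNReal.zero_rpow_of_pos hp₀, mul_zero, zero_add, hxx, hb,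
        ← ENNReal.mul_rpow_of_nonneg _ _ hp₀.le, ENNReal.div_mul_cancel hD₀ hD'])
  have hae := ae_twoPoint (1 - b) b x₀' x₁'
  rw [← h] at hae
  obtain ⟨z, hz, rfl⟩ := (hae.and (ae_eq_dirac_point w)).exists
  exact hz

lemma map_twoPoint_eq (hp : 1 ≤ p) (hΦ : IsCostIsometry p Φ)
    (hD : ∀ x y : X, edist x y ≤ D) (hD' : D ≠ ⊤) (hx : x₀ ≠ x₁)
    (honly : ∀ w, edist w y₀ = D → edist w y₁ = D → w = x₀ ∨ w = x₁)
    (hx₀ : Φ (dirac x₀) = dirac x₀) (hy₀ : Φ (dirac y₀) = dirac y₀)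
    (hy₁ : Φ (dirac y₁) = dirac y₁) (h₀₀ : edist x₀ y₀ = D) (h₀₁ : edist x₀ y₁ = D)
    (h₁₀ : edist x₁ y₀ = D) (h₁₁ : edist x₁ y₁ = D) (hab : a + b = 1) :
    Φ (twoPoint a b x₀ x₁) = twoPoint a b x₀ x₁ := by
  have hmem := twoPoint_mem_WSet hp hab x₀ x₁
  have hcost {w : X} (hw : Φ (dirac w) = dirac w) : transportCost p (Φ (twoPoint a b x₀ x₁))
      (dirac w) = transportCost p (twoPoint a b x₀ x₁) (dirac w) := by
    rw [← hΦ.cost_eq _ hmem _ (dirac_mem_WSet (by linarith) w), hw]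
  have hfar₀ := transportCost_twoPoint_dirac_of_edist_eq p hab h₀₀ h₁₀
  have hfar₁ := transportCost_twoPoint_dirac_of_edist_eq p hab h₀₁ h₁₁
  exact hΦ.eq_of_transportCost_dirac_eq hp hD hD' hx honly hx₀ hy₀ hy₁ (hΦ.mem hmem) hmem
    ((hcost hy₀).trans hfar₀) ((hcost hy₁).trans hfar₁) hfar₀ hfar₁ (hcost hx₀)

end IsCostIsometry

end MaximalDistance

/-! ### Points between two fixed points -/

lemma ae_eq_zero_of_lintegral_add_rpow_eq {Ω : Type*} [MeasurableSpace Ω] {μ : Measure Ω}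
    {p : ℝ} {f f' g g' : Ω → ℝ≥0∞} {α β : ℝ≥0∞} (hp : 1 ≤ p) (hf : Measurable f) (hg : Measurable g)
    (hg' : Measurable g') (hα : α ≠ ⊤) (hβ : β ≠ ⊤) (hfα : ∫⁻ z, (f z + f' z) ^ p ∂μ = α ^ p)
    (hgβ : ∫⁻ z, (g' z + g z) ^ p ∂μ = β ^ p)
    (hfg : ∫⁻ z, (f z + g z) ^ p ∂μ = (α + β) ^ p) : ∀ᵐ z ∂μ, g' z = 0 := by
  have hp₀ : 0 < p := by linarith
  have hβp : β ^ p ≠ ⊤ := ENNReal.rpow_ne_top_of_nonneg hp₀.le hβ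
  have hfle : (∫⁻ z, f z ^ p ∂μ) ^ (1 / p) ≤ α := by
    rw [one_div, ENNReal.rpow_inv_le_iff hp₀, ← hfα]
    gcongr with z
    exact le_self_add
  have hminkowski : α + β ≤ (∫⁻ z, f z ^ p ∂μ) ^ (1 / p) + (∫⁻ z, g z ^ p ∂μ) ^ (1 / p) := by
    refine le_of_eq_of_le ?_ (ENNReal.lintegral_Lp_add_le hf.aemeasurable hg.aemeasurable hp)
    simp only [Pi.add_apply, hfg]
    rw [one_div, ENNReal.rpow_rpow_inv hp₀.ne']
  have hgle : β ^ p ≤ ∫⁻ z, g z ^ p ∂μ := by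
    rw [← ENNReal.le_rpow_inv_iff hp₀, ← one_div, ← ENNReal.add_le_add_iff_left hα]
    exact hminkowski.trans (by gcongr)
  have hle (z : Ω) : g z ^ p ≤ (g' z + g z) ^ p := ENNReal.rpow_le_rpow le_add_self hp₀.le
  have hfin : ∫⁻ z, g z ^ p ∂μ ≠ ⊤ := ne_top_of_le_ne_top hβp (hgβ ▸ lintegral_mono hle)
  filter_upwards [ae_eq_of_ae_le_of_lintegral_le (ae_of_all _ hle) hfin (by fun_prop)
    (hgβ.trans_le hgle), ae_lt_top (by fun_prop) hfin] with z hz hztop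
  have hgz : g z ≠ ⊤ := by
    rintro htop
    simp [htop, hp₀] at hztop
  have hadd : 0 + g z = g' z + g z :=
    (zero_add _).trans (ENNReal.rpow_left_injective hp₀.ne' hz)
  exact ((ENNReal.add_left_inj hgz).1 hadd).symm

section Jensen

variable {Ω : Type*} [MeasurableSpace Ω] {μ : Measure Ω} [IsProbabilityMeasure μ] {f g : Ω → ℝ}
  {p q a b : ℝ}

lemma rpow_integral_le_integral_rpow (hp : 1 ≤ p) (hf : ∀ z, 0 ≤ f z) (hfi : Integrable f μ)
    (hfp : Integrable (fun z => f z ^ p) μ) : (∫ z, f z ∂μ) ^ p ≤ ∫ z, f z ^ p ∂μ :=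
  (convexOn_rpow hp).map_integral_le (Real.continuous_rpow_const (by linarith)).continuousOn
    isClosed_Ici (ae_of_all _ hf) hfi hfp

lemma ae_eq_integral_of_integral_rpow_le (hq : 1 < q) (hf : ∀ z, 0 ≤ f z) (hfi : Integrable f μ)
    (hfq : Integrable (fun z => f z ^ q) μ) (h : ∫ z, f z ^ q ∂μ ≤ (∫ z, f z ∂μ) ^ q) :
    ∀ᵐ z ∂μ, f z = ∫ z, f z ∂μ := by
  have hdich := (strictConvexOn_rpow hq).ae_eq_const_or_map_average_lt
    (Real.continuous_rpow_const (by linarith)).continuousOn isClosed_Ici (ae_of_all _ hf) hfi hfq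
  simp only [average_eq_integral] at hdich
  exact hdich.resolve_right h.not_gt

lemma integral_eq_and_add_ae_eq_of_integral_rpow_eq (hp : 1 ≤ p) (ha : 0 ≤ a) (hb : 0 ≤ b)
    (hf : ∀ z, 0 ≤ f z) (hg : ∀ z, 0 ≤ g z) (hfi : Integrable f μ) (hgi : Integrable g μ)
    (hfp : Integrable (fun z => f z ^ p) μ) (hgp : Integrable (fun z => g z ^ p) μ)
    (hfa : ∫ z, f z ^ p ∂μ = a ^ p) (hgb : ∫ z, g z ^ p ∂μ = b ^ p)
    (hab : ∀ z, a + b ≤ f z + g z) :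
    ∫ z, f z ∂μ = a ∧ ∫ z, g z ∂μ = b ∧ ∀ᵐ z ∂μ, f z + g z = a + b := by
  have hp₀ : 0 < p := by linarith
  have hfle : ∫ z, f z ∂μ ≤ a := (Real.rpow_le_rpow_iff (integral_nonneg hf) ha hp₀).1
    (hfa ▸ rpow_integral_le_integral_rpow hp hf hfi hfp)
  have hgle : ∫ z, g z ∂μ ≤ b := (Real.rpow_le_rpow_iff (integral_nonneg hg) hb hp₀).1
    (hgb ▸ rpow_integral_le_integral_rpow hp hg hgi hgp)
  have hadd : ∫ z, (f z + g z) ∂μ = ∫ z, f z ∂μ + ∫ z, g z ∂μ := integral_add hfi hgi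
  have hconst : ∫ _, (a + b) ∂μ = a + b := by simp
  have hle : a + b ≤ ∫ z, (f z + g z) ∂μ :=
    hconst.symm.trans_le (integral_mono (integrable_const _) (hfi.add hgi) hab)
  refine ⟨by linarith, by linarith, ?_⟩
  have hae := (integral_eq_iff_of_ae_le (integrable_const (a + b)) (hfi.add hgi)
    (ae_of_all _ hab)).1 (by simp only [Pi.add_apply]; linarith)
  exact hae.mono fun z hz => hz.symm

end Jensen

section Between

variable {X : Type*} [MetricSpace X] [MeasurableSpace X] [OpensMeasurableSpace X] {p : ℝ}
  {μ : Measure X} {x y : X} {a b : ℝ}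

lemma WSet.integrable_dist (hp : 1 ≤ p) (hμ : μ ∈ WSet X p) (w : X) :
    Integrable (fun z => dist z w) μ := by
  have := hμ.1
  refine ((integrable_const (1 : ℝ)).add (WSet.integrable_dist_rpow hp hμ w)).mono'
    (by fun_prop) (ae_of_all _ fun z => ?_)
  have hpow : 0 ≤ dist z w ^ p := by positivity
  rw [Real.norm_of_nonneg dist_nonneg]
  rcases le_total (dist z w) 1 with h | h
  · exact h.trans (le_add_of_nonneg_right hpow)
  · exact (Real.self_le_rpow_of_one_le h hp).trans (le_add_of_nonneg_left zero_le_one)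

variable [SecondCountableTopology X]

lemma transportCost_twoPoint_lintegral_le {w₁ w₂ : X → ℝ≥0∞} (hw₁ : Measurable w₁)
    (hw₂ : Measurable w₂) (hw : ∀ᵐ z ∂μ, w₁ z + w₂ z = 1) (p : ℝ) (x y : X) :
    transportCost p μ (twoPoint (∫⁻ z, w₁ z ∂μ) (∫⁻ z, w₂ z ∂μ) x y) ≤
      ∫⁻ z, w₁ z * edist z x ^ p + w₂ z * edist z y ^ p ∂μ := by
  have hμ : μ.withDensity w₁ + μ.withDensity w₂ = μ := by
    rw [← withDensity_add_left hw₁, withDensity_congr_ae (f := w₁ + w₂) (g := 1) hw,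
      withDensity_one]
  have hmass (w : X → ℝ≥0∞) : ∫⁻ z, w z ∂μ = μ.withDensity w univ := by simp
  calc transportCost p μ (twoPoint (∫⁻ z, w₁ z ∂μ) (∫⁻ z, w₂ z ∂μ) x y)
      = transportCost p (μ.withDensity w₁ + μ.withDensity w₂)
          (μ.withDensity w₁ univ • dirac x + μ.withDensity w₂ univ • dirac y) := by
        rw [hμ, twoPoint, hmass, hmass]
    _ ≤ ∫⁻ z, edist z x ^ p ∂μ.withDensity w₁ + ∫⁻ z, edist z y ^ p ∂μ.withDensity w₂ :=
        transportCost_add_le.trans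
          (add_le_add (transportCost_smul_dirac_le p _ x) (transportCost_smul_dirac_le p _ y))
    _ = ∫⁻ z, w₁ z * edist z x ^ p + w₂ z * edist z y ^ p ∂μ := by
        rw [lintegral_withDensity_eq_lintegral_mul _ hw₁ (measurable_edist_rpow_right p x),
          lintegral_withDensity_eq_lintegral_mul _ hw₂ (measurable_edist_rpow_right p y),
          ← lintegral_add_left (hw₁.mul (measurable_edist_rpow_right p x))]
        rfl

lemma transportCost_twoPoint_le_integral (hp : 1 ≤ p) (hμ : μ ∈ WSet X p) (hab : 0 < a + b)
    (hx : ∫ z, dist z x ∂μ = a) (hy : ∫ z, dist z y ∂μ = b)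
    (hadd : ∀ᵐ z ∂μ, dist z x + dist z y = a + b)
    (hi : Integrable (fun z => dist z y * dist z x ^ p + dist z x * dist z y ^ p) μ) :
    transportCost p μ
        (twoPoint (ENNReal.ofReal (b / (a + b))) (ENNReal.ofReal (a / (a + b))) x y) ≤
      ENNReal.ofReal
        ((∫ z, (dist z y * dist z x ^ p + dist z x * dist z y ^ p) ∂μ) / (a + b)) := by
  have hmass {w : X} {c : ℝ} (hw : ∫ z, dist z w ∂μ = c) :
      ENNReal.ofReal (c / (a + b)) = ∫⁻ z, ENNReal.ofReal (dist z w / (a + b)) ∂μ := by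
    rw [← hw, ← integral_div, ofReal_integral_eq_lintegral_ofReal
      ((WSet.integrable_dist hp hμ w).div_const _) (ae_of_all _ fun z => by positivity)]
  have hedist (z w : X) : edist z w ^ p = ENNReal.ofReal (dist z w ^ p) := by
    rw [edist_dist, ENNReal.ofReal_rpow_of_nonneg dist_nonneg (by linarith)]
  rw [← integral_div, ofReal_integral_eq_lintegral_ofReal (hi.div_const _)
    (ae_of_all _ fun z => by positivity), hmass hx, hmass hy]
  refine (transportCost_twoPoint_lintegral_le (by fun_prop) (by fun_prop) ?_ p x y).trans
    (lintegral_mono fun z => ?_)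
  · filter_upwards [hadd] with z hz
    rw [← ENNReal.ofReal_add (by positivity) (by positivity), ← add_div, add_comm (dist z y), hz,
      div_self hab.ne', ENNReal.ofReal_one]
  · rw [hedist, hedist, ← ENNReal.ofReal_mul (by positivity), ← ENNReal.ofReal_mul (by positivity),
      ← ENNReal.ofReal_add (by positivity) (by positivity)]
    exact (congrArg ENNReal.ofReal (by ring)).le

lemma integrable_dist_rpow_add_one (hp : 1 ≤ p) (hμ : μ ∈ WSet X p) {C : ℝ}
    (h : ∀ᵐ z ∂μ, dist z x ≤ C) : Integrable (fun z => dist z x ^ (p + 1)) μ := by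
  simp only [Real.rpow_add_one' dist_nonneg (by linarith : p + 1 ≠ 0)]
  exact (WSet.integrable_dist_rpow hp hμ x).mul_bdd (c := C) (by fun_prop)
    (h.mono fun z hz => by rwa [Real.norm_of_nonneg dist_nonneg])

-- The distance `s` to `x` and the distance `t = D - s` to `y` exchange the mass at the two points,
-- and `t * s ^ p + s * t ^ p = D * (s ^ p + t ^ p) - (s ^ (p + 1) + t ^ (p + 1))`.
lemma integral_dist_rpow_add_one_le (hp : 1 ≤ p) (hμ : μ ∈ WSet X p) (ha : 0 ≤ a) (hb : 0 ≤ b)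
    (hab : 0 < a + b) (hx : ∫ z, dist z x ∂μ = a) (hy : ∫ z, dist z y ∂μ = b)
    (hxp : ∫ z, dist z x ^ p ∂μ = a ^ p) (hyp : ∫ z, dist z y ^ p ∂μ = b ^ p)
    (hadd : ∀ᵐ z ∂μ, dist z x + dist z y = a + b)
    (hix : Integrable (fun z => dist z x ^ (p + 1)) μ)
    (hiy : Integrable (fun z => dist z y ^ (p + 1)) μ)
    (h : ENNReal.ofReal ((b * a ^ p + a * b ^ p) / (a + b)) ≤ transportCost p μ
      (twoPoint (ENNReal.ofReal (b / (a + b))) (ENNReal.ofReal (a / (a + b))) x y)) :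
    ∫ z, dist z x ^ (p + 1) ∂μ + ∫ z, dist z y ^ (p + 1) ∂μ ≤ a ^ (p + 1) + b ^ (p + 1) := by
  have hident {s t : ℝ} (hs : 0 ≤ s) (ht : 0 ≤ t) : t * s ^ p + s * t ^ p =
      (s + t) * (s ^ p + t ^ p) - (s ^ (p + 1) + t ^ (p + 1)) := by
    rw [Real.rpow_add_one' hs (by linarith), Real.rpow_add_one' ht (by linarith)]
    ring
  have hpow : Integrable (fun z => dist z x ^ p + dist z y ^ p) μ :=
    (WSet.integrable_dist_rpow hp hμ x).add (WSet.integrable_dist_rpow hp hμ y)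
  have hpow' : Integrable (fun z => dist z x ^ (p + 1) + dist z y ^ (p + 1)) μ := hix.add hiy
  have hcross : (fun z => dist z y * dist z x ^ p + dist z x * dist z y ^ p) =ᵐ[μ] fun z =>
      (a + b) * (dist z x ^ p + dist z y ^ p) - (dist z x ^ (p + 1) + dist z y ^ (p + 1)) :=
    hadd.mono fun z hz => by simp only [hident dist_nonneg dist_nonneg, hz]
  have hi := ((hpow.const_mul (a + b)).sub hpow').congr hcross.symm
  have hint : ∫ z, (dist z y * dist z x ^ p + dist z x * dist z y ^ p) ∂μ = (a + b) *
      (a ^ p + b ^ p) - (∫ z, dist z x ^ (p + 1) ∂μ + ∫ z, dist z y ^ (p + 1) ∂μ) := by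
    rw [integral_congr_ae hcross, integral_sub (hpow.const_mul _) hpow',
      integral_const_mul, integral_add hix hiy, integral_add (WSet.integrable_dist_rpow hp hμ x)
      (WSet.integrable_dist_rpow hp hμ y), hxp, hyp]
  have hle := h.trans (transportCost_twoPoint_le_integral hp hμ hab hx hy hadd hi)
  rw [ENNReal.ofReal_le_ofReal_iff (div_nonneg (integral_nonneg fun z => by positivity) hab.le),
    div_le_div_iff_of_pos_right hab, hint, hident ha hb] at hle
  linarith

lemma ae_dist_eq_of_le_transportCost_twoPoint (hp : 1 ≤ p) (hμ : μ ∈ WSet X p) (ha : 0 ≤ a)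
    (hb : 0 ≤ b) (hxy : x ≠ y) (hab : a + b = dist x y)
    (hxp : ∫ z, dist z x ^ p ∂μ = a ^ p) (hyp : ∫ z, dist z y ^ p ∂μ = b ^ p)
    (h : ENNReal.ofReal ((b * a ^ p + a * b ^ p) / (a + b)) ≤ transportCost p μ
      (twoPoint (ENNReal.ofReal (b / (a + b))) (ENNReal.ofReal (a / (a + b))) x y)) :
    ∀ᵐ z ∂μ, dist z x = a ∧ dist z y = b := by
  have := hμ.1
  have hix := WSet.integrable_dist hp hμ x
  have hiy := WSet.integrable_dist hp hμ y
  obtain ⟨hx, hy, hadd⟩ := integral_eq_and_add_ae_eq_of_integral_rpow_eq hp ha hb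
    (fun z => dist_nonneg) (fun z => dist_nonneg) hix hiy
    (WSet.integrable_dist_rpow hp hμ x) (WSet.integrable_dist_rpow hp hμ y) hxp hyp
    (fun z => hab.trans_le (dist_triangle_left x y z))
  have hix' : Integrable (fun z => dist z x ^ (p + 1)) μ := integrable_dist_rpow_add_one hp hμ
    (hadd.mono fun z hz => hz ▸ le_add_of_nonneg_right dist_nonneg)
  have hiy' : Integrable (fun z => dist z y ^ (p + 1)) μ := integrable_dist_rpow_add_one hp hμ
    (hadd.mono fun z hz => hz ▸ le_add_of_nonneg_left dist_nonneg)
  have hle := integral_dist_rpow_add_one_le hp hμ ha hb (hab ▸ dist_pos.2 hxy) hx hy hxp hyp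
    hadd hix' hiy' h
  have hp1 : 1 ≤ p + 1 := by linarith
  have hjx := rpow_integral_le_integral_rpow hp1 (fun z => dist_nonneg) hix hix'
  have hjy := rpow_integral_le_integral_rpow hp1 (fun z => dist_nonneg) hiy hiy'
  rw [hx] at hjx
  rw [hy] at hjy
  filter_upwards [
    ae_eq_integral_of_integral_rpow_le (by linarith : 1 < p + 1) (fun z => dist_nonneg) hix hix'
      (by rw [hx]; linarith),
    ae_eq_integral_of_integral_rpow_le (by linarith : 1 < p + 1) (fun z => dist_nonneg) hiy hiy'
      (by rw [hy]; linarith)] with z hzx hzy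
  exact ⟨hzx.trans hx, hzy.trans hy⟩

lemma IsCostIsometry.ae_dist_eq_of_dist_add_dist_eq {Φ : Measure X → Measure X} {z : X}
    (hp : 1 ≤ p) (hΦ : IsCostIsometry p Φ) (hxy : x ≠ y) (hz : dist z x + dist z y = dist x y)
    (hx : Φ (dirac x) = dirac x) (hy : Φ (dirac y) = dirac y)
    (htwo : ∀ a b, a + b = 1 → Φ (twoPoint a b x y) = twoPoint a b x y) :
    ∀ᵐ w ∂Φ (dirac z), dist w x = dist z x ∧ dist w y = dist z y := by
  have hp₀ : 0 < p := by linarith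
  have hpos : 0 < dist z x + dist z y := hz ▸ dist_pos.2 hxy
  have hδ := dirac_mem_WSet hp₀ z
  have hab : ENNReal.ofReal (dist z y / (dist z x + dist z y)) +
      ENNReal.ofReal (dist z x / (dist z x + dist z y)) = 1 := by
    rw [← ENNReal.ofReal_add (by positivity) (by positivity), ← add_div, add_comm (dist z y),
      div_self hpos.ne', ENNReal.ofReal_one]
  refine ae_dist_eq_of_le_transportCost_twoPoint hp (hΦ.mem hδ) dist_nonneg dist_nonneg hxy hz
    (by rw [hΦ.integral_dist_rpow_eq hp hx hδ, integral_dirac])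
    (by rw [hΦ.integral_dist_rpow_eq hp hy hδ, integral_dirac]) (le_of_eq ?_)
  rw [← htwo _ _ hab, hΦ.cost_eq _ hδ _ (twoPoint_mem_WSet hp hab x y), transportCost_comm,
    transportCost_twoPoint_dirac p hab, edist_comm x, edist_comm y, edist_dist, edist_dist,
    ENNReal.ofReal_rpow_of_nonneg dist_nonneg hp₀.le,
    ENNReal.ofReal_rpow_of_nonneg dist_nonneg hp₀.le, ← ENNReal.ofReal_mul (by positivity),
    ← ENNReal.ofReal_mul (by positivity), ← ENNReal.ofReal_add (by positivity) (by positivity)]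
  congr 1
  ring

end Between

/-! ### Corners of the square -/

section Corners

lemma abs_sub_eq_abs_add_abs_iff (a b : ℝ) : |a - b| = |a| + |b| ↔ a * b ≤ 0 := by
  rw [sub_eq_add_neg, ← abs_neg b, abs_add_eq_add_abs_iff, neg_nonneg, neg_nonpos,
    mul_nonpos_iff]

lemma sum_posPart_eq_of_pos {ι : Type*} [Fintype ι] {x : ι → ℝ}
    (h : Pairwise fun i j => x i * x j ≤ 0) {i : ι} (hi : 0 < x i) : ∑ j, (x j)⁺ = x i := by
  rw [Finset.sum_eq_single_of_mem i (Finset.mem_univ i) fun j _ hj =>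
    posPart_eq_zero.2 (nonpos_of_mul_nonpos_left (h hj) hi), posPart_of_nonneg hi.le]

lemma sum_posPart_le {ι : Type*} [Fintype ι] {x : ι → ℝ} {C : ℝ} (hC : 0 ≤ C)
    (h : Pairwise fun i j => x i * x j ≤ 0) (hx : ∀ i, x i ≤ C) : ∑ j, (x j)⁺ ≤ C := by
  by_cases hpos : ∃ i, 0 < x i
  · obtain ⟨i, hi⟩ := hpos
    exact (sum_posPart_eq_of_pos h hi).trans_le (hx i)
  · push Not at hpos
    rwa [Finset.sum_eq_zero fun i _ => posPart_eq_zero.2 (hpos i)]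

lemma exists_pairwise_of_ae {X ι : Type*} [MeasurableSpace X] [Finite ι] {m : ι → Measure X}
    [∀ i, IsProbabilityMeasure (m i)] {r : X → X → Prop} (hr : ∀ x y, r x y → r y x)
    (h : Pairwise fun i j => ∀ᵐ x ∂m i, ∀ᵐ y ∂m j, r x y) :
    ∃ z : ι → X, Pairwise (fun i j => r (z i) (z j)) ∧
      Pairwise fun i j => ∀ᵐ y ∂m j, r (z i) y := by
  classical
  have := Fintype.ofFinite ι
  suffices H : ∀ s : Finset ι, ∃ z : ι → X, (∀ i ∈ s, ∀ j ∈ s, i ≠ j → r (z i) (z j)) ∧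
      ∀ i ∈ s, ∀ j, i ≠ j → ∀ᵐ y ∂m j, r (z i) y by
    obtain ⟨z, hz, hz'⟩ := H Finset.univ
    exact ⟨z, fun i j => hz i (Finset.mem_univ i) j (Finset.mem_univ j),
      fun i => hz' i (Finset.mem_univ i)⟩
  intro s
  induction s using Finset.induction_on with
  | empty => exact ⟨fun i => (m i).nonempty_of_neZero.some, by simp, by simp⟩
  | insert a s ha ih =>
    obtain ⟨z, hz, hz'⟩ := ih
    have hne : ∀ i ∈ s, i ≠ a := fun i hi => ne_of_mem_of_not_mem hi ha
    have hold : ∀ᵐ w ∂m a, ∀ i ∈ s, r (z i) w :=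
      (ae_ball_iff s.countable_toSet).2 fun i hi => hz' i hi a (hne i hi)
    have hnew : ∀ᵐ w ∂m a, ∀ j, a ≠ j → ∀ᵐ y ∂m j, r w y :=
      ae_all_iff.2 fun j => eventually_imp_distrib_left.2 fun haj => h haj
    obtain ⟨w, hw, hw'⟩ := (hold.and hnew).exists
    have hupdate : ∀ i ∈ s, Function.update z a w i = z i := fun i hi =>
      Function.update_of_ne (hne i hi) _ _
    refine ⟨Function.update z a w, ?_, ?_⟩ <;>
      simp only [Finset.forall_mem_insert, Function.update_self]
    · refine ⟨⟨fun hn => (hn rfl).elim, fun j hj _ => ?_⟩, fun i hi => ⟨fun _ => ?_, ?_⟩⟩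
      · rw [hupdate j hj]
        exact hr _ _ (hw j hj)
      · rw [hupdate i hi]
        exact hw i hi
      · intro j hj hij
        rw [hupdate i hi, hupdate j hj]
        exact hz i hi j hj hij
    · refine ⟨hw', fun i hi => ?_⟩
      rw [hupdate i hi]
      exact hz' i hi

end Corners

namespace IsDiagonalChart

variable {X : Type*} [MetricSpace X] {u v : X → ℝ} {x y : X} {z : Fin 4 → X}

lemma swap_diamond (c : IsDiagonalChart u v diamond) : IsDiagonalChart v u diamond :=
  preimage_swap_diamond ▸ c.swap

lemma neg_left_diamond (c : IsDiagonalChart u v diamond) :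
    IsDiagonalChart (fun x => -u x) v diamond := by
  have hneg : (fun q : ℝ × ℝ => (-q.1, q.2)) ⁻¹' diamond = diamond := by
    ext q
    simp [diamond]
  exact hneg ▸ c.neg_left

lemma neg_right_diamond (c : IsDiagonalChart u v diamond) :
    IsDiagonalChart u (fun x => -v x) diamond :=
  c.swap_diamond.neg_left_diamond.swap_diamond

lemma edist_le_two (c : IsDiagonalChart u v diamond) (x y : X) : edist x y ≤ 2 := by
  have hx : |u x| + |v x| ≤ 2 := c.mem x
  have hy : |u y| + |v y| ≤ 2 := c.mem y
  have hu := abs_sub (u x) (u y)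
  have hv := abs_sub (v x) (v y)
  rw [edist_dist, c.dist_eq, ← ENNReal.ofReal_ofNat]
  exact ENNReal.ofReal_le_ofReal (by linarith)

lemma edist_eq_two_iff (c : IsDiagonalChart u v diamond) :
    edist x y = 2 ↔ u x * u y ≤ 0 ∧ v x * v y ≤ 0 ∧ |u x| + |v x| = 2 ∧ |u y| + |v y| = 2 := by
  have hx : |u x| + |v x| ≤ 2 := c.mem x
  have hy : |u y| + |v y| ≤ 2 := c.mem y
  have hu := abs_sub (u x) (u y)
  have hv := abs_sub (v x) (v y)
  rw [edist_dist, c.dist_eq, ENNReal.ofReal_eq_ofNat, ← abs_sub_eq_abs_add_abs_iff,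
    ← abs_sub_eq_abs_add_abs_iff]
  constructor
  · intro h
    exact ⟨by linarith, by linarith, by linarith, by linarith⟩
  · rintro ⟨hu, hv, hx, hy⟩
    linarith

section Clique

lemma abs_add_abs_eq_two (c : IsDiagonalChart u v diamond)
    (hz : Pairwise fun i j => edist (z i) (z j) = 2) (i : Fin 4) :
    |u (z i)| + |v (z i)| = 2 := by
  obtain ⟨j, hj⟩ := exists_ne i
  exact (c.edist_eq_two_iff.1 (hz hj)).2.2.2

-- The four sums of positive parts of `±u` and `±v` are at most `2` and add up to `8`.
lemma sum_posPart_eq_two (c : IsDiagonalChart u v diamond)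
    (hz : Pairwise fun i j => edist (z i) (z j) = 2) : ∑ i, (u (z i))⁺ = 2 := by
  have hle {u v : X → ℝ} (c : IsDiagonalChart u v diamond) : ∑ i, (u (z i))⁺ ≤ 2 :=
    sum_posPart_le zero_le_two (fun i j hij => (c.edist_eq_two_iff.1 (hz hij)).1) fun i => by
      linarith [c.abs_add_abs_eq_two hz i, le_abs_self (u (z i)), abs_nonneg (v (z i))]
  have habs (w : X → ℝ) : ∑ i, |w (z i)| = ∑ i, (w (z i))⁺ + ∑ i, (-w (z i))⁺ := by
    simp only [← posPart_add_negPart, posPart_neg, Finset.sum_add_distrib]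
  have htotal : ∑ i, |u (z i)| + ∑ i, |v (z i)| = 8 := by
    rw [← Finset.sum_add_distrib, Finset.sum_congr rfl fun i _ => c.abs_add_abs_eq_two hz i]
    norm_num
  rw [habs u, habs v] at htotal
  linarith [hle c, hle c.neg_left_diamond, hle c.swap_diamond,
    hle c.swap_diamond.neg_left_diamond]

lemma sum_eq_zero (c : IsDiagonalChart u v diamond)
    (hz : Pairwise fun i j => edist (z i) (z j) = 2) : ∑ i, u (z i) = 0 := by
  have hneg := c.neg_left_diamond.sum_posPart_eq_two hz
  simp only [posPart_neg] at hneg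
  rw [Finset.sum_congr rfl fun i _ => (posPart_sub_negPart (u (z i))).symm,
    Finset.sum_sub_distrib, c.sum_posPart_eq_two hz, hneg, sub_self]

lemma eq_of_pairwise_edist_eq_two {z' : Fin 4 → X} (c : IsDiagonalChart u v diamond)
    (hz : Pairwise fun i j => edist (z i) (z j) = 2)
    (hz' : Pairwise fun i j => edist (z' i) (z' j) = 2) {i : Fin 4}
    (h : ∀ j ≠ i, z j = z' j) : z i = z' i := by
  have hcoord {u v : X → ℝ} (c : IsDiagonalChart u v diamond) : u (z i) = u (z' i) := by
    have hsum : ∑ j, (u (z j) - u (z' j)) = 0 := by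
      rw [Finset.sum_sub_distrib, c.sum_eq_zero hz, c.sum_eq_zero hz', sub_self]
    rwa [Finset.sum_eq_single_of_mem i (Finset.mem_univ i) fun j _ hj => by rw [h j hj, sub_self],
      sub_eq_zero] at hsum
  exact c.eq_of_coord_eq (hcoord c) (hcoord c.swap_diamond)

lemma eq_zero_or_abs_eq_two (c : IsDiagonalChart u v diamond)
    (hz : Pairwise fun i j => edist (z i) (z j) = 2) (i : Fin 4) :
    u (z i) = 0 ∨ |u (z i)| = 2 := by
  have hpos {u v : X → ℝ} (c : IsDiagonalChart u v diamond) (hi : 0 < u (z i)) :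
      |u (z i)| = 2 := by
    rw [abs_of_pos hi, ← c.sum_posPart_eq_two hz]
    exact (sum_posPart_eq_of_pos (fun i j hij => (c.edist_eq_two_iff.1 (hz hij)).1) hi).symm
  rcases lt_trichotomy (u (z i)) 0 with hi | hi | hi
  · exact .inr (abs_neg (u (z i)) ▸ hpos c.neg_left_diamond (neg_pos.2 hi))
  · exact .inl hi
  · exact .inr (hpos c hi)

lemma eq_dirac_of_pairwise_ae [MeasurableSpace X] {m : Fin 4 → Measure X}
    [∀ i, IsProbabilityMeasure (m i)] (c : IsDiagonalChart u v diamond)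
    (h : Pairwise fun i j => ∀ᵐ x ∂m i, ∀ᵐ y ∂m j, edist x y = 2) :
    ∃ z : Fin 4 → X, Pairwise (fun i j => edist (z i) (z j) = 2) ∧ ∀ i, m i = dirac (z i) := by
  obtain ⟨z, hz, hae⟩ := exists_pairwise_of_ae (fun x y hxy => edist_comm x y ▸ hxy) h
  refine ⟨z, hz, fun i => eq_dirac_of_ae_eq ?_⟩
  have hi : ∀ᵐ y ∂m i, ∀ j, j ≠ i → edist (z j) y = 2 :=
    ae_all_iff.2 fun j => eventually_imp_distrib_left.2 fun hj => hae hj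
  filter_upwards [hi] with y hy
  have hz' : Pairwise fun j k =>
      edist (Function.update z i y j) (Function.update z i y k) = 2 := by
    intro j k hjk
    rcases eq_or_ne j i with rfl | hj
    · rw [Function.update_self, Function.update_of_ne hjk.symm, edist_comm, hy k hjk.symm]
    rcases eq_or_ne k i with rfl | hk
    · rw [Function.update_self, Function.update_of_ne hj, hy j hj]
    · rw [Function.update_of_ne hj, Function.update_of_ne hk, hz hjk]
  rw [c.eq_of_pairwise_edist_eq_two hz hz' (i := i) fun j hj => (Function.update_of_ne hj _ _).symm,
    Function.update_self]

lemma exists_chart_eq_two (c : IsDiagonalChart u v diamond) (h : |u x| = 2 ∨ |v x| = 2) :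
    ∃ u' v', IsDiagonalChart u' v' diamond ∧ u' x = 2 := by
  have key {u v : X → ℝ} (c : IsDiagonalChart u v diamond) (hu : |u x| = 2) :
      ∃ u' v', IsDiagonalChart u' v' diamond ∧ u' x = 2 := by
    rcases (abs_eq zero_le_two).1 hu with hu | hu
    · exact ⟨u, v, c, hu⟩
    · exact ⟨_, v, c.neg_left_diamond, neg_eq_iff_eq_neg.2 hu⟩
  rcases h with h | h
  exacts [key c h, key c.swap_diamond h]

-- Otherwise `z 1` lies on the other diagonal and the midpoint of the side from `z 0` to `z 1` is
-- a third point far from `z 2` and `z 3`.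
lemma eq_neg_two_of_forall_eq_or_eq (c : IsDiagonalChart u v diamond)
    (hz : Pairwise fun i j => edist (z i) (z j) = 2)
    (honly : ∀ w, edist w (z 2) = 2 → edist w (z 3) = 2 → w = z 0 ∨ w = z 1)
    (h₀ : u (z 0) = 2) : u (z 1) = -2 := by
  have hu {i : Fin 4} (hi : 0 ≠ i) : u (z i) ≤ 0 := by
    have := (c.edist_eq_two_iff.1 (hz hi)).1
    rw [h₀] at this
    linarith
  rcases c.eq_zero_or_abs_eq_two hz 1 with h | h
  · have hv : |v (z 1)| = 2 := by simpa [h] using c.abs_add_abs_eq_two hz 1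
    have hvw : |v (z 1) / 2| = 1 := by rw [abs_div, hv, abs_two, div_self two_ne_zero]
    obtain ⟨w, hwu, hwv⟩ := c.exists_eq (1, v (z 1) / 2) (by simp [diamond, hvw]; norm_num)
    have hfar {i : Fin 4} (h0 : 0 ≠ i) (h1 : 1 ≠ i) : edist w (z i) = 2 := by
      refine c.edist_eq_two_iff.2 ⟨?_, ?_, ?_, c.abs_add_abs_eq_two hz i⟩
      · rw [hwu, one_mul]
        exact hu h0
      · rw [hwv]
        linarith [(c.edist_eq_two_iff.1 (hz h1)).2.1]
      · rw [hwu, hwv, hvw, abs_one, one_add_one_eq_two]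
    rcases honly w (hfar (by decide) (by decide)) (hfar (by decide) (by decide)) with rfl | rfl
    · norm_num [h₀] at hwu
    · norm_num [h] at hwu
  · rw [abs_of_nonpos (hu (by decide))] at h
    linarith

lemma exists_chart_of_pairwise (c : IsDiagonalChart u v diamond)
    (hz : Pairwise fun i j => edist (z i) (z j) = 2)
    (honly : ∀ w, edist w (z 2) = 2 → edist w (z 3) = 2 → w = z 0 ∨ w = z 1) :
    ∃ u' v', IsDiagonalChart u' v' diamond ∧ (u' (z 0) = 2 ∧ u' (z 1) = -2) ∧
      v' (z 2) = 2 ∧ v' (z 3) = -2 := by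
  have hcorner : |u (z 0)| = 2 ∨ |v (z 0)| = 2 := by
    have := c.abs_add_abs_eq_two hz 0
    exact (c.eq_zero_or_abs_eq_two hz 0).symm.imp_right fun h => by simpa [h] using this
  obtain ⟨u, v, c, h₀⟩ := c.exists_chart_eq_two hcorner
  have h₁ := c.eq_neg_two_of_forall_eq_or_eq hz honly h₀
  have hv {i : Fin 4} (hi₀ : 0 ≠ i) (hi₁ : 1 ≠ i) : |v (z i)| = 2 := by
    have hu₀ := (c.edist_eq_two_iff.1 (hz hi₀)).1
    have hu₁ := (c.edist_eq_two_iff.1 (hz hi₁)).1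
    rw [h₀] at hu₀
    rw [h₁] at hu₁
    have hu : u (z i) = 0 := by linarith
    simpa [hu] using c.abs_add_abs_eq_two hz i
  have h₂₃ := (c.edist_eq_two_iff.1 (hz (by decide : (2 : Fin 4) ≠ 3))).2.1
  have h₂ := hv (i := 2) (by decide) (by decide)
  have h₃ := (abs_eq zero_le_two).1 (hv (i := 3) (by decide) (by decide))
  rcases (abs_eq zero_le_two).1 h₂ with h₂ | h₂ <;> rw [h₂] at h₂₃
  · exact ⟨u, v, c, ⟨h₀, h₁⟩, h₂, h₃.resolve_left fun h => by linarith⟩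
  · exact ⟨u, _, c.neg_right_diamond, ⟨h₀, h₁⟩, neg_eq_iff_eq_neg.2 h₂,
      neg_inj.2 (h₃.resolve_right fun h => by linarith)⟩

end Clique

end IsDiagonalChart

/-! ### Dirac measures on the square -/

section Square

variable {X : Type*} [MetricSpace X] {u v : X → ℝ} {p : ℝ} {x y x₀ x₁ y₀ y₁ : X}

namespace IsDiagonalChart

lemma right_eq_zero_of_abs_left_eq_two (c : IsDiagonalChart u v diamond) (hx : |u x| = 2) :
    v x = 0 := by
  have : |u x| + |v x| ≤ 2 := c.mem x
  exact abs_nonpos_iff.1 (by linarith)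

lemma edist_eq_two_of_abs_eq_two (c : IsDiagonalChart u v diamond) (hx : |u x| = 2)
    (hy : |v y| = 2) : edist x y = 2 := by
  have hxv := c.right_eq_zero_of_abs_left_eq_two hx
  have hyu := c.swap_diamond.right_eq_zero_of_abs_left_eq_two hy
  exact c.edist_eq_two_iff.2 ⟨by simp [hyu], by simp [hxv], by simp [hx, hxv], by simp [hy, hyu]⟩

lemma dist_of_left_eq_two (c : IsDiagonalChart u v diamond) (hx : u x = 2) (y : X) :
    dist y x = (2 - u y + |v y|) / 2 := by
  have hy : |u y| + |v y| ≤ 2 := c.mem y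
  have hv : v x = 0 := c.right_eq_zero_of_abs_left_eq_two (by rw [hx, abs_two])
  rw [c.dist_eq, hx, hv, sub_zero,
    abs_of_nonpos (by linarith [le_abs_self (u y), abs_nonneg (v y)]), neg_sub]

lemma eq_or_eq_of_edist_eq_two (c : IsDiagonalChart u v diamond) {w : X}
    (hx₀ : u x₀ = 2) (hx₁ : u x₁ = -2) (hy₀ : v y₀ = 2) (hy₁ : v y₁ = -2)
    (h₀ : edist w y₀ = 2) (h₁ : edist w y₁ = 2) : w = x₀ ∨ w = x₁ := by
  obtain ⟨-, hv₀, hw, -⟩ := c.edist_eq_two_iff.1 h₀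
  obtain ⟨-, hv₁, -, -⟩ := c.edist_eq_two_iff.1 h₁
  rw [hy₀] at hv₀
  rw [hy₁] at hv₁
  have hv : v w = 0 := by linarith
  rw [hv, abs_zero, add_zero] at hw
  have hv₀ : v x₀ = 0 := c.right_eq_zero_of_abs_left_eq_two (by simp [hx₀])
  have hv₁ : v x₁ = 0 := c.right_eq_zero_of_abs_left_eq_two (by simp [hx₁])
  exact ((abs_eq zero_le_two).1 hw).imp (fun h => c.eq_of_coord_eq (h.trans hx₀.symm)
    (hv.trans hv₀.symm)) fun h => c.eq_of_coord_eq (h.trans hx₁.symm) (hv.trans hv₁.symm)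

lemma exists_isIsom {u' v' : X → ℝ} {S : Set (ℝ × ℝ)} (c : IsDiagonalChart u v S)
    (c' : IsDiagonalChart u' v' S) :
    ∃ R : X → X, IsIsom R ∧ ∀ x, u' (R x) = u x ∧ v' (R x) = v x := by
  choose R hu hv using fun x => c'.exists_eq _ (c.mem x)
  refine ⟨R, ⟨⟨fun x y h => ?_, fun y => ?_⟩, fun x y => ?_⟩, fun x => ⟨hu x, hv x⟩⟩
  · exact c.eq_of_coord_eq ((hu x).symm.trans (h ▸ hu y)) ((hv x).symm.trans (h ▸ hv y))
  · obtain ⟨x, hxu, hxv⟩ := c.exists_eq _ (c'.mem y)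
    exact ⟨x, c'.eq_of_coord_eq ((hu x).trans hxu) ((hv x).trans hxv)⟩
  · rw [c'.dist_eq, c.dist_eq, hu, hv, hu, hv]

lemma exists_corners (c : IsDiagonalChart u v diamond) :
    ∃ k : Fin 4 → X, (∀ i, u (k i) = ![2, -2, 0, 0] i ∧ v (k i) = ![0, 0, 2, -2] i) ∧
      ∀ x, |u x| = 2 ∨ |v x| = 2 → ∃ i, x = k i := by
  choose k hk using fun i : Fin 4 =>
    c.exists_eq ((![2, -2, 0, 0] : Fin 4 → ℝ) i, (![0, 0, 2, -2] : Fin 4 → ℝ) i)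
      (by fin_cases i <;> simp [diamond])
  refine ⟨k, hk, fun x hx => ?_⟩
  have hcoord : ∃ i : Fin 4, u x = (![2, -2, 0, 0] : Fin 4 → ℝ) i ∧
      v x = (![0, 0, 2, -2] : Fin 4 → ℝ) i := by
    rcases hx with hx | hx
    · have hv := c.right_eq_zero_of_abs_left_eq_two hx
      exact ((abs_eq zero_le_two).1 hx).elim (fun h => ⟨0, h, hv⟩) fun h => ⟨1, h, hv⟩
    · have hu := c.swap_diamond.right_eq_zero_of_abs_left_eq_two hx
      exact ((abs_eq zero_le_two).1 hx).elim (fun h => ⟨2, hu, h⟩) fun h => ⟨3, hu, h⟩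
  obtain ⟨i, hu, hv⟩ := hcoord
  exact ⟨i, c.eq_of_coord_eq (hu.trans (hk i).1.symm) (hv.trans (hk i).2.symm)⟩

end IsDiagonalChart

variable [SecondCountableTopology X] [MeasurableSpace X] [BorelSpace X]
  {Φ : Measure X → Measure X}

namespace IsCostIsometry

lemma exists_pairwise_map_dirac_eq (c : IsDiagonalChart u v diamond) (hp : 1 ≤ p)
    (hΦ : IsCostIsometry p Φ) {k : Fin 4 → X} (hk : Pairwise fun i j => edist (k i) (k j) = 2) :
    ∃ z : Fin 4 → X, Pairwise (fun i j => edist (z i) (z j) = 2) ∧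
      ∀ i, Φ (dirac (k i)) = dirac (z i) := by
  have hp₀ : 0 < p := by linarith
  have hδ i := dirac_mem_WSet hp₀ (k i)
  have (i : Fin 4) : IsProbabilityMeasure (Φ (dirac (k i))) := (hΦ.mem (hδ i)).1
  refine c.eq_dirac_of_pairwise_ae fun i j hij => ?_
  refine ae_ae_edist_eq_of_le_transportCost hp₀ c.edist_le_two (by simp) (le_of_eq ?_)
  rw [hΦ.cost_eq _ (hδ i) _ (hδ j), transportCost_dirac_dirac, hk hij]

lemma exists_chart_map_dirac_eq_of_abs_eq_two (c : IsDiagonalChart u v diamond) (hp : 1 ≤ p)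
    (hΦ : IsCostIsometry p Φ) :
    ∃ u' v', IsDiagonalChart u' v' diamond ∧ ∀ x y, (|u x| = 2 ∨ |v x| = 2) →
      u' y = u x → v' y = v x → Φ (dirac x) = dirac y := by
  obtain ⟨k, hk, hcorner⟩ := c.exists_corners
  have hclique : Pairwise fun i j => edist (k i) (k j) = 2 := by
    intro i j hij
    rw [c.edist_eq_two_iff, (hk i).1, (hk i).2, (hk j).1, (hk j).2]
    fin_cases i <;> fin_cases j <;> simp at hij ⊢
  obtain ⟨z, hz, hΦz⟩ := hΦ.exists_pairwise_map_dirac_eq c hp hclique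
  have hne : k 0 ≠ k 1 := fun h => by
    have := hclique (by decide : (0 : Fin 4) ≠ 1)
    simp [h] at this
  obtain ⟨u', v', c', ⟨h₀, h₁⟩, h₂, h₃⟩ := c.exists_chart_of_pairwise hz fun w =>
    hΦ.eq_or_eq_of_edist_eq hp c.edist_le_two (by simp) (by simp) hne
      (fun w => c.eq_or_eq_of_edist_eq_two (hk 0).1 (hk 1).1 (hk 2).2 (hk 3).2)
      (hΦz 0) (hΦz 2) (hΦz 3) (hz (by decide)) (hz (by decide)) (hz (by decide))
      (hz (by decide)) (hz (by decide))
  have hz' : ∀ i, u' (z i) = u (k i) ∧ v' (z i) = v (k i) := by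
    have hv {x : X} := c'.right_eq_zero_of_abs_left_eq_two (x := x)
    have hu {x : X} := c'.swap_diamond.right_eq_zero_of_abs_left_eq_two (x := x)
    intro i
    rw [(hk i).1, (hk i).2]
    fin_cases i
    exacts [⟨h₀, hv (by simp [h₀])⟩, ⟨h₁, hv (by simp [h₁])⟩, ⟨hu (by simp [h₂]), h₂⟩,
      ⟨hu (by simp [h₃]), h₃⟩]
  refine ⟨u', v', c', fun x y hx hu hv => ?_⟩
  obtain ⟨i, rfl⟩ := hcorner x hx
  rw [hΦz i, c'.eq_of_coord_eq ((hz' i).1.trans hu.symm) ((hz' i).2.trans hv.symm)]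

lemma map_twoPoint_eq_of_forall_corner (c : IsDiagonalChart u v diamond) (hp : 1 ≤ p)
    (hΦ : IsCostIsometry p Φ) (hcorner : ∀ y, |u y| = 2 ∨ |v y| = 2 → Φ (dirac y) = dirac y)
    (hx₀ : u x₀ = 2) (hx₁ : u x₁ = -2) {a b : ℝ≥0∞} (hab : a + b = 1) :
    Φ (twoPoint a b x₀ x₁) = twoPoint a b x₀ x₁ := by
  obtain ⟨y₀, -, hy₀ : v y₀ = 2⟩ := c.exists_eq (0, 2) (by simp [diamond])
  obtain ⟨y₁, -, hy₁ : v y₁ = -2⟩ := c.exists_eq (0, -2) (by simp [diamond])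
  have hx₀' : |u x₀| = 2 := by simp [hx₀]
  have hx₁' : |u x₁| = 2 := by simp [hx₁]
  have hy₀' : |v y₀| = 2 := by simp [hy₀]
  have hy₁' : |v y₁| = 2 := by simp [hy₁]
  have hne : x₀ ≠ x₁ := fun h => by
    rw [h] at hx₀
    linarith
  exact hΦ.map_twoPoint_eq hp c.edist_le_two ENNReal.ofNat_ne_top hne
    (fun w => c.eq_or_eq_of_edist_eq_two hx₀ hx₁ hy₀ hy₁) (hcorner x₀ (.inl hx₀'))
    (hcorner y₀ (.inr hy₀')) (hcorner y₁ (.inr hy₁')) (c.edist_eq_two_of_abs_eq_two hx₀' hy₀')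
    (c.edist_eq_two_of_abs_eq_two hx₀' hy₁') (c.edist_eq_two_of_abs_eq_two hx₁' hy₀')
    (c.edist_eq_two_of_abs_eq_two hx₁' hy₁') hab

lemma map_dirac_eq_of_right_eq_zero (c : IsDiagonalChart u v diamond) (hp : 1 ≤ p)
    (hΦ : IsCostIsometry p Φ) (hcorner : ∀ y, |u y| = 2 ∨ |v y| = 2 → Φ (dirac y) = dirac y)
    (hx : v x = 0) : Φ (dirac x) = dirac x := by
  obtain ⟨x₀, hu₀ : u x₀ = 2, hv₀ : v x₀ = 0⟩ := c.exists_eq (2, 0) (by simp [diamond])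
  obtain ⟨x₁, hu₁ : u x₁ = -2, -⟩ := c.exists_eq (-2, 0) (by simp [diamond])
  have hdist₀ := c.dist_of_left_eq_two hu₀
  have hdist₁ := c.neg_left_diamond.dist_of_left_eq_two (neg_eq_iff_eq_neg.2 hu₁)
  have hne : x₀ ≠ x₁ := fun h => by
    rw [h] at hu₀
    linarith
  have hbetween : dist x x₀ + dist x x₁ = dist x₀ x₁ := by
    rw [hdist₀, hdist₁, hdist₁, hu₀, hx, hv₀, abs_zero]
    ring
  have := (hΦ.mem (dirac_mem_WSet (by linarith : 0 < p) x)).1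
  refine eq_dirac_of_ae_eq ?_
  filter_upwards [hΦ.ae_dist_eq_of_dist_add_dist_eq hp hne hbetween
    (hcorner x₀ (by simp [hu₀])) (hcorner x₁ (by simp [hu₁])) fun a b hab =>
      hΦ.map_twoPoint_eq_of_forall_corner c hp hcorner hu₀ hu₁ hab] with w ⟨hw₀, hw₁⟩
  rw [hdist₀, hdist₀, hx, abs_zero] at hw₀
  rw [hdist₁, hdist₁, hx, abs_zero] at hw₁
  exact c.eq_of_coord_eq (by linarith) (by rw [hx, ← abs_eq_zero]; linarith)

-- Minkowski's inequality is tight for `Φ (dirac x)`: the distances to the projections `x₁`, `x₂` of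
-- `x` onto the two diagonals add up to the distance to the centre `x₀`.
lemma ae_left_eq_of_forall_corner (c : IsDiagonalChart u v diamond) (hp : 1 ≤ p)
    (hΦ : IsCostIsometry p Φ) (hcorner : ∀ y, |u y| = 2 ∨ |v y| = 2 → Φ (dirac y) = dirac y)
    (x : X) : ∀ᵐ z ∂Φ (dirac x), u z = u x := by
  have hp₀ : 0 < p := by linarith
  have hx : |u x| + |v x| ≤ 2 := c.mem x
  obtain ⟨x₁, hu₁, hv₁⟩ := c.exists_eq (u x, 0)
    (by simpa [diamond] using (le_add_of_nonneg_right (abs_nonneg _)).trans hx)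
  obtain ⟨x₂, hu₂, hv₂⟩ := c.exists_eq (0, v x)
    (by simpa [diamond] using (le_add_of_nonneg_left (abs_nonneg _)).trans hx)
  obtain ⟨x₀, hu₀, hv₀⟩ := c.exists_eq (0, 0) (by simp [diamond])
  have hedist (z y : X) : edist z y =
      ENNReal.ofReal (|u z - u y| / 2) + ENNReal.ofReal (|v z - v y| / 2) := by
    rw [← ENNReal.ofReal_add (by positivity) (by positivity), edist_dist, c.dist_eq, add_div]
  have hpot {y : X} (hy : Φ (dirac y) = dirac y) :
      ∫⁻ z, edist z y ^ p ∂Φ (dirac x) = edist x y ^ p := by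
    rw [hΦ.lintegral_edist_rpow_eq hp₀ hy (dirac_mem_WSet hp₀ x), lintegral_dirac]
  have h₁ := hpot (hΦ.map_dirac_eq_of_right_eq_zero c hp hcorner hv₁)
  have h₂ := hpot (hΦ.map_dirac_eq_of_right_eq_zero c.swap_diamond hp
    (fun y hy => hcorner y hy.symm) hu₂)
  have h₀ := hpot (hΦ.map_dirac_eq_of_right_eq_zero c hp hcorner hv₀)
  have hu := c.measurable_left
  have hv := c.measurable_right
  simp only [hedist, hu₀, hv₀, hu₁, hv₁, hu₂, hv₂, sub_zero, sub_self, abs_zero, zero_div,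
    ENNReal.ofReal_zero, zero_add, add_zero] at h₀ h₁ h₂
  filter_upwards [ae_eq_zero_of_lintegral_add_rpow_eq hp (by fun_prop) (by fun_prop)
    (by fun_prop) ENNReal.ofReal_ne_top ENNReal.ofReal_ne_top h₂ h₁ h₀] with z hz
  rw [ENNReal.ofReal_eq_zero] at hz
  exact sub_eq_zero.1 (abs_nonpos_iff.1 (by linarith))

lemma map_dirac_eq_of_forall_corner (c : IsDiagonalChart u v diamond) (hp : 1 ≤ p)
    (hΦ : IsCostIsometry p Φ) (hcorner : ∀ y, |u y| = 2 ∨ |v y| = 2 → Φ (dirac y) = dirac y)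
    (x : X) : Φ (dirac x) = dirac x := by
  have := (hΦ.mem (dirac_mem_WSet (by linarith : 0 < p) x)).1
  refine eq_dirac_of_ae_eq ?_
  filter_upwards [hΦ.ae_left_eq_of_forall_corner c hp hcorner x,
    hΦ.ae_left_eq_of_forall_corner c.swap_diamond hp (fun y hy => hcorner y hy.symm) x] with z hu hv
  exact c.eq_of_coord_eq hu hv

lemma exists_map_dirac_eq_of_diamond (c : IsDiagonalChart u v diamond) (hp : 1 ≤ p)
    (hΦ : IsCostIsometry p Φ) (x : X) : ∃ y, Φ (dirac x) = dirac y := by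
  obtain ⟨u', v', c', hcorner⟩ := hΦ.exists_chart_map_dirac_eq_of_abs_eq_two c hp
  obtain ⟨T, hT, hTu⟩ := c.exists_isIsom c'
  obtain ⟨R, hR, hRT, hTR⟩ := IsIsom.exists_inverse hT
  have hTm := IsIsom.measurable hT
  have hRm := IsIsom.measurable hR
  have hfix := ((IsIsom.isCostIsometry hp hR).comp hΦ).map_dirac_eq_of_forall_corner c hp
    (fun y hy => by
      rw [hcorner y (T y) hy (hTu y).1 (hTu y).2, Measure.map_dirac' hRm, hRT]) x
  refine ⟨T x, ?_⟩
  rw [← map_map_of_leftInverse hRm hTm hTR (Φ (dirac x)), hfix, Measure.map_dirac' hTm]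

end IsCostIsometry

end Square

/-! ### The plane and the square -/

lemma max_abs_abs (a b : ℝ) : max |a| |b| = (|a + b| + |a - b|) / 2 := by
  grind

lemma dist_eq_abs_add_abs (x y : ℝ × ℝ) :
    dist x y = (|(x.1 + x.2) - (y.1 + y.2)| + |(x.1 - x.2) - (y.1 - y.2)|) / 2 := by
  rw [Prod.dist_eq, Real.dist_eq, Real.dist_eq, max_abs_abs, add_sub_add_comm, sub_sub_sub_comm]

lemma convex_diamond : Convex ℝ diamond := by
  have habs : ConvexOn ℝ univ fun x : ℝ => |x| := convexOn_univ_norm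
  have hsum := (habs.comp_linearMap (LinearMap.fst ℝ ℝ ℝ)).add
    (habs.comp_linearMap (LinearMap.snd ℝ ℝ ℝ))
  simpa [diamond] using hsum.convex_le 2

lemma mem_Qs_iff (x : ℝ × ℝ) : x ∈ Qs ↔ (x.1 + x.2, x.1 - x.2) ∈ diamond := by
  have hmax : x ∈ Qs ↔ max |x.1| |x.2| ≤ 1 := by
    simp only [Qs, mem_Icc, Prod.le_def, max_le_iff, abs_le]
    tauto
  rw [hmax, max_abs_abs, div_le_one two_pos, diamond, mem_ofPred_eq]

lemma isDiagonalChart_plane :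
    IsDiagonalChart (fun x : ℝ × ℝ => x.1 + x.2) (fun x => x.1 - x.2) univ where
  dist_eq := dist_eq_abs_add_abs
  mem _ := mem_univ _
  exists_eq q _ := ⟨((q.1 + q.2) / 2, (q.1 - q.2) / 2), by ring, by ring⟩
  convex := convex_univ

lemma isDiagonalChart_square :
    IsDiagonalChart (fun x : ↥Qs => (x : ℝ × ℝ).1 + (x : ℝ × ℝ).2)
      (fun x => (x : ℝ × ℝ).1 - (x : ℝ × ℝ).2) diamond where
  dist_eq x y := dist_eq_abs_add_abs x y
  mem x := (mem_Qs_iff x).1 x.2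
  exists_eq q hq := by
    obtain ⟨x, hu, hv⟩ := isDiagonalChart_plane.exists_eq q (mem_univ q)
    exact ⟨⟨x, (mem_Qs_iff x).2 (by rwa [hu, hv])⟩, hu, hv⟩
  convex := convex_diamond

end WassersteinRigidity

/-- Isometric rigidity of `𝒲_p(ℝ², d_m)` and `𝒲_p([-1,1]², d_m)` for `p ≥ 1`:
every isometry of the Wasserstein space is induced by a unique isometry of the
underlying space via push-forward. -/
theorem wasserstein_isometric_rigidity (p : ℝ) (hp : 1 ≤ p) :
    (∀ Φ : Measure (ℝ × ℝ) → Measure (ℝ × ℝ), IsWIsometry (ℝ × ℝ) p Φ →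
      ∃! T : ℝ × ℝ → ℝ × ℝ, IsIsom T ∧ ∀ μ ∈ WSet (ℝ × ℝ) p, Φ μ = μ.map T) ∧
    (∀ Φ : Measure ↥Qs → Measure ↥Qs, IsWIsometry ↥Qs p Φ →
      ∃! T : ↥Qs → ↥Qs, IsIsom T ∧ ∀ μ ∈ WSet ↥Qs p, Φ μ = μ.map T) := by
  constructor
  · intro Φ hΦ
    refine WassersteinRigidity.existsUnique_isIsom_of_map_dirac hp
      (fun Ψ h μ hμ => h.eq_self_of_univ hp WassersteinRigidity.isDiagonalChart_plane hμ)
      (fun Ψ h x => ?_) hΦ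
    rcases hp.eq_or_lt with rfl | hp1
    · exact h.exists_map_dirac_eq_of_univ WassersteinRigidity.isDiagonalChart_plane x
    · exact h.exists_map_dirac_eq_of_one_lt hp1 x
  · intro Φ hΦ
    exact WassersteinRigidity.existsUnique_isIsom_of_map_dirac hp
      (fun Ψ h μ hμ => h.eq_self_of_diamond hp WassersteinRigidity.isDiagonalChart_square hμ)
      (fun Ψ h => h.exists_map_dirac_eq_of_diamond WassersteinRigidity.isDiagonalChart_square hp) hΦ
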